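/- arXiv:1312.4597 — 4 statements merged into one kernel-verified Lean document; each statement's English description precedes it below -/
import Mathlib

section
/- Let S be a convex polygon in the plane with at least four sides, and let m ≥ 1 be an integer. Then there exists an indexed family of positive homothetic copies of S that forms an m-fold covering of the plane ℝ² and that cannot be decomposed into two coverings. -/
/-!
The covering consists of a finite core family, whose incidences with a finite set `X` of special
points admit no good 2-coloring, and of tiny copies avoiding `X` that cover every point outside
`X` at least `m` times (`exists_small_copy`). Only the core matters for decomposability.

Let `AB` be a diagonal of the polygon (`exists_diagonal`). Near `A` and near `B` the polygon is a
wedge, and the direction of the diagonal is interior to both wedges (`local_wedge`). A homothetic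
copy of ratio close to 1 and close to the polygon is determined by the positions of the two vertices
corresponding to `A` and `B`, and these positions are constrained only by having the same coordinate
transversally to `AB`. So the copy amounts to a triple `(c, r, s)`: the common transversal coordinate
and the two heights along the diagonal. Red points are placed near `A`, blue points near `B`.

The combinatorial core (`Config`, `exists_config`) is built by induction on `k` and `l`: there are
finitely many sets, red points covered at least `k` times and blue points covered at least `l` times,
such that every coloring of the sets by red and blue leaves a red point only in red sets or a blue
point only in blue sets. For the step (`config_step`) a structure for `(k, l + 1)` and one for
`(k + 1, l)` are placed far apart relative to their sizes, and one new set is added that contains the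
red points of the former and the blue points of the latter, and nothing else. This is possible in
spite of the shared transversal coordinate because the two structures may be placed at different
heights. Finally the structure for `(m, m)` is scaled down
so that the wedge descriptions near `A` and `B` apply (`eventually_mem_iff`).
-/

/-!
STATEMENT 0: Let S be a convex polygon in the plane with at least four sides
(the convex hull of a finite set of at least four points in strictly convex
position) and let m ≥ 1. Then there exists an indexed family of positive
homothetic copies of S that forms an m-fold covering of ℝ² and that cannot be
decomposed into two coverings.
-/

noncomputable section

abbrev Plane : Type := EuclideanSpace ℝ (Fin 2)

/-- The homothetic copy `ε·S + p` of a set `S ⊆ ℝ²`. -/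
def homCopy (ε : ℝ) (p : Plane) (S : Set Plane) : Set Plane :=
  (fun x => ε • x + p) '' S

/-- The family `C` covers every point of `A` at least `m` times. -/
def MFoldCover {I : Type*} (m : ℕ) (C : I → Set Plane) (A : Set Plane) : Prop :=
  ∀ a ∈ A, ∃ t : Finset I, m ≤ t.card ∧ ∀ i ∈ t, a ∈ C i

/-- The family `C` can be decomposed into two coverings of the plane. -/
def DecomposableIntoTwoCoverings {I : Type*} (C : I → Set Plane) : Prop :=
  ∃ I₁ : Set I, (∀ x : Plane, ∃ i ∈ I₁, x ∈ C i) ∧ (∀ x : Plane, ∃ i ∈ I₁ᶜ, x ∈ C i)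

/-- Every point of the finite set `P` is an extreme point of its convex hull. -/
def StrictlyConvexPosition (P : Finset Plane) : Prop :=
  ∀ p ∈ P, p ∈ Set.extremePoints ℝ (convexHull ℝ (P : Set Plane))

open Filter Topology

/-! ### Non-2-colorable wedge configurations -/

/-- The positively homogeneous function with slope `a` on `y ≥ 0` and slope `-b` on `y ≤ 0`
(this reading needs `0 ≤ a + b`). Its epigraph is a planar cone with apex at the origin; the
tangent cone of a polygon at a vertex is of this form in suitable coordinates. -/
def wedge (a b y : ℝ) : ℝ := max (a * y) (-b * y)

lemma wedge_smul (a b y : ℝ) {l : ℝ} (hl : 0 ≤ l) : wedge a b (l * y) = l * wedge a b y := by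
  unfold wedge
  rw [mul_max_of_nonneg _ _ hl]
  congr 1 <;> ring

lemma continuous_wedge (a b : ℝ) : Continuous (wedge a b) := by
  unfold wedge
  fun_prop

lemma wedge_values {a b : ℝ} (h : 0 < a + b) :
    wedge a b (1 / 2) = a / 2 ∧ wedge a b (-1 / 2) = b / 2 ∧ wedge a b 1 = a ∧ wedge a b (-1) = b := by
  unfold wedge
  refine ⟨?_, ?_, ?_, ?_⟩
  · rw [max_eq_left] <;> linarith
  · rw [max_eq_right] <;> linarith
  · rw [max_eq_left] <;> linarith
  · rw [max_eq_right] <;> linarith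

/-- A finite incidence structure of sets, red points and blue points that is not 2-colorable.

A set `v : V` is a triple `(c v, r v, s v)`, standing for two wedges of fixed shapes: the first has
its apex at transversal position `c v` and height `r v`, the second at the same transversal
position `c v` and height `s v`. The shared `c v` is the only link between the two wedges. Red points
`(α x, ρ x)` are tested against the first wedge of each set, blue points `(β x, σ x)` against the
second. Every red point lies in at least `k` sets, every blue point in at least `l` sets, and for
every coloring of the sets (`f v` meaning that `v` is red) there is a red point that lies only in
red sets or a blue point that lies only in blue sets. -/
structure Config (a b a' b' : ℝ) (k l : ℕ) where
  V : Type
  R : Type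
  B : Type
  finV : Finite V
  finR : Finite R
  finB : Finite B
  c : V → ℝ
  r : V → ℝ
  s : V → ℝ
  α : R → ℝ
  ρ : R → ℝ
  β : B → ℝ
  σ : B → ℝ
  coverR : ∀ x, ∃ t : Finset V, k ≤ t.card ∧ ∀ v ∈ t, ρ x + wedge a b (α x - c v) ≤ r v
  coverB : ∀ x, ∃ t : Finset V, l ≤ t.card ∧ ∀ v ∈ t, σ x + wedge a' b' (β x - c v) ≤ s v
  mono : ∀ f : V → Prop,
    (∃ x, ∀ v, ρ x + wedge a b (α x - c v) ≤ r v → f v) ∨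
    (∃ x, ∀ v, σ x + wedge a' b' (β x - c v) ≤ s v → ¬ f v)

/-- Incidences are invariant under a common scaling and translation of sets and points. -/
lemma scaled_iff {a b h ρ α c r : ℝ} (hh : 0 < h) (y₀ z₀ : ℝ) :
    (z₀ + h * ρ) + wedge a b ((y₀ + h * α) - (y₀ + h * c)) ≤ z₀ + h * r ↔
      ρ + wedge a b (α - c) ≤ r := by
  rw [show (y₀ + h * α) - (y₀ + h * c) = h * (α - c) by ring, wedge_smul _ _ _ hh.le,
    show z₀ + h * ρ + h * wedge a b (α - c) = z₀ + h * (ρ + wedge a b (α - c)) by ring,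
    add_le_add_iff_left, mul_le_mul_iff_right₀ hh]

lemma eventually_wedge_lt (a b : ℝ) {z y w : ℝ} (z' y₁ y₂ w' : ℝ) (h : z + wedge a b y < w) :
    ∀ᶠ η in 𝓝[>] (0 : ℝ), z + η * z' + wedge a b (y + η * y₁ - η * y₂) < w + η * w' := by
  apply nhdsWithin_le_nhds
  have := continuous_wedge a b
  apply ContinuousAt.eventually_lt (by fun_prop) (by fun_prop)
  simpa using h

lemma eventually_lt_wedge (a b : ℝ) {z y w : ℝ} (z' y₁ y₂ w' : ℝ) (h : w < z + wedge a b y) :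
    ∀ᶠ η in 𝓝[>] (0 : ℝ), w + η * w' < z + η * z' + wedge a b (y + η * y₁ - η * y₂) := by
  apply nhdsWithin_le_nhds
  have := continuous_wedge a b
  apply ContinuousAt.eventually_lt (by fun_prop) (by fun_prop)
  simpa using h

/-- The recursive step. A tiny copy of `C₁` is placed at the origin `(0, 0, 0)`, a tiny copy of `C₂` at
`(1, z, u)`, and one new set is placed at `(1 / 2, r₀, s₀)`. The new set contains all red points
of `C₁` and all blue points of `C₂`, and no other point; the sets of either copy contain no point of
the other copy. If the new set is red, a monochromatic point is found in `C₁`, otherwise in `C₂`. -/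
lemma config_step {a b a' b' : ℝ} (h : 0 < a + b) (h' : 0 < a' + b') {k l : ℕ}
    (C₁ : Config a b a' b' k (l + 1)) (C₂ : Config a b a' b' (k + 1) l) :
    Nonempty (Config a b a' b' (k + 1) (l + 1)) := by
  classical
  obtain ⟨V₁, R₁, B₁, _, _, _, c₁, r₁, s₁, α₁, ρ₁, β₁, σ₁, cR₁, cB₁, m₁⟩ := C₁
  obtain ⟨V₂, R₂, B₂, _, _, _, c₂, r₂, s₂, α₂, ρ₂, β₂, σ₂, cR₂, cB₂, m₂⟩ := C₂
  obtain ⟨w1, w2, w3, w4⟩ := wedge_values h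
  obtain ⟨w1', w2', w3', w4'⟩ := wedge_values h'
  -- The positions are chosen so that all incidences between different pieces hold or fail strictly
  -- when both copies are shrunk to points; by continuity they persist for small `η > 0`.
  obtain ⟨z, hz1, hz2⟩ : ∃ z, (b - a) / 2 < z ∧ z < b := exists_between (by linarith)
  obtain ⟨u, hu1, hu2⟩ : ∃ u, -a' < u ∧ u < (b' - a') / 2 := exists_between (by linarith)
  obtain ⟨r₀, hr1, hr2⟩ : ∃ r₀, b / 2 < r₀ ∧ r₀ < z + a / 2 := exists_between (by linarith)
  obtain ⟨s₀, hs1, hs2⟩ : ∃ s₀, u + a' / 2 < s₀ ∧ s₀ < b' / 2 := exists_between (by linarith)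
  have e1 : ∀ᶠ η in 𝓝[>] (0 : ℝ), ∀ x : R₁,
      0 + η * ρ₁ x + wedge a b (-1/2 + η * α₁ x - η * 0) < r₀ + η * 0 :=
    eventually_all.2 fun x => eventually_wedge_lt a b _ _ _ _ (by linarith)
  have e2 : ∀ᶠ η in 𝓝[>] (0 : ℝ), ∀ x : R₂,
      r₀ + η * 0 < z + η * ρ₂ x + wedge a b (1/2 + η * α₂ x - η * 0) :=
    eventually_all.2 fun x => eventually_lt_wedge a b _ _ _ _ (by linarith)
  have e3 : ∀ᶠ η in 𝓝[>] (0 : ℝ), ∀ x : B₁,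
      s₀ + η * 0 < 0 + η * σ₁ x + wedge a' b' (-1/2 + η * β₁ x - η * 0) :=
    eventually_all.2 fun x => eventually_lt_wedge a' b' _ _ _ _ (by linarith)
  have e4 : ∀ᶠ η in 𝓝[>] (0 : ℝ), ∀ x : B₂,
      u + η * σ₂ x + wedge a' b' (1/2 + η * β₂ x - η * 0) < s₀ + η * 0 :=
    eventually_all.2 fun x => eventually_wedge_lt a' b' _ _ _ _ (by linarith)
  have e5 : ∀ᶠ η in 𝓝[>] (0 : ℝ), ∀ x : R₁, ∀ v : V₂,
      z + η * r₂ v < 0 + η * ρ₁ x + wedge a b (-1 + η * α₁ x - η * c₂ v) :=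
    eventually_all.2 fun x => eventually_all.2 fun v =>
      eventually_lt_wedge a b _ _ _ _ (by linarith)
  have e6 : ∀ᶠ η in 𝓝[>] (0 : ℝ), ∀ x : R₂, ∀ v : V₁,
      0 + η * r₁ v < z + η * ρ₂ x + wedge a b (1 + η * α₂ x - η * c₁ v) :=
    eventually_all.2 fun x => eventually_all.2 fun v =>
      eventually_lt_wedge a b _ _ _ _ (by linarith)
  have e7 : ∀ᶠ η in 𝓝[>] (0 : ℝ), ∀ x : B₁, ∀ v : V₂,
      u + η * s₂ v < 0 + η * σ₁ x + wedge a' b' (-1 + η * β₁ x - η * c₂ v) :=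
    eventually_all.2 fun x => eventually_all.2 fun v =>
      eventually_lt_wedge a' b' _ _ _ _ (by linarith)
  have e8 : ∀ᶠ η in 𝓝[>] (0 : ℝ), ∀ x : B₂, ∀ v : V₁,
      0 + η * s₁ v < u + η * σ₂ x + wedge a' b' (1 + η * β₂ x - η * c₁ v) :=
    eventually_all.2 fun x => eventually_all.2 fun v =>
      eventually_lt_wedge a' b' _ _ _ _ (by linarith)
  obtain ⟨η, e1, e2, e3, e4, e5, e6, e7, e8, hη⟩ :=
    (e1.and (e2.and (e3.and (e4.and (e5.and (e6.and (e7.and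
      (e8.and self_mem_nhdsWithin)))))))).exists
  replace hη : 0 < η := hη
  let c : Option (V₁ ⊕ V₂) → ℝ := fun v =>
    v.elim (1 / 2) (Sum.elim (fun v => 0 + η * c₁ v) (fun v => 1 + η * c₂ v))
  let r : Option (V₁ ⊕ V₂) → ℝ := fun v =>
    v.elim r₀ (Sum.elim (fun v => 0 + η * r₁ v) (fun v => z + η * r₂ v))
  let s : Option (V₁ ⊕ V₂) → ℝ := fun v =>
    v.elim s₀ (Sum.elim (fun v => 0 + η * s₁ v) (fun v => u + η * s₂ v))
  let α : R₁ ⊕ R₂ → ℝ := Sum.elim (fun x => 0 + η * α₁ x) (fun x => 1 + η * α₂ x)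
  let ρ : R₁ ⊕ R₂ → ℝ := Sum.elim (fun x => 0 + η * ρ₁ x) (fun x => z + η * ρ₂ x)
  let β : B₁ ⊕ B₂ → ℝ := Sum.elim (fun x => 0 + η * β₁ x) (fun x => 1 + η * β₂ x)
  let σ : B₁ ⊕ B₂ → ℝ := Sum.elim (fun x => 0 + η * σ₁ x) (fun x => u + η * σ₂ x)
  have i11 : ∀ x v,
      ρ (.inl x) + wedge a b (α (.inl x) - c (some (.inl v))) ≤ r (some (.inl v)) ↔
      ρ₁ x + wedge a b (α₁ x - c₁ v) ≤ r₁ v := fun x v => scaled_iff hη _ _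
  have i22 : ∀ x v,
      ρ (.inr x) + wedge a b (α (.inr x) - c (some (.inr v))) ≤ r (some (.inr v)) ↔
      ρ₂ x + wedge a b (α₂ x - c₂ v) ≤ r₂ v := fun x v => scaled_iff hη _ _
  have j11 : ∀ x v,
      σ (.inl x) + wedge a' b' (β (.inl x) - c (some (.inl v))) ≤ s (some (.inl v)) ↔
      σ₁ x + wedge a' b' (β₁ x - c₁ v) ≤ s₁ v := fun x v => scaled_iff hη _ _
  have j22 : ∀ x v,
      σ (.inr x) + wedge a' b' (β (.inr x) - c (some (.inr v))) ≤ s (some (.inr v)) ↔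
      σ₂ x + wedge a' b' (β₂ x - c₂ v) ≤ s₂ v := fun x v => scaled_iff hη _ _
  have i12 : ∀ x v, 
      ¬ ρ (.inl x) + wedge a b (α (.inl x) - c (some (.inr v))) ≤ r (some (.inr v)) := by
    intro x v
    have h := e5 x v
    rw [show -1 + η * α₁ x - η * c₂ v = (0 + η * α₁ x) - (1 + η * c₂ v) by ring] at h
    exact h.not_ge
  have i21 : ∀ x v, 
      ¬ ρ (.inr x) + wedge a b (α (.inr x) - c (some (.inl v))) ≤ r (some (.inl v)) := by
    intro x v
    have h := e6 x v
    rw [show 1 + η * α₂ x - η * c₁ v = (1 + η * α₂ x) - (0 + η * c₁ v) by ring] at h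
    exact h.not_ge
  have j12 : ∀ x v, 
      ¬ σ (.inl x) + wedge a' b' (β (.inl x) - c (some (.inr v))) ≤ s (some (.inr v)) := by
    intro x v
    have h := e7 x v
    rw [show -1 + η * β₁ x - η * c₂ v = (0 + η * β₁ x) - (1 + η * c₂ v) by ring] at h
    exact h.not_ge
  have j21 : ∀ x v, 
      ¬ σ (.inr x) + wedge a' b' (β (.inr x) - c (some (.inl v))) ≤ s (some (.inl v)) := by
    intro x v
    have h := e8 x v
    rw [show 1 + η * β₂ x - η * c₁ v = (1 + η * β₂ x) - (0 + η * c₁ v) by ring] at h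
    exact h.not_ge
  have i1 : ∀ x, ρ (.inl x) + wedge a b (α (.inl x) - c none) ≤ r none := by
    intro x
    have h := e1 x
    rw [show -1 / 2 + η * α₁ x - η * 0 = (0 + η * α₁ x) - 1 / 2 by ring, show r₀ + η * 0 = r₀ by ring] at h
    exact h.le
  have i2 : ∀ x, ¬ ρ (.inr x) + wedge a b (α (.inr x) - c none) ≤ r none := by
    intro x
    have h := e2 x
    rw [show 1 / 2 + η * α₂ x - η * 0 = (1 + η * α₂ x) - 1 / 2 by ring, show r₀ + η * 0 = r₀ by ring] at h
    exact h.not_ge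
  have j1 : ∀ x, ¬ σ (.inl x) + wedge a' b' (β (.inl x) - c none) ≤ s none := by
    intro x
    have h := e3 x
    rw [show -1 / 2 + η * β₁ x - η * 0 = (0 + η * β₁ x) - 1 / 2 by ring, show s₀ + η * 0 = s₀ by ring] at h
    exact h.not_ge
  have j2 : ∀ x, σ (.inr x) + wedge a' b' (β (.inr x) - c none) ≤ s none := by
    intro x
    have h := e4 x
    rw [show 1 / 2 + η * β₂ x - η * 0 = (1 + η * β₂ x) - 1 / 2 by ring, show s₀ + η * 0 = s₀ by ring] at h
    exact h.le
  clear_value c r s α ρ β σ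
  refine ⟨⟨Option (V₁ ⊕ V₂), R₁ ⊕ R₂, B₁ ⊕ B₂, inferInstance, inferInstance, inferInstance,
    c, r, s, α, ρ, β, σ, ?_, ?_, ?_⟩⟩
  · rintro (x | x)
    · obtain ⟨t, ht, hm⟩ := cR₁ x
      refine ⟨(t.map Function.Embedding.inl).insertNone, by simpa using ht, ?_⟩
      rintro (_ | (v | v)) hv
      · exact i1 x
      · exact (i11 x v).2 (hm v (by simpa using hv))
      · simp at hv
    · obtain ⟨t, ht, hm⟩ := cR₂ x
      refine ⟨(t.map Function.Embedding.inr).map Function.Embedding.some, by simpa using ht, ?_⟩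
      rintro (_ | (v | v)) hv
      · simp at hv
      · simp at hv
      · exact (i22 x v).2 (hm v (by simpa using hv))
  · rintro (x | x)
    · obtain ⟨t, ht, hm⟩ := cB₁ x
      refine ⟨(t.map Function.Embedding.inl).map Function.Embedding.some, by simpa using ht, ?_⟩
      rintro (_ | (v | v)) hv
      · simp at hv
      · exact (j11 x v).2 (hm v (by simpa using hv))
      · simp at hv
    · obtain ⟨t, ht, hm⟩ := cB₂ x
      refine ⟨(t.map Function.Embedding.inr).insertNone, by simpa using ht, ?_⟩
      rintro (_ | (v | v)) hv
      · exact j2 x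
      · simp at hv
      · exact (j22 x v).2 (hm v (by simpa using hv))
  · intro f
    by_cases hf : f none
    · rcases m₁ (fun v => f (some (.inl v))) with ⟨x, hx⟩ | ⟨x, hx⟩
      · refine Or.inl ⟨.inl x, ?_⟩
        rintro (_ | (v | v)) hv
        · exact hf
        · exact hx v ((i11 x v).1 hv)
        · exact absurd hv (i12 x v)
      · refine Or.inr ⟨.inl x, ?_⟩
        rintro (_ | (v | v)) hv
        · exact absurd hv (j1 x)
        · exact hx v ((j11 x v).1 hv)
        · exact absurd hv (j12 x v)
    · rcases m₂ (fun v => f (some (.inr v))) with ⟨x, hx⟩ | ⟨x, hx⟩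
      · refine Or.inl ⟨.inr x, ?_⟩
        rintro (_ | (v | v)) hv
        · exact absurd hv (i2 x)
        · exact absurd hv (i21 x v)
        · exact hx v ((i22 x v).1 hv)
      · refine Or.inr ⟨.inr x, ?_⟩
        rintro (_ | (v | v)) hv
        · exact hf
        · exact absurd hv (j21 x v)
        · exact hx v ((j22 x v).1 hv)

/-- For `k = 0` a single red point in no set is vacuously contained only in red sets; similarly for
`l = 0`. -/
lemma exists_config {a b a' b' : ℝ} (h : 0 < a + b) (h' : 0 < a' + b') (k l : ℕ) :
    Nonempty (Config a b a' b' k l) := by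
  induction k generalizing l with
  | zero =>
    exact ⟨⟨Empty, Unit, Empty, inferInstance, inferInstance, inferInstance, nofun, nofun, nofun,
      fun _ => 0, fun _ => 0, nofun, nofun, fun _ => ⟨∅, by simp⟩, nofun,
      fun _ => Or.inl ⟨(), nofun⟩⟩⟩
  | succ k ihk =>
    induction l with
    | zero =>
      exact ⟨⟨Empty, Empty, Unit, inferInstance, inferInstance, inferInstance, nofun, nofun, nofun,
        nofun, nofun, fun _ => 0, fun _ => 0, nofun, fun _ => ⟨∅, by simp⟩,
        fun _ => Or.inr ⟨(), nofun⟩⟩⟩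
    | succ l ihl => exact config_step h h' (ihk (l + 1)).some ihl.some

/-! ### The shape of a polygon near the ends of a diagonal -/

lemma convex_three {S : Set Plane} (hS : Convex ℝ S) {x y z : Plane} (hx : x ∈ S) (hy : y ∈ S)
    (hz : z ∈ S) {p q r : ℝ} (hp : 0 ≤ p) (hq : 0 ≤ q) (hr : 0 ≤ r) (h : p + q + r = 1) :
    p • x + q • y + r • z ∈ S := by
  have := hS.sum_mem (t := Finset.univ) (w := ![p, q, r]) (z := ![x, y, z])
    (by intro i _; fin_cases i <;> assumption) (by simpa [Fin.sum_univ_three] using h)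
    (by intro i _; fin_cases i <;> assumption)
  simpa [Fin.sum_univ_three] using this

/-- An extreme point `A` is not a convex combination of `x ≠ A`, `y`, `z` in which `x` and `y` have
positive weight. -/
lemma not_extreme_of_combo {S : Set Plane} (hS : Convex ℝ S) {A x y z : Plane}
    (hA : A ∈ Set.extremePoints ℝ S) (hx : x ∈ S) (hy : y ∈ S) (hz : z ∈ S) (hxA : x ≠ A)
    {p q r : ℝ} (hp : 0 < p) (hq : 0 < q) (hr : 0 ≤ r)
    (h : p • (x - A) + q • (y - A) + r • (z - A) = 0) : False := by
  have hqr : 0 < q + r := by linarith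
  have hw : (q / (q + r)) • y + (r / (q + r)) • z ∈ S :=
    hS hy hz (by positivity) (by positivity) (by field_simp)
  have hpq : 0 < p + (q + r) := by linarith
  refine hxA (hA.2 hx hw ⟨p / (p + (q + r)), (q + r) / (p + (q + r)), by positivity, by positivity,
    by field_simp, ?_⟩)
  have e : A = A + (1 / (p + (q + r))) • (p • (x - A) + q • (y - A) + r • (z - A)) := by
    rw [h]; simp
  rw [e]
  ext i
  simp
  field_simp
  ring

/-- Let `A` be an extreme point of the polygon and `A + d` another point of it, such that the line
through them has vertices strictly on both sides. In coordinates `(t, y)` along `d` and a transversal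
vector `n`, the polygon coincides near `A` with the epigraph `wedge a b y ≤ t` translated to `A`,
and this wedge is proper. -/
lemma local_wedge {P : Finset Plane} {A d n : Plane} {t y : Plane →ₗ[ℝ] ℝ}
    (hdec : ∀ x, x = t x • d + y x • n)
    (hA : A ∈ Set.extremePoints ℝ (convexHull ℝ (P : Set Plane)))
    (hB : A + d ∈ convexHull ℝ (P : Set Plane))
    (hq₁ : ∃ q ∈ P, 0 < y (q - A)) (hq₂ : ∃ q ∈ P, y (q - A) < 0) :
    ∃ a b τ : ℝ, 0 < a + b ∧ 0 < τ ∧ ∀ w, |t w| ≤ τ → |y w| ≤ τ →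
      (A + w ∈ convexHull ℝ (P : Set Plane) ↔ wedge a b (y w) ≤ t w) := by
  classical
  have hS := convex_convexHull ℝ (P : Set Plane)
  have hsub : ∀ q ∈ P, q ∈ convexHull ℝ (P : Set Plane) := fun q hq => subset_convexHull ℝ _ hq
  -- The two sides of the polygon at `A` go through the vertices of least slope on either side.
  obtain ⟨q₁, h₁, min₁⟩ := (P.filter fun q => 0 < y (q - A)).exists_min_image
    (fun q => t (q - A) / y (q - A)) (by simpa [Finset.Nonempty] using hq₁)
  obtain ⟨q₂, h₂, min₂⟩ := (P.filter fun q => y (q - A) < 0).exists_min_image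
    (fun q => t (q - A) / -y (q - A)) (by simpa [Finset.Nonempty] using hq₂)
  rw [Finset.mem_filter] at h₁ h₂
  obtain ⟨hP₁, hy₁⟩ := h₁
  obtain ⟨hP₂, hy₂⟩ := h₂
  replace hy₂ : 0 < -y (q₂ - A) := by linarith
  set y₁ := y (q₁ - A) with hy₁def
  set y₂ := -y (q₂ - A) with hy₂def
  obtain ⟨a, ha⟩ : ∃ a, a = t (q₁ - A) / y₁ := ⟨_, rfl⟩
  obtain ⟨b, hb⟩ : ∃ b, b = t (q₂ - A) / y₂ := ⟨_, rfl⟩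
  have ht₁ : t (q₁ - A) = a * y₁ := by rw [ha]; field_simp
  have ht₂ : t (q₂ - A) = b * y₂ := by rw [hb]; field_simp
  have e₁ : q₁ - A = (a * y₁) • d + y₁ • n := by rw [← ht₁]; exact hdec _
  have e₂ : q₂ - A = (b * y₂) • d + (-y₂) • n := by
    rw [← ht₂, hy₂def, neg_neg]; exact hdec _
  have hab : 0 < a + b := by
    by_contra hneg
    refine not_extreme_of_combo hS hA (hsub _ hP₁) (hsub _ hP₂) hB ?_ (p := y₂) (q := y₁)
      (r := -(a + b) * (y₁ * y₂)) hy₂ hy₁ (mul_nonneg (by linarith) (by positivity)) ?_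
    · rintro rfl
      simp [hy₁def] at hy₁
    · rw [e₁, e₂, add_sub_cancel_left]
      module
  have hcone : ∀ q ∈ P, a * y (q - A) ≤ t (q - A) ∧ -b * y (q - A) ≤ t (q - A) := by
    intro q hq
    rcases lt_trichotomy (y (q - A)) 0 with hy | hy | hy
    · have h := min₂ q (Finset.mem_filter.2 ⟨hq, hy⟩)
      rw [← hb, le_div_iff₀ (by linarith)] at h
      constructor <;> nlinarith
    · have ht : 0 ≤ t (q - A) := by
        by_contra hneg
        rw [not_le] at hneg
        refine not_extreme_of_combo hS hA (hsub _ hq) hB hB ?_ (p := 1) (q := -t (q - A)) (r := 0)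
          one_pos (by linarith) le_rfl ?_
        · rintro rfl
          simp at hneg
        · have := hdec (q - A)
          rw [hy] at this
          rw [add_sub_cancel_left]
          nth_rewrite 1 [this]
          module
      rw [hy]
      simpa using ht
    · have h := min₁ q (Finset.mem_filter.2 ⟨hq, hy⟩)
      rw [← ha, le_div_iff₀ hy] at h
      constructor <;> nlinarith
  have hhull : ∀ x ∈ convexHull ℝ (P : Set Plane), a * y (x - A) ≤ t (x - A) ∧
      -b * y (x - A) ≤ t (x - A) := by
    have key : ∀ κ : ℝ, (∀ q ∈ P, κ * y (q - A) ≤ t (q - A)) →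
        ∀ x ∈ convexHull ℝ (P : Set Plane), κ * y (x - A) ≤ t (x - A) := by
      intro κ hκ x hx
      have := convexHull_min (t := {x | (t - κ • y) A ≤ (t - κ • y) x}) (s := (P : Set Plane))
        (by
          intro q hq
          have := hκ q hq
          simp only [map_sub] at this
          simp only [Set.mem_ofPred_eq, LinearMap.sub_apply, LinearMap.smul_apply, smul_eq_mul]
          linarith)
        (convex_halfSpace_ge (LinearMap.isLinear _) _) hx
      simp only [Set.mem_ofPred_eq, LinearMap.sub_apply, LinearMap.smul_apply, smul_eq_mul] at this
      simp only [map_sub]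
      linarith
    exact fun x hx => ⟨key a (fun q hq => (hcone q hq).1) x hx,
      key (-b) (fun q hq => (hcone q hq).2) x hx⟩
  -- With this choice of `τ`, the coefficients used in `fill` below add up to at most 1.
  have hM : 0 < 1 + |a| + |b| + 1 / y₁ + 1 / y₂ := by positivity
  obtain ⟨τ, hτ⟩ : ∃ τ, τ = 1 / (1 + |a| + |b| + 1 / y₁ + 1 / y₂) := ⟨_, rfl⟩
  have hτ0 : 0 < τ := by rw [hτ]; positivity
  have hτ1 : τ + τ * |a| + τ * |b| + τ * (1 / y₁) + τ * (1 / y₂) = 1 := by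
    have : τ * (1 + |a| + |b| + 1 / y₁ + 1 / y₂) = 1 := by rw [hτ]; field_simp
    linarith
  have pa : 0 ≤ τ * |a| := by positivity
  have pb : 0 ≤ τ * |b| := by positivity
  have p₁ : 0 ≤ τ * (1 / y₁) := by positivity
  have p₂ : 0 ≤ τ * (1 / y₂) := by positivity
  refine ⟨a, b, τ, hab, hτ0, ?_⟩
  intro w htw hyw
  rw [wedge, max_le_iff]
  constructor
  · intro h
    simpa using hhull _ h
  · rintro ⟨hwa, hwb⟩
    have fill : ∀ q ∈ P, ∀ L M : ℝ, 0 ≤ L → 0 ≤ M → L + M ≤ 1 → w = L • (q - A) + M • d →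
        A + w ∈ convexHull ℝ (P : Set Plane) := by
      intro q hq L M hL hM hLM e
      have := convex_three hS hA.1 (hsub q hq) hB (p := 1 - L - M) (q := L) (r := M)
        (by linarith) hL hM (by ring)
      convert this using 1
      rw [e]
      module
    have hw := hdec w
    have ba : |y w| * |a| ≤ τ * |a| := by gcongr
    have bb : |y w| * |b| ≤ τ * |b| := by gcongr
    have b₁ : |y w| * (1 / y₁) ≤ τ * (1 / y₁) := by gcongr
    have b₂ : |y w| * (1 / y₂) ≤ τ * (1 / y₂) := by gcongr
    have hta := le_abs_self (t w)
    rcases le_total 0 (y w) with hy | hy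
    · have h := neg_abs_le (y w * a)
      rw [abs_mul] at h
      rw [abs_of_nonneg hy] at b₁
      refine fill q₁ hP₁ (y w * (1 / y₁)) (t w - a * y w) (by positivity) (by linarith)
        (by linarith) ?_
      rw [e₁]
      nth_rewrite 1 [hw]
      match_scalars <;> field_simp
      ring
    · have h := le_abs_self (y w * b)
      rw [abs_mul] at h
      rw [abs_of_nonpos hy] at b₂
      refine fill q₂ hP₂ (-y w * (1 / y₂)) (t w - -b * y w)
        (mul_nonneg (by linarith) (by positivity)) (by linarith) (by linarith) ?_
      rw [e₂]
      nth_rewrite 1 [hw]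
      match_scalars <;> field_simp
      ring

/-- The determinant of two plane vectors. -/
def cross (u v : Plane) : ℝ := u 0 * v 1 - u 1 * v 0

lemma cross_ne_zero {P : Finset Plane} (hpos : StrictlyConvexPosition P) {A q q' : Plane}
    (hA : A ∈ P) (hq : q ∈ P) (hq' : q' ∈ P) (h1 : q ≠ A) (h2 : q' ≠ A) (h3 : q ≠ q') :
    cross (q - A) (q' - A) ≠ 0 := by
  intro h
  have key : ∀ x y z : Plane, x ∈ P → y ∈ P → z ∈ P → y ≠ x → ¬ Sbtw ℝ x y z := by
    intro x y z hx hy hz hxy hw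
    have := (hpos y hy).2 (subset_convexHull ℝ _ hx) (subset_convexHull ℝ _ hz)
      (by
        rw [sbtw_iff_mem_image_Ioo_and_ne] at hw
        rw [openSegment_eq_image_lineMap]
        exact hw.1)
    exact hxy this.symm
  have hcol : Collinear ℝ {A, q, q'} := by
    rw [collinear_iff_of_mem (p₀ := A) (by simp)]
    refine ⟨q - A, ?_⟩
    have hne : q - A ≠ 0 := sub_ne_zero.2 h1
    set u := q - A with hu
    set v := q' - A with hv
    have hd : 0 < u 0 ^ 2 + u 1 ^ 2 := by
      by_contra hneg
      apply hne
      ext i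
      fin_cases i <;> simp <;> nlinarith [sq_nonneg (u 0), sq_nonneg (u 1)]
    obtain ⟨κ, hκ⟩ : ∃ κ : ℝ, v = κ • u := by
      refine ⟨(u 0 * v 0 + u 1 * v 1) / (u 0 ^ 2 + u 1 ^ 2), ?_⟩
      unfold cross at h
      ext i
      fin_cases i
      · simp
        field_simp
        linear_combination (-u 1) * h
      · simp
        field_simp
        linear_combination (u 0) * h
    intro p hp
    simp only [Set.mem_insert_iff, Set.mem_singleton_iff] at hp
    rcases hp with rfl | rfl | rfl
    · exact ⟨0, by simp⟩
    · exact ⟨1, by simp [hu]⟩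
    · exact ⟨κ, by simp [← hκ, hv]⟩
  rcases hcol.wbtw_or_wbtw_or_wbtw with w | w | w
  · exact key _ _ _ hA hq hq' h1 ⟨w, h1, h3⟩
  · exact key _ _ _ hq hq' hA h3.symm ⟨w, h3.symm, h2⟩
  · exact key _ _ _ hq' hA hq h2.symm ⟨w, h2.symm, h1.symm⟩

/-- A convex polygon with at least four vertices has a diagonal. Of the three vectors from `A` to three
other vertices `x`, `y`, `z`, two of the cyclic determinants `[x,y]`, `[y,z]`, `[z,x]` agree in
sign, and the vector common to these two has the other two vectors on different sides. -/
lemma exists_diagonal {P : Finset Plane} (hcard : 4 ≤ P.card) (hpos : StrictlyConvexPosition P) :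
    ∃ A ∈ P, ∃ B ∈ P, (∃ q ∈ P, 0 < cross (B - A) (q - A)) ∧
      ∃ q ∈ P, cross (B - A) (q - A) < 0 := by
  classical
  obtain ⟨A, hA⟩ : P.Nonempty := Finset.card_pos.1 (by omega)
  have h3 : 2 < (P.erase A).card := by rw [Finset.card_erase_of_mem hA]; omega
  obtain ⟨x, y, z, hx, hy, hz, hxy, hxz, hyz⟩ := Finset.two_lt_card_iff.1 h3
  rw [Finset.mem_erase] at hx hy hz
  have a1 := cross_ne_zero hpos hA hx.2 hy.2 hx.1 hy.1 hxy
  have a2 := cross_ne_zero hpos hA hy.2 hz.2 hy.1 hz.1 hyz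
  have a3 := cross_ne_zero hpos hA hz.2 hx.2 hz.1 hx.1 hxz.symm
  have anti : ∀ u v, cross v u = -cross u v := by intro u v; unfold cross; ring
  have b1 := anti (x - A) (y - A)
  have b2 := anti (y - A) (z - A)
  have b3 := anti (z - A) (x - A)
  refine ⟨A, hA, ?_⟩
  rcases lt_or_gt_of_ne a1 with a1 | a1 <;> rcases lt_or_gt_of_ne a2 with a2 | a2
  · exact ⟨y, hy.2, ⟨x, hx.2, by linarith⟩, ⟨z, hz.2, by linarith⟩⟩
  · rcases lt_or_gt_of_ne a3 with a3 | a3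
    · exact ⟨x, hx.2, ⟨z, hz.2, by linarith⟩, ⟨y, hy.2, by linarith⟩⟩
    · exact ⟨z, hz.2, ⟨x, hx.2, by linarith⟩, ⟨y, hy.2, by linarith⟩⟩
  · rcases lt_or_gt_of_ne a3 with a3 | a3
    · exact ⟨z, hz.2, ⟨y, hy.2, by linarith⟩, ⟨x, hx.2, by linarith⟩⟩
    · exact ⟨x, hx.2, ⟨y, hy.2, by linarith⟩, ⟨z, hz.2, by linarith⟩⟩
  · exact ⟨y, hy.2, ⟨z, hz.2, by linarith⟩, ⟨x, hx.2, by linarith⟩⟩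

/-- Coordinates with respect to the basis consisting of `d` and a multiple of its rotation by a right
angle. -/
lemma exists_coords {d : Plane} (hd : d ≠ 0) : ∃ (n : Plane) (t y : Plane →ₗ[ℝ] ℝ),
    (∀ x, x = t x • d + y x • n) ∧ t d = 1 ∧ y d = 0 ∧ t n = 0 ∧ y n = 1 ∧
      ∀ x, y x = cross d x := by
  have hd : 0 < d 0 ^ 2 + d 1 ^ 2 := by
    by_contra hneg
    apply hd
    ext i
    fin_cases i <;> simp <;> nlinarith [sq_nonneg (d 0), sq_nonneg (d 1)]
  let X : Fin 2 → Plane →ₗ[ℝ] ℝ := fun i => (EuclideanSpace.proj i : Plane →L[ℝ] ℝ)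
  have hX : ∀ i x, X i x = x i := fun i x => rfl
  refine ⟨!₂[-d 1 / (d 0 ^ 2 + d 1 ^ 2), d 0 / (d 0 ^ 2 + d 1 ^ 2)],
    (d 0 / (d 0 ^ 2 + d 1 ^ 2)) • X 0 + (d 1 / (d 0 ^ 2 + d 1 ^ 2)) • X 1,
    d 0 • X 1 - d 1 • X 0, ?_, ?_, ?_, ?_, ?_, ?_⟩
  · intro x
    ext i
    fin_cases i <;> simp [hX] <;> field_simp <;> ring
  · simp [hX]
    field_simp
  · simp [hX]
    ring
  · simp [hX]
    field_simp
    ring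
  · simp [hX]
    field_simp
    ring
  · intro x
    simp [hX, cross]

/-! ### Homothetic copies -/

lemma mem_homCopy_iff {ε : ℝ} (hε : 0 < ε) (p Q w : Plane) (S : Set Plane) {x : Plane}
    (hx : x = ε • Q + p + w) : x ∈ homCopy ε p S ↔ Q + (1 / ε) • w ∈ S := by
  have e : x = ε • (Q + (1 / ε) • w) + p := by
    rw [hx, smul_add, smul_smul, mul_one_div_cancel hε.ne', one_smul]
    abel
  constructor
  · rintro ⟨s, hs, h⟩
    rw [e] at h
    have : s = Q + (1 / ε) • w := smul_right_injective Plane hε.ne' (add_right_cancel h)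
    exact this ▸ hs
  · intro h
    exact ⟨_, h, e.symm⟩

lemma exists_small_copy {S : Set Plane} (hS : Bornology.IsBounded S) (hne : S.Nonempty)
    {X : Set Plane} (hX : X.Finite) {z : Plane} (hz : z ∉ X) :
    ∃ ε : ℝ, ∃ p, 0 < ε ∧ z ∈ homCopy ε p S ∧ ∀ x ∈ X, x ∉ homCopy ε p S := by
  obtain ⟨s₀, hs₀⟩ := hne
  obtain ⟨δ, hδ, hball⟩ := Metric.isOpen_iff.1 hX.isClosed.isOpen_compl z hz
  obtain ⟨M, hM⟩ := hS.subset_closedBall s₀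
  have hM0 : 0 < |M| + 1 := by positivity
  refine ⟨δ / (|M| + 1), z - (δ / (|M| + 1)) • s₀, by positivity, ⟨s₀, hs₀, by simp⟩, ?_⟩
  rintro x hx ⟨s, hs, rfl⟩
  refine hball ?_ hx
  have h1 : dist s s₀ ≤ M := hM hs
  rw [Metric.mem_ball, dist_eq_norm]
  have : (δ / (|M| + 1)) • s + (z - (δ / (|M| + 1)) • s₀) - z = (δ / (|M| + 1)) • (s - s₀) := by
    module
  simp only [this]
  rw [norm_smul, ← dist_eq_norm, Real.norm_of_nonneg (by positivity), div_mul_eq_mul_div,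
    div_lt_iff₀ hM0]
  have := le_abs_self M
  gcongr
  linarith

/-- Suppose `S` looks near `Q` like a wedge. A homothetic copy of `S` with ratio `1 + δ e` has the
corresponding vertex at `(1 + δ e) Q + p`, and for small `δ > 0` a point at offset
`δ ((r - ρ) d + (α - c) n)` from this vertex lies in the copy iff the incidence condition of
`Config` holds. -/
lemma eventually_mem_iff {S : Set Plane} {Q d n : Plane} {t y : Plane →ₗ[ℝ] ℝ}
    (htd : t d = 1) (hyd : y d = 0) (htn : t n = 0) (hyn : y n = 1) {a b τ : ℝ}
    (hτ : 0 < τ)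
    (hloc : ∀ w, |t w| ≤ τ → |y w| ≤ τ → (Q + w ∈ S ↔ wedge a b (y w) ≤ t w))
    (e r ρ α c : ℝ) :
    ∀ᶠ δ in 𝓝[>] (0 : ℝ), ∀ p x : Plane,
      x = (1 + δ * e) • Q + p + δ • ((r - ρ) • d + (α - c) • n) →
      (x ∈ homCopy (1 + δ * e) p S ↔ ρ + wedge a b (α - c) ≤ r) := by
  have h1 : ∀ᶠ δ in 𝓝 (0 : ℝ), 0 < 1 + δ * e :=
    ContinuousAt.eventually_lt (by fun_prop) (by fun_prop) (by simp)
  have hs : ∀ g : ℝ, ∀ᶠ δ in 𝓝 (0 : ℝ), |1 / (1 + δ * e) * (δ * g)| < τ := by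
    intro g
    refine ContinuousAt.eventually_lt ?_ (by fun_prop) (by simpa using hτ)
    have : ContinuousAt (fun δ : ℝ => 1 / (1 + δ * e)) 0 :=
      ContinuousAt.div (by fun_prop) (by fun_prop) (by simp)
    fun_prop
  filter_upwards [nhdsWithin_le_nhds h1, nhdsWithin_le_nhds (hs (r - ρ)),
    nhdsWithin_le_nhds (hs (α - c)), self_mem_nhdsWithin] with δ hε ht hy hδ p x hx
  replace hδ : 0 < δ := hδ
  rw [mem_homCopy_iff hε p Q _ S hx]
  have et : t ((1 / (1 + δ * e)) • δ • ((r - ρ) • d + (α - c) • n)) =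
      1 / (1 + δ * e) * (δ * (r - ρ)) := by simp [htd, htn]
  have ey : y ((1 / (1 + δ * e)) • δ • ((r - ρ) • d + (α - c) • n)) =
      1 / (1 + δ * e) * (δ * (α - c)) := by simp [hyd, hyn]
  rw [hloc _ (by rw [et]; exact ht.le) (by rw [ey]; exact hy.le), et, ey,
    wedge_smul _ _ _ (by positivity), wedge_smul _ _ _ hδ.le,
    mul_le_mul_iff_right₀ (by positivity), mul_le_mul_iff_right₀ hδ, le_sub_iff_add_le, add_comm]

theorem statement0 (P : Finset Plane) (hcard : 4 ≤ P.card)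
    (hpos : StrictlyConvexPosition P)
    (S : Set Plane) (hS : S = convexHull ℝ (P : Set Plane))
    (m : ℕ) (hm : 1 ≤ m) :
    ∃ (I : Type) (ε : I → ℝ) (p : I → Plane),
      (∀ i, 0 < ε i) ∧
      MFoldCover m (fun i => homCopy (ε i) (p i) S) Set.univ ∧
      ¬ DecomposableIntoTwoCoverings (fun i => homCopy (ε i) (p i) S) := by
  classical
  subst hS
  obtain ⟨A, hA, B, hB, ⟨q₁, hq₁, hc₁⟩, ⟨q₂, hq₂, hc₂⟩⟩ := exists_diagonal hcard hpos
  set S := convexHull ℝ (P : Set Plane) with hSdef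
  obtain ⟨d, hd⟩ : ∃ d, d = B - A := ⟨_, rfl⟩
  rw [← hd] at hc₁ hc₂
  have hBA : B = A + d := by rw [hd]; abel
  have hd0 : d ≠ 0 := by
    rintro rfl
    simp [cross] at hc₁
  obtain ⟨n, t, y, hdec, htd, hyd, htn, hyn, hy⟩ := exists_coords hd0
  rw [← hy] at hc₁ hc₂
  have hyB : ∀ q, y (q - B) = y (q - A) := by
    intro q
    rw [hBA, ← sub_sub, map_sub y (q - A), hyd, sub_zero]
  have hAS : A ∈ S := subset_convexHull ℝ _ hA
  have hBS : B ∈ S := subset_convexHull ℝ _ hB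
  obtain ⟨a, b, τ, hab, hτ, hloc⟩ := local_wedge hdec (hpos A hA) (hBA ▸ hBS)
    ⟨q₁, hq₁, hc₁⟩ ⟨q₂, hq₂, hc₂⟩
  -- At `B` the diagonal points in the direction `-d`, so the coordinate `t` is negated.
  obtain ⟨a', b', τ', hab', hτ', hloc'⟩ := local_wedge (d := -d) (n := n) (t := -t) (y := y)
    (fun x => by simpa using hdec x) (hpos B hB)
    (by rw [hBA, add_neg_cancel_right]; exact hAS)
    ⟨q₁, hq₁, by rwa [hyB]⟩ ⟨q₂, hq₂, by rwa [hyB]⟩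
  obtain ⟨V, R, T, _, _, _, c, r, s, α, ρ, β, σ, cR, cT, hmono⟩ :=
    (exists_config hab hab' m m).some
  have ev₀ : ∀ᶠ δ in 𝓝[>] (0 : ℝ), ∀ v, 0 < 1 + δ * (r v + s v) :=
    eventually_all.2 fun v => nhdsWithin_le_nhds
      (ContinuousAt.eventually_lt (by fun_prop) (by fun_prop) (by simp))
  have evR := eventually_all.2 fun x => eventually_all.2 fun v =>
    eventually_mem_iff htd hyd htn hyn hτ hloc (r v + s v) (r v) (ρ x) (α x) (c v)
  have evT := eventually_all.2 fun x => eventually_all.2 fun v =>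
    eventually_mem_iff (d := -d) (t := -t) (by simpa using htd) (by simpa using hyd)
      (by simpa using htn) hyn hτ' hloc' (r v + s v) (s v) (σ x) (β x) (c v)
  obtain ⟨δ, hε, hR, hT⟩ := (ev₀.and (evR.and evT)).exists
  -- The copy of index `v` has its vertices at `A + δ (-r d + c n)` and `B + δ (s d + c n)`.
  obtain ⟨ε, hεdef⟩ : ∃ ε : V → ℝ, ε = fun v => 1 + δ * (r v + s v) := ⟨_, rfl⟩
  obtain ⟨p, hp⟩ : ∃ p : V → Plane,
    p = fun v => A + δ • (-r v • d + c v • n) - (1 + δ * (r v + s v)) • A := ⟨_, rfl⟩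
  obtain ⟨X, hX⟩ : ∃ X : R → Plane, X = fun x => A + δ • (-ρ x • d + α x • n) := ⟨_, rfl⟩
  obtain ⟨Y, hY⟩ : ∃ Y : T → Plane, Y = fun x => B + δ • (σ x • d + β x • n) := ⟨_, rfl⟩
  have memX : ∀ x v, X x ∈ homCopy (ε v) (p v) S ↔ ρ x + wedge a b (α x - c v) ≤ r v := by
    intro x v
    rw [hεdef]
    refine hR x v (p v) (X x) ?_
    rw [hX, hp]
    module
  have memY : ∀ x v, Y x ∈ homCopy (ε v) (p v) S ↔ σ x + wedge a' b' (β x - c v) ≤ s v := by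
    intro x v
    rw [hεdef]
    refine hT x v (p v) (Y x) ?_
    rw [hY, hp, hBA]
    module
  have hεpos : ∀ v, 0 < ε v := by
    rw [hεdef]
    exact hε
  have hfin : (Set.range X ∪ Set.range Y).Finite :=
    (Set.finite_range X).union (Set.finite_range Y)
  have hbdd : Bornology.IsBounded S := (P.finite_toSet.isCompact_convexHull ℝ).isBounded
  choose ε' p' hε' hz' hav using
    fun z : {z // z ∉ Set.range X ∪ Set.range Y} => exists_small_copy hbdd ⟨A, hAS⟩ hfin z.2
  refine ⟨V ⊕ ({z // z ∉ Set.range X ∪ Set.range Y} × Fin m),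
    Sum.elim ε (fun z => ε' z.1), Sum.elim p (fun z => p' z.1), ?_, ?_, ?_⟩
  · rintro (v | z)
    · exact hεpos v
    · exact hε' z.1
  · intro z _
    by_cases hz : z ∈ Set.range X ∪ Set.range Y
    · rcases hz with ⟨x, rfl⟩ | ⟨x, rfl⟩
      · obtain ⟨u, hu, hmem⟩ := cR x
        refine ⟨u.map Function.Embedding.inl, by simpa using hu, ?_⟩
        rintro (v | w) hv
        · exact (memX x v).2 (hmem v (by simpa using hv))
        · simp at hv
      · obtain ⟨u, hu, hmem⟩ := cT x
        refine ⟨u.map Function.Embedding.inl, by simpa using hu, ?_⟩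
        rintro (v | w) hv
        · exact (memY x v).2 (hmem v (by simpa using hv))
        · simp at hv
    · refine ⟨Finset.univ.map ⟨fun j : Fin m => Sum.inr (⟨z, hz⟩, j), ?_⟩, by simp, ?_⟩
      · intro j j' h
        simpa using h
      · intro i hi
        rw [Finset.mem_map] at hi
        obtain ⟨j, -, rfl⟩ := hi
        exact hz' ⟨z, hz⟩
  · rintro ⟨I₁, h₁, h₂⟩
    rcases hmono (fun v => Sum.inl v ∈ I₁) with ⟨x, hx⟩ | ⟨x, hx⟩
    · obtain ⟨v | w, hi, hv⟩ := h₂ (X x)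
      · exact hi (hx v ((memX x v).1 hv))
      · exact hav w.1 (X x) (Or.inl ⟨x, rfl⟩) hv
    · obtain ⟨v | w, hi, hv⟩ := h₁ (Y x)
      · exact hx v ((memY x v).1 hv) hi
      · exact hav w.1 (Y x) (Or.inr ⟨x, rfl⟩) hv
end
end

section
/- Let S be a simple (non-self-intersecting) polygon in the plane that is not convex and no two of whose sides are parallel, and let m ≥ 1 be an integer. Then there exists an indexed family of positive homothetic copies of S that forms an m-fold covering of the plane ℝ² and that cannot be decomposed into two coverings. -/
/-!
**Idea.** Suppose `S` has a convex vertex `v` whose angular cone `v + W` does not contain `S`; pick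
an interior point `v + q` of `S` outside `v + W`. Consider copies of `S` whose images of `v` lie
extremely close to the origin.
* A point extremely close to the origin sees each copy as a translate of `W`, whatever its scale. In
  the coordinates of `W` this is a comparison in two linear orders, so such points can realize
  any containment pattern of planar quadrants.
* If the scales of the copies grow rapidly, the point `s q` lies in the copies of scale `s` and in
  no other: smaller copies do not reach it, and larger ones look like `W` there.

Index the copies by the nonempty words over an alphabet of size `m`, the scale of a word depending
only on its parent. Two lexicographic orders, for the alphabet and for the reversed one, intersect
in the prefix order (`prefix_iff`). Hence for each word of length `m` some point lies exactly in the
`m` copies of its nonempty prefixes, and for each shorter word some point lies exactly in the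
`m` copies of its children. If one colour class meets every set of children, following it down the
tree gives a branch entirely of that colour (`exists_path`), so the other class misses a point.
The remaining points of the plane are covered by small copies avoiding these finitely many points
(`indecomposable_of_local_cone`).

If no such vertex exists, each convex vertex has `S` inside its cone. The vertex of largest norm is
convex. If a vertex is convex, the line of the side leading to the next vertex supports `S`; as
consecutive sides are not parallel, the next vertex is convex as well. So all side lines support
`S`, and `S` is an intersection of half-planes, hence convex.
-/

/-!
STATEMENT 1: Let S be a simple (non-self-intersecting) polygon in the plane
that is not convex and no two of whose sides are parallel, and let m ≥ 1.
Then there exists an indexed family of positive homothetic copies of S that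
forms an m-fold covering of ℝ² and that cannot be decomposed into two
coverings.
-/

noncomputable section

/-- The `i`-th side (a closed segment) of the closed polygonal curve with
vertices `v 0, v 1, …, v (n-1)` in cyclic order. -/
def side {n : ℕ} [NeZero n] (v : Fin n → Plane) (i : Fin n) : Set Plane :=
  segment ℝ (v i) (v (i + 1))

/-- `S` is a simple polygon with vertex cycle `v`: it is the closed region
bounded by the closed non-self-intersecting polygonal curve through
`v 0, v 1, …, v (n-1)`. Non-self-intersection is expressed by requiring that
two distinct sides meet only in their common endpoints. The set `S` is the
bounded closed region enclosed by the curve: it is compact, it is the closure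
of its interior, and its frontier is exactly the polygonal curve. -/
structure IsSimplePolygon {n : ℕ} [NeZero n] (S : Set Plane) (v : Fin n → Plane) : Prop where
  three_le : 3 ≤ n
  inj : Function.Injective v
  simple : ∀ i j : Fin n, i ≠ j →
    side v i ∩ side v j ⊆ ({v i, v (i + 1)} ∩ {v j, v (j + 1)} : Set Plane)
  compact : IsCompact S
  regular : S = closure (interior S)
  frontier_eq : frontier S = ⋃ i, side v i

/-! ### The tree of words and its planar embedding -/

/-- The fraction in base `m + 2` whose digits are `aₖ + 1` for the word `a₁a₂…`. Its order is the
lexicographic one, with prefixes first. -/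
def xc {m : ℕ} : List (Fin m) → ℝ
  | [] => 0
  | a :: l => ((a : ℕ) + 1 + xc l) / (m + 2)

/-- The analogue of `xc` with the alphabet reversed: the digits are `m - aₖ`. -/
def yc {m : ℕ} : List (Fin m) → ℝ
  | [] => 0
  | a :: l => ((m : ℝ) - (a : ℕ) + yc l) / (m + 2)

lemma xc_mem {m : ℕ} (l : List (Fin m)) : 0 ≤ xc l ∧ xc l < 1 := by
  induction l with
  | nil => simp [xc]
  | cons a l ih =>
    have ha : ((a : ℕ) : ℝ) + 1 ≤ m := by exact_mod_cast a.2
    have ha0 : (0 : ℝ) ≤ ((a : ℕ) : ℝ) := by positivity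
    have hM : (0 : ℝ) < (m : ℝ) + 2 := by positivity
    constructor
    · exact div_nonneg (by linarith [ih.1]) hM.le
    · rw [xc, div_lt_one hM]
      linarith [ih.2]

lemma yc_mem {m : ℕ} (l : List (Fin m)) : 0 ≤ yc l ∧ yc l < 1 := by
  induction l with
  | nil => simp [yc]
  | cons a l ih =>
    have ha : ((a : ℕ) : ℝ) + 1 ≤ m := by exact_mod_cast a.2
    have ha0 : (0 : ℝ) ≤ ((a : ℕ) : ℝ) := by positivity
    have hM : (0 : ℝ) < (m : ℝ) + 2 := by positivity
    constructor
    · exact div_nonneg (by linarith [ih.1]) hM.le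
    · rw [yc, div_lt_one hM]
      linarith [ih.2]

/-- At the first difference of two words, neither a prefix of the other, `xc` and `yc` order them
oppositely; so the prefix order is the intersection of the two linear orders. -/
lemma prefix_iff {m : ℕ} (u l : List (Fin m)) :
    u <+: l ↔ xc u ≤ xc l ∧ yc u ≤ yc l := by
  have hM : (0 : ℝ) < (m : ℝ) + 2 := by positivity
  induction u generalizing l with
  | nil => simp [xc, yc, (xc_mem l).1, (yc_mem l).1]
  | cons a u ih =>
    cases l with
    | nil =>
      have h : 0 < xc (a :: u) :=
        div_pos (by have := (xc_mem u).1; positivity) hM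
      simpa [xc.eq_1] using fun h' => absurd h' (not_le.2 h)
    | cons b l =>
      have ih' : u <+: l ↔ xc u ≤ xc l ∧ yc u ≤ yc l := ih l
      rw [List.cons_prefix_cons, ih', xc, xc, yc, yc, div_le_div_iff_of_pos_right hM,
        div_le_div_iff_of_pos_right hM]
      constructor
      · rintro ⟨rfl, h1, h2⟩
        exact ⟨by linarith, by linarith⟩
      · rintro ⟨h1, h2⟩
        -- Fractional parts lie in `[0, 1)`, so the leading digits are comparable both ways.
        have hab : (a : ℕ) < (b : ℕ) + 1 := by
          have : ((a : ℕ) : ℝ) < (b : ℕ) + 1 := by linarith [(xc_mem u).1, (xc_mem l).2]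
          exact_mod_cast this
        have hba : (b : ℕ) < (a : ℕ) + 1 := by
          have : ((b : ℕ) : ℝ) < (a : ℕ) + 1 := by linarith [(yc_mem u).1, (yc_mem l).2]
          exact_mod_cast this
        obtain rfl : a = b := Fin.ext (by omega)
        exact ⟨rfl, by linarith, by linarith⟩

/-- Membership in the copy of scale `s` that takes the point `v` to `u`. -/
lemma mem_homCopy_iff_s1 {S : Set Plane} {s : ℝ} (hs : 0 < s) (v u x : Plane) :
    x ∈ homCopy s (u - s • v) S ↔ v + s⁻¹ • (x - u) ∈ S := by
  constructor
  · rintro ⟨z, hz, rfl⟩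
    have : v + s⁻¹ • ((fun x => s • x + (u - s • v)) z - u) = z := by
      have h : (fun x => s • x + (u - s • v)) z - u = s • (z - v) := by
        simp only [smul_sub]; abel
      rw [h, inv_smul_smul₀ hs.ne']; abel
    rwa [this]
  · intro h
    refine ⟨_, h, ?_⟩
    simp only [smul_add, smul_inv_smul₀ hs.ne']
    abel

/-- If every word of length `< m` has a child in the colour class `c`, a branch can be followed
staying in `c`. The child `g ++ [a]` is coloured through the pair `(g, a)`. -/
lemma exists_path {m : ℕ} (c : List (Fin m) → Fin m → Prop)
    (h : ∀ g : List (Fin m), g.length < m → ∃ a, c g a) (k : ℕ) (hk : k ≤ m) :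
    ∃ l : List (Fin m), l.length = k ∧ ∀ g a, g ++ [a] <+: l → c g a := by
  induction k with
  | zero => exact ⟨[], rfl, fun g a hga => by simp at hga⟩
  | succ k ih =>
    obtain ⟨l, hl, hc⟩ := ih (by omega)
    obtain ⟨a, ha⟩ := h l (by omega)
    refine ⟨l ++ [a], by simp [hl], fun g b hgb => ?_⟩
    rw [List.prefix_concat_iff] at hgb
    rcases hgb with hgb | hgb
    · obtain ⟨rfl, hab⟩ := List.append_inj' hgb rfl
      simp at hab
      exact hab ▸ ha
    · exact hc g b hgb

/-! ### The indecomposable covering -/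

/-- Let `S` agree near `v` with the cone `v + {A ≥ 0, B ≥ 0}` and have an interior point `v + q`
outside this cone. The copies indexed by `(g, a)` have scale `sc g` and send `v` to the tiny vector
`u (g ++ [a])`. A point `u l` is contained in the copies of the nonempty prefixes of `l` and in no
other ones, a point `sc g • q` in the copies of the children of `g` only. -/
theorem indecomposable_of_local_cone (S : Set Plane) (v d₁ d₂ q : Plane) (A B : Plane →ₗ[ℝ] ℝ)
    (hA₁ : A d₁ = 1) (hA₂ : A d₂ = 0) (hB₁ : B d₁ = 0) (hB₂ : B d₂ = 1)
    {r : ℝ} (hr : 0 < r) (hloc : ∀ w, ‖w‖ < r → (v + w ∈ S ↔ 0 ≤ A w ∧ 0 ≤ B w))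
    {ρ : ℝ} (hρ : 0 < ρ) (hq : ∀ w, ‖w‖ < ρ → v + (q + w) ∈ S) (hqW : ¬ (0 ≤ A q ∧ 0 ≤ B q))
    {R : ℝ} (hR : ∀ w, v + w ∈ S → ‖w‖ ≤ R) (m : ℕ) :
    ∃ (I : Type) (ε : I → ℝ) (p : I → Plane),
      (∀ i, 0 < ε i) ∧
      MFoldCover m (fun i => homCopy (ε i) (p i) S) Set.univ ∧
      ¬ DecomposableIntoTwoCoverings (fun i => homCopy (ε i) (p i) S) := by
  have hvS : v ∈ S := by simpa using (hloc 0 (by simpa using hr)).2 (by simp)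
  have hR0 : 0 ≤ R := by simpa using hR 0 (by simpa using hvS)
  have hq0 : 0 < ‖q‖ := by
    rw [norm_pos_iff]; rintro rfl; simp at hqW
  -- `δ` bounds the displacements `u l` of the corner.
  obtain ⟨δ, hδ, hδr, hδρ, hδ1⟩ : ∃ δ : ℝ, 0 < δ ∧ δ * (‖d₁‖ + ‖d₂‖) < r / 4 ∧
      δ * (‖d₁‖ + ‖d₂‖) < ρ ∧ δ * (‖d₁‖ + ‖d₂‖) < 1 := by
    set D := ‖d₁‖ + ‖d₂‖ with hD
    have hD0 : 0 ≤ D := by positivity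
    have hμ : 0 < min (r / 4) (min ρ 1) := by positivity
    have key : min (r / 4) (min ρ 1) / (D + 1) * D < min (r / 4) (min ρ 1) := by
      rw [div_mul_eq_mul_div, div_lt_iff₀ (by positivity)]
      nlinarith
    refine ⟨min (r / 4) (min ρ 1) / (D + 1), by positivity, ?_, ?_, ?_⟩
    · exact key.trans_le (min_le_left _ _)
    · exact key.trans_le ((min_le_right _ _).trans (min_le_left _ _))
    · exact key.trans_le ((min_le_right _ _).trans (min_le_right _ _))
  -- `Λ` is the ratio of consecutive scales: `Λ q` is out of reach of `S`, and `q / Λ` is so short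
  -- that only the cone at `v` matters.
  obtain ⟨Λ, hΛ1, hΛR, hΛr⟩ : ∃ Λ : ℝ, 1 ≤ Λ ∧ R + 1 < Λ * ‖q‖ ∧ ‖q‖ < Λ * (r / 4) := by
    refine ⟨max 1 (max ((R + 2) / ‖q‖) ((‖q‖ + 1) / (r / 4))), le_max_left _ _, ?_, ?_⟩
    · have : (R + 2) / ‖q‖ ≤ max 1 (max ((R + 2) / ‖q‖) ((‖q‖ + 1) / (r / 4))) :=
        (le_max_left _ _).trans (le_max_right _ _)
      rw [div_le_iff₀ hq0] at this
      linarith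
    · have : (‖q‖ + 1) / (r / 4) ≤ max 1 (max ((R + 2) / ‖q‖) ((‖q‖ + 1) / (r / 4))) :=
        (le_max_right _ _).trans (le_max_right _ _)
      rw [div_le_iff₀ (by positivity)] at this
      linarith
  have hΛ0 : 0 < Λ := by linarith
  let u : List (Fin m) → Plane := fun l => (δ * xc l) • d₁ + (δ * yc l) • d₂
  let sc : List (Fin m) → ℝ := fun g => Λ ^ (Encodable.encode g)
  have hsc1 : ∀ g, 1 ≤ sc g := fun g => one_le_pow₀ hΛ1
  have hsc0 : ∀ g, 0 < sc g := fun g => by linarith [hsc1 g]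
  have hAu : ∀ l, A (u l) = δ * xc l := fun l => by simp [u, hA₁, hA₂]
  have hBu : ∀ l, B (u l) = δ * yc l := fun l => by simp [u, hB₁, hB₂]
  have hu : ∀ l, ‖u l‖ ≤ δ * (‖d₁‖ + ‖d₂‖) := fun l => by
    refine (norm_add_le _ _).trans ?_
    rw [norm_smul, norm_smul, Real.norm_of_nonneg (mul_nonneg hδ.le (xc_mem l).1),
      Real.norm_of_nonneg (mul_nonneg hδ.le (yc_mem l).1), mul_add]
    gcongr
    · exact mul_le_of_le_one_right hδ.le (xc_mem l).2.le
    · exact mul_le_of_le_one_right hδ.le (yc_mem l).2.le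
  -- the copy attached to the word `g ++ [a]`
  let cp : List (Fin m) → Fin m → Set Plane := fun g a =>
    homCopy (sc g) (u (g ++ [a]) - sc g • v) S
  have hleaf : ∀ l g a, u l ∈ cp g a ↔ g ++ [a] <+: l := by
    intro l g a
    have hinv : 0 < (sc g)⁻¹ := inv_pos.2 (hsc0 g)
    have hnorm : ‖(sc g)⁻¹ • (u l - u (g ++ [a]))‖ < r := by
      rw [norm_smul, Real.norm_of_nonneg hinv.le]
      calc (sc g)⁻¹ * ‖u l - u (g ++ [a])‖ ≤ 1 * ‖u l - u (g ++ [a])‖ := by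
            gcongr; exact inv_le_one_of_one_le₀ (hsc1 g)
        _ ≤ ‖u l‖ + ‖u (g ++ [a])‖ := by rw [one_mul]; exact norm_sub_le _ _
        _ < r := by linarith [hu l, hu (g ++ [a])]
    rw [mem_homCopy_iff_s1 (hsc0 g), hloc _ hnorm, prefix_iff, map_smul, map_smul, map_sub, map_sub,
      hAu, hAu, hBu, hBu, smul_eq_mul, smul_eq_mul, mul_nonneg_iff_of_pos_left hinv,
      mul_nonneg_iff_of_pos_left hinv, sub_nonneg, sub_nonneg, mul_le_mul_iff_right₀ hδ,
      mul_le_mul_iff_right₀ hδ]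
  have hgroup : ∀ g' g a, sc g' • q ∈ cp g a ↔ g = g' := by
    intro g' g a
    have hinv : 0 < (sc g)⁻¹ := inv_pos.2 (hsc0 g)
    have hinv1 : (sc g)⁻¹ ≤ 1 := inv_le_one_of_one_le₀ (hsc1 g)
    have hu' : ‖(sc g)⁻¹ • u (g ++ [a])‖ ≤ δ * (‖d₁‖ + ‖d₂‖) := by
      rw [norm_smul, Real.norm_of_nonneg hinv.le]
      exact (mul_le_of_le_one_left (norm_nonneg _) hinv1).trans (hu _)
    have hqn : ‖(sc g)⁻¹ • sc g' • q‖ = (sc g)⁻¹ * (sc g' * ‖q‖) := by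
      rw [norm_smul, norm_smul, Real.norm_of_nonneg hinv.le, Real.norm_of_nonneg (hsc0 g').le]
    rw [mem_homCopy_iff_s1 (hsc0 g)]
    constructor
    · intro hmem
      by_contra hne
      have hne' : Encodable.encode g ≠ Encodable.encode g' :=
        fun h => hne (Encodable.encode_injective h)
      rcases lt_or_gt_of_ne hne' with hlt | hlt
      -- The copy is much smaller than `sc g'`: the point is too far away.
      · have h1 := hR _ hmem
        have h2 : Λ * sc g ≤ sc g' := by
          simp only [sc]; rw [← pow_succ']; exact pow_le_pow_right₀ hΛ1 hlt
        have h3 : Λ * ‖q‖ ≤ (sc g)⁻¹ * (sc g' * ‖q‖) := by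
          rw [← mul_assoc]
          gcongr
          rw [inv_mul_eq_div, le_div_iff₀ (hsc0 g)]; exact h2
        rw [smul_sub] at h1
        have h4 := norm_sub_norm_le ((sc g)⁻¹ • sc g' • q) ((sc g)⁻¹ • u (g ++ [a]))
        rw [hqn] at h4
        linarith
      -- The copy is much larger: it looks like the cone, which does not contain `q`.
      · have h2 : Λ * sc g' ≤ sc g := by
          simp only [sc]; rw [← pow_succ']; exact pow_le_pow_right₀ hΛ1 hlt
        have h3 : (sc g)⁻¹ * (sc g' * ‖q‖) < r / 4 := by
          rw [inv_mul_lt_iff₀ (hsc0 g)]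
          calc sc g' * ‖q‖ < sc g' * (Λ * (r / 4)) := by
                gcongr
            _ = Λ * sc g' * (r / 4) := by ring
            _ ≤ sc g * (r / 4) := by gcongr
        have h4 := norm_sub_le ((sc g)⁻¹ • sc g' • q) ((sc g)⁻¹ • u (g ++ [a]))
        rw [hqn] at h4
        have h5 := (hloc _ (by rw [smul_sub]; linarith)).1 hmem
        rw [map_smul, map_smul, map_sub, map_sub, hAu, hBu, map_smul, map_smul, smul_eq_mul,
          smul_eq_mul, smul_eq_mul, smul_eq_mul, mul_nonneg_iff_of_pos_left hinv,
          mul_nonneg_iff_of_pos_left hinv] at h5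
        have h6 := mul_nonneg hδ.le (xc_mem (g ++ [a])).1
        have h7 := mul_nonneg hδ.le (yc_mem (g ++ [a])).1
        exact hqW ⟨nonneg_of_mul_nonneg_right (by linarith [h5.1]) (hsc0 g'),
          nonneg_of_mul_nonneg_right (by linarith [h5.2]) (hsc0 g')⟩
    · rintro rfl
      rw [smul_sub, inv_smul_smul₀ (hsc0 g).ne', sub_eq_add_neg]
      exact hq _ (by rw [norm_neg]; linarith)
  -- the finitely many points whose coverage matters; all others are covered by small copies
  -- that avoid `P`
  let P : Set Plane := u '' {l | l.length = m} ∪ (fun g => sc g • q) '' {g | g.length < m}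
  have hP : IsClosed P :=
    (((List.finite_length_eq (Fin m) m).image _).union
      ((List.finite_length_lt (Fin m) m).image _)).isClosed
  have hfill : ∀ x : {x // x ∉ P}, ∃ ε : ℝ, 0 < ε ∧
      Disjoint (homCopy ε (x.1 - ε • v) S) P ∧ x.1 ∈ homCopy ε (x.1 - ε • v) S := by
    rintro ⟨x, hx⟩
    obtain ⟨η, hη, hball⟩ := Metric.isOpen_iff.1 hP.isOpen_compl x hx
    have hε : 0 < η / (R + 1) := by positivity
    refine ⟨η / (R + 1), hε, ?_, ?_⟩
    · rw [Set.disjoint_left]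
      intro y hy
      rw [mem_homCopy_iff_s1 hε] at hy
      have := hR _ hy
      rw [norm_smul, Real.norm_of_nonneg (inv_pos.2 hε).le, inv_mul_le_iff₀ hε] at this
      refine hball ?_
      rw [mem_ball_iff_norm]
      refine this.trans_lt ?_
      rw [div_mul_eq_mul_div, div_lt_iff₀ (by positivity)]
      nlinarith
    · rw [mem_homCopy_iff_s1 hε]; simpa using hvS
  choose e he0 hedisj hemem using hfill
  let I := (List (Fin m) × Fin m) ⊕ ({x // x ∉ P} × Fin m)
  let ε : I → ℝ := Sum.elim (fun i => sc i.1) (fun i => e i.1)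
  let p : I → Plane := Sum.elim (fun i => u (i.1 ++ [i.2]) - sc i.1 • v)
    (fun i => i.1.1 - e i.1 • v)
  refine ⟨I, ε, p, ?_, ?_, ?_⟩
  · rintro (i | i)
    · exact hsc0 _
    · exact he0 _
  · intro x _
    have key : ∀ f : Fin m → I, Function.Injective f →
        (∀ k, x ∈ homCopy (ε (f k)) (p (f k)) S) →
        ∃ t : Finset I, m ≤ t.card ∧ ∀ i ∈ t, x ∈ homCopy (ε i) (p i) S := by
      intro f hf hx
      refine ⟨Finset.univ.map ⟨f, hf⟩, by simp, fun i hi => ?_⟩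
      obtain ⟨k, -, rfl⟩ := Finset.mem_map.1 hi
      exact hx k
    by_cases hx : x ∈ P
    · rcases hx with ⟨l, hl, rfl⟩ | ⟨g, hg, rfl⟩
      · have hl : l.length = m := hl
        refine key (fun k => Sum.inl (l.take k, l[(k : ℕ)]'(by rw [hl]; exact k.2))) ?_ ?_
        · intro k k' hkk
          have h := congrArg List.length (Prod.ext_iff.1 (Sum.inl_injective hkk)).1
          simp only [List.length_take, hl] at h
          exact Fin.ext (by omega)
        · intro k
          refine (hleaf l _ _).2 ?_
          rw [List.take_concat_get']
          exact List.take_prefix _ _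
      · exact key (fun k => Sum.inl (g, k)) (fun k k' h => (Prod.ext_iff.1 (Sum.inl_injective h)).2)
          fun k => (hgroup g g k).2 rfl
    · exact key (fun k => Sum.inr (⟨x, hx⟩, k))
        (fun k k' h => (Prod.ext_iff.1 (Sum.inr_injective h)).2)
        fun k => hemem ⟨x, hx⟩
  · rintro ⟨I₁, h₁, h₂⟩
    obtain ⟨l, hl, hc⟩ := exists_path (fun g a => (Sum.inl (g, a) : I) ∈ I₁) (fun g hg => by
      obtain ⟨(⟨g', a⟩ | i), hi, hmem⟩ := h₁ (sc g • q)
      · obtain rfl : g' = g := (hgroup g g' a).1 hmem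
        exact ⟨a, hi⟩
      · exact absurd (Or.inr ⟨g, hg, rfl⟩) (Set.disjoint_left.1 (hedisj i.1) hmem)) m le_rfl
    obtain ⟨(⟨g, a⟩ | i), hi, hmem⟩ := h₂ (u l)
    · exact hi (hc g a ((hleaf l g a).1 hmem))
    · exact Set.disjoint_left.1 (hedisj i.1) hmem (Or.inl ⟨l, hl, rfl⟩)

/-! ### Shape of a polygon near a vertex -/

/-- Two non-parallel vectors form a basis of the plane; `A`, `B` are its coordinate functionals. -/
lemma exists_dual_pair {d₁ d₂ : Plane} (h2 : d₂ ≠ 0) (h : ∀ c : ℝ, d₁ ≠ c • d₂) :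
    ∃ A B : Plane →ₗ[ℝ] ℝ, A d₁ = 1 ∧ A d₂ = 0 ∧ B d₁ = 0 ∧ B d₂ = 1 ∧
      ∀ w, w = A w • d₁ + B w • d₂ := by
  have hli : LinearIndependent ℝ ![d₁, d₂] := by
    rw [LinearIndependent.pair_symm_iff, LinearIndependent.pair_iff' h2]
    exact fun a ha => h a ha.symm
  let b := basisOfLinearIndependentOfCardEqFinrank hli (by simp)
  have hb : ⇑b = ![d₁, d₂] := coe_basisOfLinearIndependentOfCardEqFinrank _ _
  have hb0 : d₁ = b 0 := by simp [hb]
  have hb1 : d₂ = b 1 := by simp [hb]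
  refine ⟨b.coord 0, b.coord 1, ?_, ?_, ?_, ?_, fun w => ?_⟩
  · simp [hb0]
  · simp [hb1]
  · simp [hb0]
  · simp [hb1]
  · have := b.sum_repr w
    rw [Fin.sum_univ_two] at this
    rw [hb0, hb1]
    exact this.symm

/-- A connected set that misses the frontier of `S` and meets `S` lies in `S`. -/
lemma subset_of_disjoint_frontier {S C : Set Plane} (hC : IsPreconnected C)
    (hd : ∀ x ∈ C, x ∉ frontier S) {y : Plane} (hy : y ∈ C) (hyS : y ∈ S) : C ⊆ S := by
  intro x hx
  by_contra hxS
  have hsplit : ∀ z ∈ C, z ∈ interior S ∨ z ∈ (closure S)ᶜ := fun z hz => by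
    by_contra! hcon
    exact hd z hz ⟨not_not.1 hcon.2, hcon.1⟩
  have hy' : y ∈ interior S := (hsplit y hy).resolve_right fun h => h (subset_closure hyS)
  have hx' : x ∈ (closure S)ᶜ := (hsplit x hx).resolve_left fun h => hxS (interior_subset h)
  obtain ⟨z, -, hz, hz'⟩ := hC _ _ isOpen_interior isClosed_closure.isOpen_compl hsplit
    ⟨y, hy, hy'⟩ ⟨x, hx, hx'⟩
  exact hz' (subset_closure (interior_subset hz))

/-- Let the frontier of `S` near `v` lie on the rays from `v` spanned by `d₁` and `d₂`. Then near `v`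
the set `S` either equals the convex cone spanned by `d₁, d₂`, or contains everything outside it
(reflex corner): both the open cone and the complement of the closed cone are connected near `v`. -/
lemma local_dichotomy {S : Set Plane} (hreg : S = closure (interior S)) {v d₁ d₂ : Plane}
    {A B : Plane →ₗ[ℝ] ℝ}
    (hA₁ : A d₁ = 1) (hA₂ : A d₂ = 0) (hB₁ : B d₁ = 0) (hB₂ : B d₂ = 1)
    (hvS : v ∈ S) {r : ℝ} (hr : 0 < r)
    (hfr : ∀ w, ‖w‖ < r → v + w ∈ frontier S → (0 ≤ A w ∧ B w = 0) ∨ (A w = 0 ∧ 0 ≤ B w)) :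
    (∀ w, ‖w‖ < r → (v + w ∈ S ↔ 0 ≤ A w ∧ 0 ≤ B w)) ∨
      (∀ w, ‖w‖ < r → ¬ (0 ≤ A w ∧ 0 ≤ B w) → v + w ∈ S) := by
  have hcl : IsClosed S := by rw [hreg]; exact isClosed_closure
  have hAc : Continuous A := A.continuous_of_finiteDimensional
  have hBc : Continuous B := B.continuous_of_finiteDimensional
  have hmem : ∀ x, x ∈ Metric.ball v r ↔ ‖x - v‖ < r := fun x => mem_ball_iff_norm
  have hfr' : ∀ x ∈ Metric.ball v r, x ∈ frontier S →
      (0 ≤ A (x - v) ∧ B (x - v) = 0) ∨ (A (x - v) = 0 ∧ 0 ≤ B (x - v)) := fun x hx hxf =>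
    hfr _ ((hmem x).1 hx) (by rwa [add_sub_cancel])
  -- `d₁ + d₂` points into the cone: a shift along it raises both coordinates.
  have hA' : ∀ w (t : ℝ), A (w + t • (d₁ + d₂)) = A w + t := fun w t => by simp [hA₁, hA₂]
  have hB' : ∀ w (t : ℝ), B (w + t • (d₁ + d₂)) = B w + t := fun w t => by simp [hB₁, hB₂]
  have htend : ∀ x : Plane, Filter.Tendsto (fun t : ℝ => x + t • (d₁ + d₂))
      (nhdsWithin 0 (Set.Ioi 0)) (nhds x) := fun x => by
    have : Continuous fun t : ℝ => x + t • (d₁ + d₂) := by fun_prop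
    simpa using (this.tendsto 0).mono_left nhdsWithin_le_nhds
  by_cases hout : ∃ w, ‖w‖ < r ∧ ¬ (0 ≤ A w ∧ 0 ≤ B w) ∧ v + w ∈ S
  · right
    obtain ⟨w₀, hw₀, hw₀W, hw₀S⟩ := hout
    have hcA : IsPreconnected (Metric.ball v r ∩ {x | A (x - v) < 0}) := by
      apply Convex.isPreconnected
      refine (convex_ball v r).inter ?_
      have := (convex_halfSpace_lt (𝕜 := ℝ) A.isLinear (A v))
      simpa [map_sub, sub_neg] using this
    have hcB : IsPreconnected (Metric.ball v r ∩ {x | B (x - v) < 0}) := by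
      apply Convex.isPreconnected
      refine (convex_ball v r).inter ?_
      have := (convex_halfSpace_lt (𝕜 := ℝ) B.isLinear (B v))
      simpa [map_sub, sub_neg] using this
    obtain ⟨t, ht, htr⟩ : ∃ t : ℝ, t < 0 ∧ ‖t • (d₁ + d₂)‖ < r := by
      have h1 : Continuous fun t : ℝ => ‖t • (d₁ + d₂)‖ := by fun_prop
      have h2 := (h1.tendsto 0).mono_left (nhdsWithin_le_nhds (s := Set.Iio 0))
      simp only [zero_smul, norm_zero] at h2
      obtain ⟨t, h3, h4⟩ := ((h2.eventually_lt_const hr).and self_mem_nhdsWithin).exists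
      exact ⟨t, h4, h3⟩
    have hmeet : (Metric.ball v r ∩ {x | A (x - v) < 0} ∩
        (Metric.ball v r ∩ {x | B (x - v) < 0})).Nonempty :=
      ⟨v + t • (d₁ + d₂), ⟨(hmem _).2 (by simpa using htr), by simp [hA₁, hA₂, ht]⟩,
        ⟨(hmem _).2 (by simpa using htr), by simp [hB₁, hB₂, ht]⟩⟩
    have hC := IsPreconnected.union' hmeet hcA hcB
    rw [← Set.inter_union_distrib_left] at hC
    have hsub := subset_of_disjoint_frontier (S := S) hC (fun x hx hxf => by
      rcases hfr' x hx.1 hxf with h | h <;> rcases hx.2 with h' | h' <;>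
        simp only [Set.mem_ofPred_eq] at h' <;> linarith [h.1, h.2]) (y := v + w₀)
      ⟨(hmem _).2 (by simpa using hw₀), by
        simp only [Set.mem_union, Set.mem_ofPred_eq, add_sub_cancel_left]
        by_contra! hcon; exact hw₀W hcon⟩ hw₀S
    intro w hw hwW
    refine hsub ⟨(hmem _).2 (by simpa using hw), ?_⟩
    simp only [Set.mem_union, Set.mem_ofPred_eq, add_sub_cancel_left]
    by_contra! hcon
    exact hwW hcon
  · left
    push Not at hout
    have hin : ∀ w, ‖w‖ < r → v + w ∈ S → 0 ≤ A w ∧ 0 ≤ B w := fun w hw hwS => by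
      by_contra hcon
      exact hout w hw (fun h => not_le.1 fun h' => hcon ⟨h, h'⟩) hwS
    have hcW : IsPreconnected
        (Metric.ball v r ∩ ({x | 0 < A (x - v)} ∩ {x | 0 < B (x - v)})) := by
      apply Convex.isPreconnected
      refine (convex_ball v r).inter (Convex.inter ?_ ?_)
      · have := (convex_halfSpace_gt (𝕜 := ℝ) A.isLinear (A v))
        simpa [map_sub, sub_pos] using this
      · have := (convex_halfSpace_gt (𝕜 := ℝ) B.isLinear (B v))
        simpa [map_sub, sub_pos] using this
    -- An interior point of `S` in the ball, pushed slightly along `d₁ + d₂`, lands in the open cone.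
    obtain ⟨y, hyb, hyi⟩ : ∃ y ∈ Metric.ball v r, y ∈ interior S := by
      have : v ∈ closure (interior S) := hreg ▸ hvS
      exact mem_closure_iff.1 this _ Metric.isOpen_ball (Metric.mem_ball_self hr)
    obtain ⟨t, ⟨h1, h2⟩, ht⟩ := (((htend y).eventually
      ((Metric.isOpen_ball.inter isOpen_interior).mem_nhds ⟨hyb, hyi⟩)).and
        self_mem_nhdsWithin).exists
    have hsub := subset_of_disjoint_frontier (S := S) hcW (fun x hx hxf => by
      have h3 : 0 < A (x - v) := hx.2.1
      have h4 : 0 < B (x - v) := hx.2.2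
      rcases hfr' x hx.1 hxf with h | h <;> linarith [h.1, h.2])
      (y := y + t • (d₁ + d₂)) (by
        have h5 := hin (y - v) ((hmem y).1 hyb) (by
          rw [add_sub_cancel]; exact interior_subset hyi)
        have h6 : y + t • (d₁ + d₂) - v = (y - v) + t • (d₁ + d₂) := by abel
        have ht' : 0 < t := ht
        refine ⟨h1, ?_, ?_⟩
        · simp only [Set.mem_ofPred_eq]; rw [h6, hA']; linarith [h5.1]
        · simp only [Set.mem_ofPred_eq]; rw [h6, hB']; linarith [h5.2])
      (interior_subset h2)
    intro w hw
    refine ⟨hin w hw, fun hW => ?_⟩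
    refine hcl.mem_of_tendsto (htend (v + w)) ?_
    filter_upwards [(htend (v + w)).eventually
      (Metric.isOpen_ball.mem_nhds ((hmem _).2 (by simpa using hw))), self_mem_nhdsWithin]
      with t h1 ht
    have h6 : v + w + t • (d₁ + d₂) - v = w + t • (d₁ + d₂) := by abel
    have ht' : 0 < t := ht
    refine hsub ⟨h1, ?_, ?_⟩
    · simp only [Set.mem_ofPred_eq]; rw [h6, hA']; linarith [hW.1]
    · simp only [Set.mem_ofPred_eq]; rw [h6, hB']; linarith [hW.2]

/-- Near `v`, the set `S` coincides with the cone `v + {A ≥ 0, B ≥ 0}`. -/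
def LocalCone (S : Set Plane) (v : Plane) (A B : Plane →ₗ[ℝ] ℝ) : Prop :=
  ∃ r : ℝ, 0 < r ∧ ∀ w, ‖w‖ < r → (v + w ∈ S ↔ 0 ≤ A w ∧ 0 ≤ B w)

lemma exists_max_norm_vertex {n : ℕ} [NeZero n] {S : Set Plane} {v : Fin n → Plane}
    (hpoly : IsSimplePolygon S v) : ∃ i, ∀ x ∈ S, ‖x‖ ≤ ‖v i‖ := by
  have hcl := hpoly.compact.isClosed
  have hfS : frontier S ⊆ S := hcl.frontier_subset
  have hvS : ∀ i, v i ∈ S := fun i => hfS (by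
    rw [hpoly.frontier_eq]; exact Set.mem_iUnion.2 ⟨i, left_mem_segment ℝ _ _⟩)
  obtain ⟨x, hxS, hx⟩ := hpoly.compact.exists_isMaxOn ⟨v 0, hvS 0⟩ continuous_norm.continuousOn
  have hx' : ∀ y ∈ S, ‖y‖ ≤ ‖x‖ := hx
  have hxf : x ∈ frontier S := by
    rw [hcl.frontier_eq]
    refine ⟨hxS, fun hxi => ?_⟩
    -- An interior point can be moved within `S` to a point of larger norm.
    obtain ⟨η, hη, hb⟩ := Metric.isOpen_iff.1 isOpen_interior x hxi
    by_cases hx0 : x = 0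
    · subst hx0
      obtain ⟨w, hw⟩ := exists_ne (0 : Plane)
      have hw0 := norm_pos_iff.2 hw
      have h1 := hx' ((η / 2 / ‖w‖) • w) (interior_subset (hb (by
        rw [mem_ball_zero_iff, norm_smul, Real.norm_of_nonneg (by positivity),
          div_mul_cancel₀ _ hw0.ne']; linarith)))
      rw [norm_smul, norm_zero, Real.norm_of_nonneg (by positivity),
          div_mul_cancel₀ _ hw0.ne'] at h1
      linarith
    · have hx0 := norm_pos_iff.2 hx0
      have h1 := hx' ((1 + η / 2 / ‖x‖) • x) (interior_subset (hb (by
        rw [mem_ball_iff_norm, add_smul, one_smul, add_sub_cancel_left, norm_smul,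
          Real.norm_of_nonneg (by positivity), div_mul_cancel₀ _ hx0.ne']; linarith)))
      rw [norm_smul, Real.norm_of_nonneg (by positivity), add_mul,
          div_mul_cancel₀ _ hx0.ne'] at h1
      linarith
  rw [hpoly.frontier_eq] at hxf
  obtain ⟨i, hi⟩ := Set.mem_iUnion.1 hxf
  have := (convexOn_univ_norm (E := Plane)).le_on_segment (Set.mem_univ _) (Set.mem_univ _) hi
  rcases le_max_iff.1 this with h | h
  · exact ⟨i, fun y hy => (hx' y hy).trans h⟩
  · exact ⟨i + 1, fun y hy => (hx' y hy).trans h⟩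

/-! ### Finding the corner -/

theorem statement1 {n : ℕ} [NeZero n] (S : Set Plane) (v : Fin n → Plane)
    (hpoly : IsSimplePolygon S v)
    (hconcave : ¬ Convex ℝ S)
    (hnopar : ∀ i j : Fin n, i ≠ j → ∀ c : ℝ, v (i + 1) - v i ≠ c • (v (j + 1) - v j))
    (m : ℕ) (hm : 1 ≤ m) :
    ∃ (I : Type) (ε : I → ℝ) (p : I → Plane),
      (∀ i, 0 < ε i) ∧
      MFoldCover m (fun i => homCopy (ε i) (p i) S) Set.univ ∧
      ¬ DecomposableIntoTwoCoverings (fun i => homCopy (ε i) (p i) S) := by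
  have hcl := hpoly.compact.isClosed
  have hvS : ∀ i, v i ∈ S := fun i => hcl.frontier_subset (by
    rw [hpoly.frontier_eq]; exact Set.mem_iUnion.2 ⟨i, left_mem_segment ℝ _ _⟩)
  have hpred : ∀ i : Fin n, i - 1 + 1 = i := fun i => sub_add_cancel i 1
  have hpne : ∀ i : Fin n, i ≠ i - 1 := fun i h => by
    have h1 : (1 : Fin n) = 0 := by simpa using h.symm
    have h2 := congrArg Fin.val h1
    have h3 := hpoly.three_le
    rw [Fin.val_one', Nat.mod_eq_of_lt (by omega)] at h2
    simp at h2
  have hdual : ∀ i, ∃ A B : Plane →ₗ[ℝ] ℝ, A (v (i + 1) - v i) = 1 ∧ A (v (i - 1) - v i) = 0 ∧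
      B (v (i + 1) - v i) = 0 ∧ B (v (i - 1) - v i) = 1 ∧
      ∀ w, w = A w • (v (i + 1) - v i) + B w • (v (i - 1) - v i) := fun i => by
    refine exists_dual_pair (fun h => ?_) (fun c h => ?_)
    · refine hnopar (i - 1) i (hpne i).symm 0 ?_
      rw [hpred, zero_smul, ← neg_sub, h, neg_zero]
    · refine hnopar i (i - 1) (hpne i) (-c) ?_
      rw [hpred, h, ← neg_sub (v i), smul_neg, neg_smul]
  choose A B hA₁ hA₂ hB₁ hB₂ hAB using hdual
  -- Near the vertex `v i` the frontier consists of the two adjacent sides only.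
  have hloc : ∀ i, ∃ r : ℝ, 0 < r ∧
      ((∀ w, ‖w‖ < r → (v i + w ∈ S ↔ 0 ≤ A i w ∧ 0 ≤ B i w)) ∨
        (∀ w, ‖w‖ < r → ¬ (0 ≤ A i w ∧ 0 ≤ B i w) → v i + w ∈ S)) := fun i => by
    have hK : IsClosed (⋃ j ∈ {j | j ≠ i ∧ j ≠ i - 1}, side v j) :=
      (Set.toFinite _).isClosed_biUnion fun j _ => by
        unfold side
        rw [← convexHull_pair]
        exact (Set.toFinite _).isCompact_convexHull ℝ |>.isClosed
    have hiK : v i ∉ ⋃ j ∈ {j | j ≠ i ∧ j ≠ i - 1}, side v j := fun h => by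
      obtain ⟨j, ⟨hj, hj'⟩, hij⟩ := Set.mem_iUnion₂.1 h
      have := (hpoly.simple i j hj.symm ⟨left_mem_segment ℝ _ _, hij⟩).2
      rcases this with h | h
      · exact hj (hpoly.inj h).symm
      · exact hj' (eq_sub_of_add_eq (hpoly.inj h).symm)
    obtain ⟨r, hr, hball⟩ := Metric.isOpen_iff.1 hK.isOpen_compl _ hiK
    refine ⟨r, hr, local_dichotomy hpoly.regular (hA₁ i) (hA₂ i) (hB₁ i) (hB₂ i) (hvS i) hr ?_⟩
    intro w hw hwf
    rw [hpoly.frontier_eq] at hwf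
    obtain ⟨j, hj⟩ := Set.mem_iUnion.1 hwf
    by_cases hji : j = i
    · subst hji
      unfold side at hj
      rw [segment_eq_image'] at hj
      obtain ⟨t, ht, htw⟩ := hj
      obtain rfl : t • (v (j + 1) - v j) = w := add_left_cancel htw
      left
      simp [-map_sub, hA₁, hB₁, ht.1]
    by_cases hji' : j = i - 1
    · subst hji'
      unfold side at hj
      rw [segment_symm, hpred, segment_eq_image'] at hj
      obtain ⟨t, ht, htw⟩ := hj
      obtain rfl : t • (v (i - 1) - v i) = w := add_left_cancel htw
      right
      simp [-map_sub, hA₂, hB₂, ht.1]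
    · exact absurd (Set.mem_iUnion₂.2 ⟨j, ⟨hji, hji'⟩, hj⟩)
        (hball (mem_ball_iff_norm.2 (by simpa using hw)))
  -- A convex vertex whose cone does not contain `S` gives the covering; otherwise `S` is convex.
  by_cases hex : ∃ i, LocalCone S (v i) (A i) (B i) ∧
      ∃ x ∈ S, ¬ (0 ≤ A i (x - v i) ∧ 0 ≤ B i (x - v i))
  · obtain ⟨i, ⟨r, hr, hcone⟩, x, hxS, hx⟩ := hex
    have hAc : Continuous (A i) := (A i).continuous_of_finiteDimensional
    have hBc : Continuous (B i) := (B i).continuous_of_finiteDimensional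
    have hopen : IsOpen {y | ¬ (0 ≤ A i (y - v i) ∧ 0 ≤ B i (y - v i))} :=
      isOpen_compl_iff.2
        ((isClosed_le continuous_const (hAc.comp (continuous_id.sub continuous_const))).inter
          (isClosed_le continuous_const (hBc.comp (continuous_id.sub continuous_const))))
    have hx' : x ∈ closure (interior S) := hpoly.regular ▸ hxS
    obtain ⟨y, hyW, hyi⟩ := mem_closure_iff.1 hx' _ hopen hx
    obtain ⟨ρ, hρ, hball⟩ := Metric.isOpen_iff.1 isOpen_interior y hyi
    obtain ⟨R, hR⟩ := hpoly.compact.isBounded.exists_norm_le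
    refine indecomposable_of_local_cone S (v i) _ _ (y - v i) (A i) (B i) (hA₁ i) (hA₂ i)
      (hB₁ i) (hB₂ i) hr hcone hρ (fun w hw => ?_) hyW (R := R + ‖v i‖) (fun w hw => ?_) m
    · refine interior_subset (hball (mem_ball_iff_norm.2 ?_))
      rwa [show v i + (y - v i + w) - y = w by abel]
    · have h1 := hR _ hw
      have h2 := norm_sub_le (v i + w) (v i)
      rw [add_sub_cancel_left] at h2
      linarith
  · exfalso
    apply hconcave
    have hsub : ∀ i, LocalCone S (v i) (A i) (B i) →
        ∀ x ∈ S, 0 ≤ A i (x - v i) ∧ 0 ≤ B i (x - v i) := fun i hi x hx => by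
      by_contra hcon
      exact hex ⟨i, hi, x, hx, hcon⟩
    have hsmall : ∀ (w : Plane) {r : ℝ}, 0 < r → ∃ t : ℝ, 0 < t ∧ ‖t • w‖ < r := by
      intro w r hr
      have h1 : Continuous fun t : ℝ => ‖t • w‖ := by fun_prop
      have h2 := (h1.tendsto 0).mono_left (nhdsWithin_le_nhds (s := Set.Ioi 0))
      simp only [zero_smul, norm_zero] at h2
      obtain ⟨t, h3, h4⟩ := ((h2.eventually_lt_const hr).and self_mem_nhdsWithin).exists
      exact ⟨t, h4, h3⟩
    -- The vertex of largest norm is convex: at a reflex one, `S` would contain a point `v i + w` with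
    -- `w` perpendicular to `v i`.
    obtain ⟨i₀, hi₀⟩ : ∃ i, LocalCone S (v i) (A i) (B i) := by
      obtain ⟨i, hi⟩ := exists_max_norm_vertex hpoly
      refine ⟨i, ?_⟩
      obtain ⟨r, hr, h | h⟩ := hloc i
      · exact ⟨r, hr, h⟩
      exfalso
      obtain ⟨w, hw0, hwW, hwv⟩ : ∃ w : Plane, w ≠ 0 ∧ ¬ (0 ≤ A i w ∧ 0 ≤ B i w) ∧
          0 ≤ inner ℝ (v i) w := by
        have : ∃ w : Plane, w ≠ 0 ∧ inner ℝ (v i) w = 0 := by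
          by_cases h0 : v i = 0
          · obtain ⟨w, hw⟩ := exists_ne (0 : Plane)
            exact ⟨w, hw, by simp [h0]⟩
          · refine ⟨!₂[-(v i 1), v i 0], fun h => h0 ?_, ?_⟩
            · have e0 := congrArg (fun z : Plane => z 0) h
              have e1 := congrArg (fun z : Plane => z 1) h
              simp at e0 e1
              ext k; fin_cases k <;> simp [e0, e1]
            · simp [PiLp.inner_apply, Fin.sum_univ_two]; ring
        obtain ⟨w, hw0, hw⟩ := this
        by_cases hW : 0 ≤ A i w ∧ 0 ≤ B i w
        · refine ⟨-w, neg_ne_zero.2 hw0, fun hW' => hw0 ?_, by simp [hw]⟩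
          rw [map_neg, map_neg] at hW'
          rw [hAB i w, le_antisymm (by linarith [hW'.1]) hW.1,
            le_antisymm (by linarith [hW'.2]) hW.2]
          simp
        · exact ⟨w, hw0, hW, hw.ge⟩
      obtain ⟨t, ht, htr⟩ := hsmall w hr
      have h1 := hi _ (h (t • w) htr fun hcon => hwW (by
        rw [map_smul, map_smul, smul_eq_mul, smul_eq_mul, mul_nonneg_iff_of_pos_left ht,
          mul_nonneg_iff_of_pos_left ht] at hcon
        exact hcon))
      have h2 := norm_add_sq_real (v i) (t • w)
      rw [inner_smul_right] at h2
      have h3 : 0 < ‖t • w‖ := norm_pos_iff.2 (smul_ne_zero ht.ne' hw0)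
      have h4 := mul_nonneg ht.le hwv
      nlinarith [norm_nonneg (v i), norm_nonneg (v i + t • w)]
    -- Convexity passes to the next vertex: a reflex corner there would put points of `S` beyond the
    -- line through the side `i`.
    have hstep : ∀ i, LocalCone S (v i) (A i) (B i) →
        LocalCone S (v (i + 1)) (A (i + 1)) (B (i + 1)) := by
      intro i hi
      obtain ⟨r, hr, h | h⟩ := hloc (i + 1)
      · exact ⟨r, hr, h⟩
      exfalso
      have e : i + 1 - 1 = i := add_sub_cancel_right i 1
      have hA₁' := hA₁ (i + 1)
      have hB₁' := hB₁ (i + 1)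
      have hA₂' := hA₂ (i + 1)
      have hB₂' := hB₂ (i + 1)
      have hBd := hB₁ i
      rw [e] at hA₂' hB₂'
      set d := v (i + 1) - v i with hd
      have hd' : v i - v (i + 1) = -d := by rw [hd]; abel
      rw [hd', map_neg] at hA₂' hB₂'
      set d' := v (i + 1 + 1) - v (i + 1)
      -- A direction out of the half-plane `B i ≥ 0` and out of the cone at `v (i + 1)`.
      obtain ⟨w, hwB, hwW⟩ : ∃ w, B i w < 0 ∧ ¬ (0 ≤ A (i + 1) w ∧ 0 ≤ B (i + 1) w) := by
        rcases lt_trichotomy (B i d') 0 with hlt | heq | hgt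
        · exact ⟨d' + d, by rw [map_add, hBd]; linarith, fun hcon => by
            rw [map_add (B (i + 1))] at hcon; linarith [hcon.2]⟩
        · exfalso
          have h1 := hAB i d'
          rw [heq, zero_smul, add_zero] at h1
          exact hnopar (i + 1) i (fun h => hpne (i + 1) (by rw [e]; exact h)) _ h1
        · exact ⟨-d', by rw [map_neg]; linarith, fun hcon => by
            rw [map_neg] at hcon; linarith [hcon.1]⟩
      obtain ⟨t, ht, htr⟩ := hsmall w hr
      have h1 := (hsub i hi _ (h (t • w) htr fun hcon => hwW (by
        rw [map_smul, map_smul, smul_eq_mul, smul_eq_mul, mul_nonneg_iff_of_pos_left ht,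
          mul_nonneg_iff_of_pos_left ht] at hcon
        exact hcon))).2
      rw [show v (i + 1) + t • w - v i = d + t • w by rw [hd]; abel, map_add, hBd, map_smul,
        smul_eq_mul, zero_add, mul_nonneg_iff_of_pos_left ht] at h1
      linarith
    have hall : ∀ i, ∀ x ∈ S, 0 ≤ A i (x - v i) ∧ 0 ≤ B i (x - v i) := by
      have key : ∀ k : ℕ, LocalCone S
          (v (i₀ + Fin.ofNat n k)) (A (i₀ + Fin.ofNat n k)) (B (i₀ + Fin.ofNat n k)) := by
        intro k
        induction k with
        | zero => simpa using hi₀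
        | succ k ih =>
          have e : i₀ + Fin.ofNat n (k + 1) = i₀ + Fin.ofNat n k + 1 := by
            rw [add_assoc]
            congr 1
            ext
            simp [Fin.val_add]
          rw [e]
          exact hstep _ ih
      intro i
      refine hsub i ?_
      have := key (i - i₀ : Fin n).val
      rwa [show i₀ + Fin.ofNat n (i - i₀ : Fin n).val = i by
        rw [Fin.ofNat_val_eq_self]; abel] at this
    -- All side lines support `S`, so `S` is an intersection of half-planes: a segment from an interior
    -- point to a point of the intersection can only leave `S` through a side, where some `B i`
    -- vanishes.
    have hS : S = ⋂ i, {x | 0 ≤ B i (x - v i)} := by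
      refine Set.Subset.antisymm (fun x hx => Set.mem_iInter.2 fun i => (hall i x hx).2) ?_
      intro x hx
      rw [Set.mem_iInter] at hx
      by_contra hxS
      obtain ⟨s, hs⟩ : (interior S).Nonempty := by
        rw [← closure_nonempty_iff, ← hpoly.regular]; exact ⟨_, hvS 0⟩
      have hpos : ∀ i, 0 < B i (s - v i) := fun i => by
        obtain ⟨η, hη, hball⟩ := Metric.isOpen_iff.1 isOpen_interior s hs
        obtain ⟨t, ht, htr⟩ := hsmall (-(v (i - 1) - v i)) hη
        have h1 := (hall i _ (interior_subset (hball (mem_ball_iff_norm.2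
          (by rwa [add_sub_cancel_left] : ‖s + t • (-(v (i - 1) - v i)) - s‖ < η))))).2
        rw [add_sub_right_comm, map_add, map_smul, map_neg, hB₂, smul_eq_mul] at h1
        linarith
      refine hxS (subset_of_disjoint_frontier (convex_segment s x).isPreconnected ?_
        (left_mem_segment ℝ s x) (interior_subset hs) (right_mem_segment ℝ s x))
      intro y hy hyf
      have hyS := hcl.frontier_subset hyf
      rw [hpoly.frontier_eq] at hyf
      obtain ⟨i, hi⟩ := Set.mem_iUnion.1 hyf
      unfold side at hi
      rw [segment_eq_image'] at hi hy
      obtain ⟨t, -, rfl⟩ := hi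
      obtain ⟨t', ht', hty⟩ := hy
      have h0 : B i (v i + t • (v (i + 1) - v i) - v i) = 0 := by
        rw [add_sub_cancel_left, map_smul, hB₁, smul_zero]
      simp only at hty
      rw [← hty, show s + t' • (x - s) - v i = (1 - t') • (s - v i) + t' • (x - v i) by
        module, map_add, map_smul, map_smul, smul_eq_mul, smul_eq_mul] at h0
      have hxi : 0 ≤ B i (x - v i) := hx i
      have h1 : t' ≠ 1 := by
        rintro rfl
        rw [one_smul, add_sub_cancel] at hty
        exact hxS (hty ▸ hyS)
      have h2 : t' < 1 := lt_of_le_of_ne ht'.2 h1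
      have h3 := mul_pos (sub_pos.2 h2) (hpos i)
      have h4 := mul_nonneg ht'.1 hxi
      linarith
    rw [hS]
    refine convex_iInter fun i => ?_
    have := convex_halfSpace_ge (𝕜 := ℝ) (B i).isLinear (B i (v i))
    simpa [map_sub, sub_nonneg] using this
end
end

section
/- Let S be a convex polygon in the plane with at least four sides, let ε > 0, and let m ≥ 1 be an integer. Then there exists an indexed family of positive homothetic copies of S, each with scaling factor lying between 1 − ε and 1 + ε, that forms an m-fold covering of the plane ℝ² and that cannot be decomposed into two coverings. -/
/-!
The family is built on the infinite binary tree. Its nodes are finite words `p : List Bool`, and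
infinite words `f : ℕ → Bool` are its branches; a branch through `p` turns right at `p` if its next
letter is `true` and left if it is `false`. Suppose that each node `p` carries a copy of `S`, each
branch `f` carries two points `x f` and `y f`, and the copy of `p` contains `x f` exactly when `f`
passes through `p` and turns right there, and `y f` exactly when `f` passes through `p` and turns
left there. Given a set `J` of copies, descend the tree turning right at the nodes in `J` and left
at the others. For the resulting branch `f`, every node copy containing `x f` is in `J`, and
no node copy containing `y f` is. Take as special points those `x f` with infinitely many right
turns and those `y f` with infinitely many left turns: each lies in infinitely many node copies,
and for each `J` one of `x f`, `y f` is special and is not covered by both `J` and its complement.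
It remains to cover each nonspecial point `m` times by copies avoiding all the special points.

For the node copies, choose a vertex `v` of `S` and a vertex `q` not adjacent to it, which exists
as there are at least four vertices, and affine coordinates in which `v` is the origin, the angle
at `v` is the first quadrant and `q = (1, 1)` (`Corner`, `exists_frame_corner`). Branches are read
as points `s` of the ternary Cantor set. The points `x f` are put on a short segment through `v`,
the points `y f` on a short segment through `q`, both parametrised by `s`. A copy with corner near
`v` cuts an interval of parameters out of each segment, its four endpoints being governed by the
four sides at `v` and `q`. A copy has three degrees of freedom, so the four endpoints obey one
linear relation; the slopes of the segments are such that the intervals `[l + 5n/12, l + n]` and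
`[l, l + 7n/12]` fulfil it, where `[l, l + n]` is the Cantor interval of the node. These
intervals contain exactly the Cantor points of the right and of the left third, respectively
(`mem_nodeCopy_one`, `mem_nodeCopy_two`, `cantor_right`, `cantor_left`).

For the remaining copies (`Corner.exists_copy_avoiding`), let `y` be a nonspecial point. If a line
has all special points strictly on one side and `y` on the other or on the line itself, a translate
of `S` works. Near a cluster, a copy with ratio `1 - ε` having its vertex `v` (or `q`) at `y`
meets the line of that cluster at most in `y` and is too small to reach the other cluster. The
points that are left form a compact set, and it suffices to avoid `v` and `q` themselves, by a
margin that compactness makes uniform. This is easy off the line `v q`; for a point between `v` and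
`q`, use that some chord of `S` parallel to `v q`, extreme in its direction, is shorter than
`v q` (`exists_translate_avoiding_diag`).
-/

/-!
STATEMENT 2: Let S be a convex polygon with at least four sides, let ε > 0,
and let m ≥ 1. Then there is an indexed family of positive homothetic copies
of S, each with scaling factor between 1 − ε and 1 + ε, forming an m-fold
covering of ℝ² that cannot be decomposed into two coverings.
-/

noncomputable section

/-! ### The binary tree and the ternary Cantor set -/

/-- Left endpoint of the ternary Cantor interval of the node `p`; the head of the list is the most
significant ternary digit, `true` standing for `2` and `false` for `0`. -/
def cantorLeft : List Bool → ℝ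
  | [] => 0
  | b :: p => (cantorLeft p + (if b then 2 else 0)) / 3

/-- Length `3⁻ᵏ` of the ternary Cantor interval of a node of depth `k`. -/
def cantorLen : List Bool → ℝ
  | [] => 1
  | _ :: p => cantorLen p / 3

/-- The point of the Cantor set whose ternary digits are given by the branch `f`. -/
def cantorPt (f : ℕ → Bool) : ℝ := ∑' n, (if f n then 2 else 0) * (1 / 3 : ℝ) ^ (n + 1)

theorem cantorPt_summable (f : ℕ → Bool) :
    Summable (fun n => (if f n then 2 else 0) * (1 / 3 : ℝ) ^ (n + 1)) := by
  have h : Summable (fun n : ℕ => 2 * (1 / 3 : ℝ) ^ (n + 1)) := by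
    have := (summable_geometric_of_lt_one (r := (1 / 3 : ℝ)) (by norm_num) (by norm_num))
    exact ((summable_nat_add_iff 1).2 this).mul_left 2
  refine Summable.of_nonneg_of_le (fun n => ?_) (fun n => ?_) h
  · split_ifs <;> positivity
  · gcongr; split_ifs <;> norm_num

theorem cantorPt_nonneg (f : ℕ → Bool) : 0 ≤ cantorPt f :=
  tsum_nonneg fun n => by split_ifs <;> positivity

theorem cantorPt_le_one (f : ℕ → Bool) : cantorPt f ≤ 1 := by
  have h0 := (hasSum_geometric_of_lt_one (r := (1 / 3 : ℝ)) (by norm_num) (by norm_num)).mul_left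
    (2 / 3)
  have h1 : (2 / 3 : ℝ) * (1 - 1 / 3)⁻¹ = 1 := by norm_num
  rw [← h1]
  refine hasSum_le (fun n => ?_) (cantorPt_summable f).hasSum h0
  rw [pow_succ]
  have : (0 : ℝ) < (1 / 3) ^ n := by positivity
  split_ifs <;> linarith

theorem cantorPt_eq (f : ℕ → Bool) :
    cantorPt f = (cantorPt (fun n => f (n + 1)) + (if f 0 then 2 else 0)) / 3 := by
  unfold cantorPt
  rw [(cantorPt_summable f).tsum_eq_zero_add]
  have : ∀ n, (if f (n + 1) then 2 else 0) * (1 / 3 : ℝ) ^ (n + 1 + 1)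
      = ((if f (n + 1) then 2 else 0) * (1 / 3 : ℝ) ^ (n + 1)) * (1 / 3) := fun n => by ring
  simp_rw [this, tsum_mul_right]
  ring

theorem cantorLen_pos (p : List Bool) : 0 < cantorLen p := by
  induction p with
  | nil => simp [cantorLen]
  | cons b p ih => simp only [cantorLen]; positivity

theorem cantorLeft_bounds (p : List Bool) : 0 ≤ cantorLeft p ∧ cantorLeft p + cantorLen p ≤ 1 := by
  induction p with
  | nil => simp [cantorLeft, cantorLen]
  | cons b p ih =>
    have := cantorLen_pos p
    obtain ⟨h1, h2⟩ := ih
    cases b <;> simp only [cantorLeft, cantorLen] <;> norm_num <;> constructor <;> linarith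

/-- The branch `f` passes through the node `p`: the word `p` is a prefix of `f`. -/
def Passes (f : ℕ → Bool) (p : List Bool) : Prop := p = (List.range p.length).map f

theorem passes_cons (f : ℕ → Bool) (b : Bool) (p : List Bool) :
    Passes f (b :: p) ↔ b = f 0 ∧ Passes (fun n => f (n + 1)) p := by
  simp only [Passes, List.length_cons, List.range_succ_eq_map, List.map_cons, List.cons.injEq,
    List.map_map]
  rfl

/-- Since the middle third contains no Cantor point, the part of a Cantor interval to the right of
`5/12` holds the Cantor points of its right third only. -/
theorem cantor_right (p : List Bool) : ∀ f : ℕ → Bool,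
    (cantorLeft p + 5 / 12 * cantorLen p ≤ cantorPt f ∧ cantorPt f ≤ cantorLeft p + cantorLen p) ↔
      (Passes f p ∧ f p.length = true) := by
  induction p with
  | nil =>
    intro f
    have h1 := cantorPt_nonneg (fun n => f (n + 1))
    have h2 := cantorPt_le_one (fun n => f (n + 1))
    rw [cantorPt_eq]
    cases h : f 0 <;> simp [cantorLeft, cantorLen, Passes] <;> (try constructor) <;>
      (try intro) <;> linarith
  | cons b p ih =>
    intro f
    have h1 := cantorPt_nonneg (fun n => f (n + 1))
    have h2 := cantorPt_le_one (fun n => f (n + 1))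
    have h3 := cantorLen_pos p
    obtain ⟨h4, h5⟩ := cantorLeft_bounds p
    have key := ih (fun n => f (n + 1))
    rw [cantorPt_eq, passes_cons, List.length_cons]
    simp only [cantorLeft, cantorLen]
    by_cases hb : b = f 0
    · rw [← hb] at *
      simp only [true_and]
      rw [← key]
      constructor <;> rintro ⟨h, h'⟩ <;> constructor <;> linarith
    · simp only [hb, false_and, iff_false, not_and, not_le]
      intro h
      cases b <;> cases hf : f 0 <;> simp_all <;> linarith

/-- Mirror image of `cantor_right`. -/
theorem cantor_left (p : List Bool) : ∀ f : ℕ → Bool,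
    (cantorLeft p ≤ cantorPt f ∧ cantorPt f ≤ cantorLeft p + 7 / 12 * cantorLen p) ↔
      (Passes f p ∧ f p.length = false) := by
  induction p with
  | nil =>
    intro f
    have h1 := cantorPt_nonneg (fun n => f (n + 1))
    have h2 := cantorPt_le_one (fun n => f (n + 1))
    rw [cantorPt_eq]
    cases h : f 0 <;> simp [cantorLeft, cantorLen, Passes] <;> (try constructor) <;>
      (try intro) <;> linarith
  | cons b p ih =>
    intro f
    have h1 := cantorPt_nonneg (fun n => f (n + 1))
    have h2 := cantorPt_le_one (fun n => f (n + 1))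
    have h3 := cantorLen_pos p
    obtain ⟨h4, h5⟩ := cantorLeft_bounds p
    have key := ih (fun n => f (n + 1))
    rw [cantorPt_eq, passes_cons, List.length_cons]
    simp only [cantorLeft, cantorLen]
    by_cases hb : b = f 0
    · rw [← hb] at *
      simp only [true_and]
      rw [← key]
      constructor <;> rintro ⟨h, h'⟩ <;> constructor <;> linarith
    · simp only [hb, false_and, iff_false, not_and, not_le]
      intro h
      cases b <;> cases hf : f 0 <;> simp_all <;> linarith

/-! ### Translates avoiding the two corners -/

/-- If the chord of `T` in direction `(1, 1)` that is extreme for `σ * (y - x)` is shorter than the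
segment from `(0, 0)` to `(1, 1)`, then each point of the open segment lies in a translate of `T`
missing both endpoints: slide the extreme chord along the diagonal. -/
theorem exists_translate_avoiding_diag (T : Set (ℝ × ℝ)) (hconv : Convex ℝ T) (hcomp : IsCompact T)
    (hne : T.Nonempty) (σ : ℝ)
    (hslice : ∀ z ∈ T, (∀ w ∈ T, σ * (w.2 - w.1) ≤ σ * (z.2 - z.1)) → ∀ z' ∈ T,
      z'.2 - z'.1 = z.2 - z.1 → z'.1 - z.1 < 1)
    (x : ℝ) (hx0 : 0 < x) (hx1 : x < 1) :
    ∃ d : ℝ × ℝ, (∃ z ∈ T, z + d = (x, x)) ∧ ∀ z ∈ T, z + d ≠ 0 ∧ z + d ≠ (1, 1) := by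
  obtain ⟨v, hv, hvmax⟩ := hcomp.exists_isMaxOn hne
    (f := fun z : ℝ × ℝ => σ * (z.2 - z.1)) (by fun_prop)
  replace hvmax : ∀ w ∈ T, σ * (w.2 - w.1) ≤ σ * (v.2 - v.1) := hvmax
  have hA : IsCompact (T ∩ {z | z.2 - z.1 = v.2 - v.1}) :=
    hcomp.inter_right (isClosed_eq (by fun_prop) (by fun_prop))
  have hAne : (T ∩ {z : ℝ × ℝ | z.2 - z.1 = v.2 - v.1}).Nonempty := ⟨v, hv, rfl⟩
  obtain ⟨a, ⟨ha, ha'⟩, hmin⟩ := hA.exists_isMinOn hAne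
    (f := fun z : ℝ × ℝ => z.1) (by fun_prop)
  obtain ⟨b, ⟨hb, hb'⟩, hmax⟩ := hA.exists_isMaxOn hAne
    (f := fun z : ℝ × ℝ => z.1) (by fun_prop)
  replace hmin : ∀ w ∈ T ∩ {z : ℝ × ℝ | z.2 - z.1 = v.2 - v.1}, a.1 ≤ w.1 := hmin
  replace hmax : ∀ w ∈ T ∩ {z : ℝ × ℝ | z.2 - z.1 = v.2 - v.1}, w.1 ≤ b.1 := hmax
  simp only [Set.mem_ofPred_eq] at ha' hb'
  have hlen : b.1 - a.1 < 1 := hslice a ha (by rw [ha']; exact hvmax) b hb (by rw [ha', hb'])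
  have hab : a.1 ≤ b.1 := hmin b ⟨hb, hb'⟩
  refine ⟨(x, x) - ((1 - x) • a + x • b), ⟨(1 - x) • a + x • b,
    hconv ha hb (by linarith) hx0.le (by ring), by abel⟩, fun z hz => ?_⟩
  have hlevel : ∀ y : ℝ, z + ((x, x) - ((1 - x) • a + x • b)) = (y, y) →
      a.1 ≤ z.1 ∧ z.1 ≤ b.1 ∧ z.1 + (x - ((1 - x) * a.1 + x * b.1)) = y := by
    intro y hy
    have h1 := congrArg Prod.fst hy
    have h2 := congrArg Prod.snd hy
    simp only [Prod.fst_add, Prod.snd_add, Prod.fst_sub, Prod.snd_sub, Prod.smul_fst,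
      Prod.smul_snd, smul_eq_mul] at h1 h2
    have hz' : z.2 - z.1 = v.2 - v.1 := by
      have e1 : a.2 = a.1 + (v.2 - v.1) := by linarith
      have e2 : b.2 = b.1 + (v.2 - v.1) := by linarith
      rw [e1, e2] at h2
      linarith
    exact ⟨hmin z ⟨hz, hz'⟩, hmax z ⟨hz, hz'⟩, h1⟩
  constructor
  · intro h
    obtain ⟨h1, h2, h3⟩ := hlevel 0 h
    nlinarith
  · intro h
    obtain ⟨h1, h2, h3⟩ := hlevel 1 h
    nlinarith

/-- A polygon `T` in coordinates adapted to two nonadjacent vertices `(0, 0)` and `(1, 1)`: near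
`(0, 0)` it is the first quadrant, and near `(1, 1)` it is the angle between the lines
`(1 - β) x + β y = 1` and `(1 - γ) x + γ y = 1`. -/
structure Corner (T : Set (ℝ × ℝ)) (β γ : ℝ) : Prop where
  conv : Convex ℝ T
  comp : IsCompact T
  lt : β < γ
  fst_nonneg : ∀ z ∈ T, 0 ≤ z.1
  snd_nonneg : ∀ z ∈ T, 0 ≤ z.2
  le_left : ∀ z ∈ T, (1 - β) * z.1 + β * z.2 ≤ 1
  le_right : ∀ z ∈ T, (1 - γ) * z.1 + γ * z.2 ≤ 1
  near_zero : ∃ ρ > 0, ∀ z : ℝ × ℝ, 0 ≤ z.1 → z.1 ≤ ρ → 0 ≤ z.2 → z.2 ≤ ρ → z ∈ T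
  near_one : ∃ ρ > 0, ∀ z : ℝ × ℝ,
    1 - ρ ≤ (1 - β) * z.1 + β * z.2 → (1 - β) * z.1 + β * z.2 ≤ 1 →
    1 - ρ ≤ (1 - γ) * z.1 + γ * z.2 → (1 - γ) * z.1 + γ * z.2 ≤ 1 → z ∈ T

namespace Corner

variable {T : Set (ℝ × ℝ)} {β γ : ℝ}

theorem zero_mem (h : Corner T β γ) : (0 : ℝ × ℝ) ∈ T := by
  obtain ⟨ρ, hρ, H⟩ := h.near_zero
  exact H 0 le_rfl hρ.le le_rfl hρ.le

theorem one_mem (h : Corner T β γ) : ((1, 1) : ℝ × ℝ) ∈ T := by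
  obtain ⟨ρ, hρ, H⟩ := h.near_one
  apply H <;> simp <;> linarith

/-- Every point, except for those of the diagonal outside the open segment from `(0, 0)` to
`(1, 1)`, lies in a translate of `T` missing `(0, 0)` and `(1, 1)`. -/
theorem exists_translate_avoiding (h : Corner T β γ) (y : ℝ × ℝ)
    (hy : y.2 = y.1 → 0 < y.1 ∧ y.1 < 1) :
    ∃ d : ℝ × ℝ, (∃ z ∈ T, z + d = y) ∧ ∀ z ∈ T, z + d ≠ 0 ∧ z + d ≠ (1, 1) := by
  have hne : T.Nonempty := ⟨0, h.zero_mem⟩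
  have side : ∀ σ : ℝ, 0 < σ * (y.2 - y.1) →
      ∃ d : ℝ × ℝ, (∃ z ∈ T, z + d = y) ∧ ∀ z ∈ T, z + d ≠ 0 ∧ z + d ≠ (1, 1) := by
    intro σ hσ
    obtain ⟨v, hv, hvmin⟩ := h.comp.exists_isMinOn hne
      (f := fun z : ℝ × ℝ => σ * (z.2 - z.1)) (by fun_prop)
    replace hvmin : ∀ w ∈ T, σ * (v.2 - v.1) ≤ σ * (w.2 - w.1) := hvmin
    refine ⟨y - v, ⟨v, hv, by abel⟩, fun z hz => ?_⟩
    have h1 := hvmin z hz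
    have h2 : 0 < σ * ((z + (y - v)).2 - (z + (y - v)).1) := by
      simp only [Prod.fst_add, Prod.snd_add, Prod.fst_sub, Prod.snd_sub]
      linarith
    constructor <;> intro h0 <;> rw [h0] at h2 <;> simp at h2
  rcases lt_trichotomy y.2 y.1 with hlt | heq | hgt
  · exact side (-1) (by linarith)
  · obtain ⟨h0, h1⟩ := hy heq
    have hyx : y = (y.1, y.1) := Prod.ext rfl heq
    rw [hyx]
    obtain ⟨ρ, hρ, H⟩ := h.near_zero
    -- `β < γ` gives `0 < γ` or `β < 1`; the former bounds the extreme chord on the side `x < y` of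
    -- the diagonal, the latter the one on the side `y < x`
    by_cases hγ : 0 < γ
    · refine exists_translate_avoiding_diag T h.conv h.comp hne 1 ?_ _ h0 h1
      intro z hz hmax z' hz' heq'
      have e1 := hmax (0, ρ) (H _ le_rfl hρ.le hρ.le le_rfl)
      have e2 := h.le_right z' hz'
      have e3 := h.fst_nonneg z hz
      simp only [one_mul, sub_zero] at e1
      have e4 : 0 < γ * (z.2 - z.1) := mul_pos hγ (by linarith)
      rw [← heq'] at e4
      linarith
    · refine exists_translate_avoiding_diag T h.conv h.comp hne (-1) ?_ _ h0 h1
      intro z hz hmax z' hz' heq'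
      have e1 := hmax (ρ, 0) (H _ hρ.le le_rfl le_rfl hρ.le)
      have e2 := h.le_left z' hz'
      have e3 := h.snd_nonneg z hz
      have e5 := h.lt
      simp only at e1
      have e4 : 0 < (1 - β) * (z.1 - z.2) := mul_pos (by linarith) (by linarith)
      have e6 : z.1 - z.2 = z'.1 - z'.2 := by linarith
      rw [e6] at e4
      linarith
  · exact side 1 (by linarith)

/-- A version of `exists_translate_avoiding` with a margin that is uniform on a compact set. -/
theorem exists_uniform (h : Corner T β γ) (K : Set (ℝ × ℝ)) (hK : IsCompact K)
    (hKd : ∀ y ∈ K, y.2 = y.1 → 0 < y.1 ∧ y.1 < 1) :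
    ∃ r > 0, ∀ y ∈ K, ∃ d : ℝ × ℝ, (∃ z ∈ T, z + d = y) ∧
      ∀ z ∈ T, r ≤ ‖z + d‖ ∧ r ≤ ‖z + d - (1, 1)‖ := by
  refine hK.induction_on (p := fun K => ∃ r > 0, ∀ y ∈ K, ∃ d : ℝ × ℝ, (∃ z ∈ T, z + d = y) ∧
      ∀ z ∈ T, r ≤ ‖z + d‖ ∧ r ≤ ‖z + d - (1, 1)‖) ⟨1, one_pos, by simp⟩ ?_ ?_ ?_
  · rintro s t hst ⟨r, hr, H⟩
    exact ⟨r, hr, fun y hy => H y (hst hy)⟩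
  · rintro s t ⟨r, hr, H⟩ ⟨r', hr', H'⟩
    refine ⟨min r r', lt_min hr hr', ?_⟩
    rintro y (hy | hy)
    · obtain ⟨d, h1, h2⟩ := H y hy
      exact ⟨d, h1, fun z hz => ⟨(min_le_left _ _).trans (h2 z hz).1,
        (min_le_left _ _).trans (h2 z hz).2⟩⟩
    · obtain ⟨d, h1, h2⟩ := H' y hy
      exact ⟨d, h1, fun z hz => ⟨(min_le_right _ _).trans (h2 z hz).1,
        (min_le_right _ _).trans (h2 z hz).2⟩⟩
  · intro y hy
    obtain ⟨d, ⟨z₀, hz₀, hzd⟩, hd⟩ := h.exists_translate_avoiding y (hKd y hy)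
    have hne : T.Nonempty := ⟨0, h.zero_mem⟩
    obtain ⟨a, ha, hamin⟩ := h.comp.exists_isMinOn hne (f := fun z => ‖z + d‖) (by fun_prop)
    obtain ⟨b, hb, hbmin⟩ := h.comp.exists_isMinOn hne
      (f := fun z => ‖z + d - (1, 1)‖) (by fun_prop)
    have ha0 : 0 < ‖a + d‖ := norm_pos_iff.2 (hd a ha).1
    have hb0 : 0 < ‖b + d - (1, 1)‖ := norm_pos_iff.2 (sub_ne_zero.2 (hd b hb).2)
    set r := min ‖a + d‖ ‖b + d - (1, 1)‖ with hr
    have hr0 : 0 < r := lt_min ha0 hb0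
    refine ⟨Metric.ball y (r / 2), mem_nhdsWithin_of_mem_nhds (Metric.ball_mem_nhds _ (by linarith)),
      r / 2, by linarith, fun y' hy' => ⟨d + (y' - y), ⟨z₀, hz₀, ?_⟩, fun z hz => ?_⟩⟩
    · rw [← hzd]; abel
    · have h1 : r ≤ ‖z + d‖ := (min_le_left _ _).trans (hamin hz)
      have h2 : r ≤ ‖z + d - (1, 1)‖ := (min_le_right _ _).trans (hbmin hz)
      rw [Metric.mem_ball, dist_eq_norm] at hy'
      have h3 : ‖z + d‖ ≤ ‖z + (d + (y' - y))‖ + ‖y' - y‖ := by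
        have := norm_sub_le (z + (d + (y' - y))) (y' - y)
        rwa [show z + (d + (y' - y)) - (y' - y) = z + d by abel] at this
      have h4 : ‖z + d - (1, 1)‖ ≤ ‖z + (d + (y' - y)) - (1, 1)‖ + ‖y' - y‖ := by
        have := norm_sub_le (z + (d + (y' - y)) - (1, 1)) (y' - y)
        rwa [show z + (d + (y' - y)) - (1, 1) - (y' - y) = z + d - (1, 1) by abel] at this
      constructor <;> linarith

/-- If `X₁` is close to `(0, 0)` on the line `x + 6 y = 0` and `X₂` is close to `(1, 1)` on the line
`7 x + (β + 6 γ) (y - x) = 7`, then every point outside `X₁ ∪ X₂` lies in a copy of `T` missing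
`X₁ ∪ X₂`. These lines meet `T` at the respective vertex only, because their functionals are the
combinations with weights `1` and `6` of the functionals of the two sides at that vertex. -/
theorem exists_copy_avoiding (h : Corner T β γ) {ε : ℝ} (hε : 0 < ε) (hε1 : ε < 1) :
    ∃ r > 0, ∀ X₁ X₂ : Set (ℝ × ℝ),
      (∀ z ∈ X₁, z.1 + 6 * z.2 = 0 ∧ ‖z‖ < r) →
      (∀ z ∈ X₂, 7 * z.1 + (β + 6 * γ) * (z.2 - z.1) = 7 ∧ ‖z - (1, 1)‖ < r) →
      ∀ y, y ∉ X₁ ∪ X₂ → ∃ (c : ℝ) (d : ℝ × ℝ), 0 < c ∧ 1 - ε ≤ c ∧ c ≤ 1 + ε ∧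
        (∃ z ∈ T, c • z + d = y) ∧ ∀ z ∈ T, c • z + d ∉ X₁ ∪ X₂ := by
  have hne : T.Nonempty := ⟨0, h.zero_mem⟩
  -- the intermediate region, compact and free of both distinguished corners on the diagonal
  set K : Set (ℝ × ℝ) := {y | |y.2 - y.1| ≤ 1 ∧ 0 ≤ y.1 + 6 * y.2 ∧ y.1 + 6 * y.2 ≤ 7 * (1 - ε) ∧
    7 * ε ≤ 7 * y.1 + (β + 6 * γ) * (y.2 - y.1)} with hKdef
  have hK : IsCompact K := by
    refine IsCompact.of_isClosed_subset (isCompact_closedBall (0 : ℝ × ℝ) 3) ?_ ?_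
    · rw [hKdef]
      refine (isClosed_le (f := fun y : ℝ × ℝ => |y.2 - y.1|) (g := fun _ => 1) (by fun_prop)
        (by fun_prop)).inter ?_
      refine (isClosed_le (f := fun _ => (0 : ℝ)) (g := fun y : ℝ × ℝ => y.1 + 6 * y.2)
        (by fun_prop) (by fun_prop)).inter ?_
      exact (isClosed_le (f := fun y : ℝ × ℝ => y.1 + 6 * y.2) (g := fun _ => 7 * (1 - ε))
        (by fun_prop) (by fun_prop)).inter (isClosed_le (f := fun _ => 7 * ε)
        (g := fun y : ℝ × ℝ => 7 * y.1 + (β + 6 * γ) * (y.2 - y.1)) (by fun_prop) (by fun_prop))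
    · rintro y ⟨h1, h2, h3, -⟩
      rw [abs_le] at h1
      rw [mem_closedBall_zero_iff, Prod.norm_def]
      refine max_le ?_ ?_ <;> rw [Real.norm_eq_abs, abs_le] <;> constructor <;> linarith
  obtain ⟨r, hr, H⟩ := h.exists_uniform K hK (by
    rintro y ⟨-, h2, h3, h4⟩ heq
    rw [heq, sub_self, mul_zero] at h4
    rw [heq] at h3
    constructor <;> linarith)
  have hB : 0 < 7 + 2 * |β + 6 * γ| := by positivity
  refine ⟨min r (min (1 / 2) (1 / (7 + 2 * |β + 6 * γ|))), by positivity, ?_⟩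
  intro X₁ X₂ hX₁ hX₂ y hy
  -- estimates for the points of the two clusters
  have b1 : ∀ z ∈ X₁, ‖z‖ < r ∧ |z.1| < 1 / 2 ∧ |z.2| < 1 / 2 ∧
      7 * z.1 + (β + 6 * γ) * (z.2 - z.1) < 7 := by
    intro z hz
    obtain ⟨-, h2⟩ := hX₁ z hz
    rw [lt_min_iff, lt_min_iff] at h2
    obtain ⟨h2, h3, h4⟩ := h2
    have f1 : |z.1| ≤ ‖z‖ := norm_fst_le z
    have f2 : |z.2| ≤ ‖z‖ := norm_snd_le z
    refine ⟨h2, by linarith, by linarith, ?_⟩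
    rw [lt_div_iff₀ hB] at h4
    have f3 : (β + 6 * γ) * (z.2 - z.1) ≤ |β + 6 * γ| * (2 * ‖z‖) := by
      refine (le_abs_self _).trans ?_
      rw [abs_mul]
      gcongr
      exact (abs_sub _ _).trans (by linarith)
    have f4 := le_abs_self z.1
    nlinarith [norm_nonneg z]
  have b2 : ∀ z ∈ X₂, ‖z - (1, 1)‖ < r ∧ |z.1 - 1| < 1 / 2 ∧ |z.2 - 1| < 1 / 2 := by
    intro z hz
    obtain ⟨-, h2⟩ := hX₂ z hz
    rw [lt_min_iff, lt_min_iff] at h2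
    obtain ⟨h2, h3, h4⟩ := h2
    have f1 : |z.1 - 1| ≤ ‖z - (1, 1)‖ := norm_fst_le (z - (1, 1))
    have f2 : |z.2 - 1| ≤ ‖z - (1, 1)‖ := norm_snd_le (z - (1, 1))
    exact ⟨h2, by linarith, by linarith⟩
  -- a translate lying in the half plane `f ≥ f y`
  have half : ∀ f : (ℝ × ℝ) →L[ℝ] ℝ, (∀ z ∈ X₁ ∪ X₂, f z < f y) →
      ∃ (c : ℝ) (d : ℝ × ℝ), 0 < c ∧ 1 - ε ≤ c ∧ c ≤ 1 + ε ∧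
        (∃ z ∈ T, c • z + d = y) ∧ ∀ z ∈ T, c • z + d ∉ X₁ ∪ X₂ := by
    intro f hf
    obtain ⟨v, hv, hvmin⟩ := h.comp.exists_isMinOn hne (f := f) (by fun_prop)
    refine ⟨1, y - v, one_pos, by linarith, by linarith, ⟨v, hv, by simp⟩, fun z hz hzX => ?_⟩
    have h1 := hf _ hzX
    have h2 : f v ≤ f z := hvmin hz
    simp only [one_smul, map_add, map_sub] at h1
    linarith
  let fx := ContinuousLinearMap.fst ℝ ℝ ℝ
  let fy := ContinuousLinearMap.snd ℝ ℝ ℝ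
  by_cases hA : y.1 + 6 * y.2 < 0
  · refine half (-(fx + (6 : ℝ) • fy)) ?_
    simp only [fx, fy, neg_apply, add_apply,
      smul_apply, ContinuousLinearMap.coe_fst', ContinuousLinearMap.coe_snd',
      smul_eq_mul]
    rintro z (hz | hz)
    · have := (hX₁ z hz).1
      linarith
    · obtain ⟨-, h1, h2⟩ := b2 z hz
      rw [abs_lt] at h1 h2
      linarith
  push Not at hA
  by_cases hB : 7 < 7 * y.1 + (β + 6 * γ) * (y.2 - y.1)
  · refine half ((7 : ℝ) • fx + (β + 6 * γ) • (fy - fx)) ?_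
    simp only [fx, fy, sub_apply, add_apply,
      smul_apply, ContinuousLinearMap.coe_fst', ContinuousLinearMap.coe_snd',
      smul_eq_mul]
    rintro z (hz | hz)
    · have := (b1 z hz).2.2.2
      linarith
    · have := (hX₂ z hz).1
      linarith
  push Not at hB
  -- `T` scaled by `1 - ε`, with vertex `(0, 0)` at `y`, falls short of the line of `X₂`
  by_cases hA₂ : 7 * y.1 + (β + 6 * γ) * (y.2 - y.1) < 7 * ε
  · refine ⟨1 - ε, y, by linarith, le_rfl, by linarith, ⟨0, h.zero_mem, by simp⟩, ?_⟩
    rintro z hz (hzX | hzX)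
    · have h1 := (hX₁ _ hzX).1
      have h2 := h.fst_nonneg z hz
      have h3 := h.snd_nonneg z hz
      simp only [Prod.fst_add, Prod.snd_add, Prod.smul_fst, Prod.smul_snd, smul_eq_mul] at h1
      have h4 : (1 - ε) * (z.1 + 6 * z.2) ≤ 0 := by linarith
      have h5 : z.1 + 6 * z.2 ≤ 0 := nonpos_of_mul_nonpos_right h4 (by linarith)
      have h6 : z = 0 := Prod.ext (by simp; linarith) (by simp; linarith)
      rw [h6, smul_zero, zero_add] at hzX
      exact hy (Or.inl hzX)
    · have h1 := (hX₂ _ hzX).1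
      have h2 := h.le_left z hz
      have h3 := h.le_right z hz
      simp only [Prod.fst_add, Prod.snd_add, Prod.smul_fst, Prod.smul_snd, smul_eq_mul] at h1
      nlinarith
  push Not at hA₂
  -- `T` scaled by `1 - ε`, with vertex `(1, 1)` at `y`, falls short of the line of `X₁`
  by_cases hB₂ : 7 * (1 - ε) < y.1 + 6 * y.2
  · refine ⟨1 - ε, y - (1 - ε) • (1, 1), by linarith, le_rfl, by linarith,
      ⟨(1, 1), h.one_mem, by abel⟩, ?_⟩
    rintro z hz (hzX | hzX)
    · have h1 := (hX₁ _ hzX).1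
      have h2 := h.fst_nonneg z hz
      have h3 := h.snd_nonneg z hz
      simp only [Prod.fst_add, Prod.snd_add, Prod.smul_fst, Prod.smul_snd, Prod.fst_sub,
        Prod.snd_sub, smul_eq_mul] at h1
      nlinarith
    · have h1 := (hX₂ _ hzX).1
      have h2 := h.le_left z hz
      have h3 := h.le_right z hz
      simp only [Prod.fst_add, Prod.snd_add, Prod.smul_fst, Prod.smul_snd, Prod.fst_sub,
        Prod.snd_sub, smul_eq_mul] at h1
      have h4 : (1 - ε) * (7 - (7 * z.1 + (β + 6 * γ) * (z.2 - z.1))) ≤ 0 := by linarith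
      have h5 := nonpos_of_mul_nonpos_right h4 (by linarith)
      have h6 : (1 - β) * z.1 + β * z.2 = 1 := by linarith
      have h7 : (1 - γ) * z.1 + γ * z.2 = 1 := by linarith
      have h8 : (γ - β) * (z.2 - z.1) = 0 := by linarith
      have h9 : z.2 - z.1 = 0 := by
        rcases mul_eq_zero.1 h8 with h | h'
        · exact absurd h (sub_pos.2 ‹Corner T β γ›.lt).ne'
        · exact h'
      have h10 : z.2 = z.1 := by linarith
      have h11 : z.1 = 1 := by rw [h10] at h6; linarith
      have h12 : z = (1, 1) := Prod.ext h11 (h10.trans h11)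
      rw [h12, add_sub_cancel] at hzX
      exact hy (Or.inr hzX)
  push Not at hB₂
  by_cases hu : |y.2 - y.1| ≤ 1
  · obtain ⟨d, ⟨z₀, hz₀, hzd⟩, hd⟩ := H y ⟨hu, hA, hB₂, hA₂⟩
    refine ⟨1, d, one_pos, by linarith, by linarith, ⟨z₀, hz₀, by simpa using hzd⟩, ?_⟩
    rintro z hz (hzX | hzX) <;> rw [one_smul] at hzX
    · exact absurd (b1 _ hzX).1 (not_lt.2 (hd z hz).1)
    · exact absurd (b2 _ hzX).1 (not_lt.2 (hd z hz).2)
  · have bu : ∀ z ∈ X₁ ∪ X₂, |z.2 - z.1| < 1 := by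
      rintro z (hz | hz)
      · obtain ⟨-, h1, h2, -⟩ := b1 z hz
        rw [abs_lt] at *
        constructor <;> linarith
      · obtain ⟨-, h1, h2⟩ := b2 z hz
        rw [abs_lt] at *
        constructor <;> linarith
    push Not at hu
    rcases lt_abs.1 hu with hu | hu
    · refine half (fy - fx) fun z hz => ?_
      have := (abs_lt.1 (bu z hz)).2
      simp only [fx, fy, sub_apply, ContinuousLinearMap.coe_fst',
        ContinuousLinearMap.coe_snd']
      linarith
    · refine half (fx - fy) fun z hz => ?_
      have := (abs_lt.1 (bu z hz)).1
      simp only [fx, fy, sub_apply, ContinuousLinearMap.coe_fst',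
        ContinuousLinearMap.coe_snd']
      linarith

end Corner

/-! ### The copies attached to the nodes -/

/-- The point with parameter `s` on the segment through `(0, 0)` on the line `x + 6 y = 0`; the
number `η` sets the size of the segment. -/
def ptOne (η s : ℝ) : ℝ × ℝ := (6 * η * s, -(η * s))

/-- The point with parameter `s` on the segment through `(1, 1)` on the line
`7 x + (β + 6 γ) (y - x) = 7`. -/
def ptTwo (β γ η s : ℝ) : ℝ × ℝ :=
  (1 + η * s * (6 * γ + β), 1 + η * s * (6 * γ + β - 7))

/-- Position of the vertex `(0, 0)` in the copy of the node with Cantor interval `[l, l + n]`: its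
angle there contains the points `ptOne η s` with `l + 5 / 12 * n ≤ s ≤ l + n`. -/
def nodeShift (η l n : ℝ) : ℝ × ℝ := (6 * η * (l + 5 / 12 * n), -(η * (l + n)))

/-- Ratio of the copy of the node with Cantor interval `[l, l + n]`, determined by the condition that
the side on `(1 - β) x + β y = 1` is moved to pass through `ptTwo β γ η (l + 7 / 12 * n)`. -/
def nodeScale (β γ η l n : ℝ) : ℝ :=
  1 + 6 * η * (γ - β) * (l + 7 / 12 * n)
    - ((1 - β) * (nodeShift η l n).1 + β * (nodeShift η l n).2)

theorem abs_nodeScale_sub_one_le (β γ : ℝ) {η l n : ℝ} (hη : 0 < η) (hl : 0 ≤ l) (hn : 0 < n)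
    (hln : l + n ≤ 1) :
    |nodeScale β γ η l n - 1| ≤ η * (100 * (1 + |β| + |γ|)) := by
  have e : nodeScale β γ η l n - 1 = η * (γ * (6 * (l + 7 / 12 * n)) +
      β * (l + n - n) - 6 * (l + 5 / 12 * n)) := by
    unfold nodeScale nodeShift
    ring
  rw [e, abs_mul, abs_of_pos hη]
  gcongr
  have h1 : |γ * (6 * (l + 7 / 12 * n))| ≤ |γ| * 6 := by
    rw [abs_mul]
    gcongr
    rw [abs_of_nonneg (by positivity)]
    linarith
  have h2 : |β * (l + n - n)| ≤ |β| * 1 := by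
    rw [abs_mul]
    gcongr
    rw [abs_le]
    constructor <;> linarith
  have h3 := abs_nonneg β
  have h4 := abs_nonneg γ
  rw [abs_le] at *
  constructor <;> linarith

namespace Corner

variable {T : Set (ℝ × ℝ)} {β γ : ℝ}

/-- The node copy meets the first segment in the parameters `[l + 5 / 12 * n, l + n]`. -/
theorem mem_nodeCopy_one (h : Corner T β γ) {ρ : ℝ}
    (hρ : ∀ z : ℝ × ℝ, 0 ≤ z.1 → z.1 ≤ ρ → 0 ≤ z.2 → z.2 ≤ ρ → z ∈ T)
    {η : ℝ} (hη : 0 < η) (hηρ : η * (100 * (1 + |β| + |γ|)) ≤ ρ)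
    {c l n s : ℝ} (hl : 0 ≤ l) (hln : l + n ≤ 1) (hs1 : s ≤ 1)
    (hc : 1 / 2 ≤ c) :
    (∃ z ∈ T, c • z + nodeShift η l n = ptOne η s) ↔ (l + 5 / 12 * n ≤ s ∧ s ≤ l + n) := by
  have hc0 : 0 < c := by linarith
  constructor
  · rintro ⟨z, hz, hzeq⟩
    have h1 := congrArg Prod.fst hzeq
    have h2 := congrArg Prod.snd hzeq
    simp only [nodeShift, ptOne, Prod.fst_add, Prod.snd_add, Prod.smul_fst, Prod.smul_snd,
      smul_eq_mul] at h1 h2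
    have h3 := mul_nonneg hc0.le (h.fst_nonneg z hz)
    have h4 := mul_nonneg hc0.le (h.snd_nonneg z hz)
    have h5 : 0 ≤ η * (s - (l + 5 / 12 * n)) := by linarith
    have h6 : 0 ≤ η * (l + n - s) := by linarith
    have h7 := nonneg_of_mul_nonneg_right h5 hη
    have h8 := nonneg_of_mul_nonneg_right h6 hη
    constructor <;> linarith
  · rintro ⟨h1, h2⟩
    have hB : η * 100 ≤ ρ := by
      refine le_trans ?_ hηρ
      gcongr
      linarith [abs_nonneg β, abs_nonneg γ]
    refine ⟨(6 * η * (s - (l + 5 / 12 * n)) / c, η * (l + n - s) / c), hρ _ ?_ ?_ ?_ ?_, ?_⟩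
    · exact div_nonneg (mul_nonneg (by linarith) (by linarith)) hc0.le
    · rw [div_le_iff₀ hc0]
      nlinarith
    · exact div_nonneg (mul_nonneg (by linarith) (by linarith)) hc0.le
    · rw [div_le_iff₀ hc0]
      nlinarith
    · ext
      · simp only [nodeShift, ptOne, Prod.fst_add, Prod.smul_fst, smul_eq_mul]
        field_simp
        ring
      · simp only [nodeShift, ptOne, Prod.snd_add, Prod.smul_snd, smul_eq_mul]
        field_simp
        ring

/-- The node copy meets the second segment in the parameters `[l, l + 7 / 12 * n]`. The ratio has been
chosen for the right end; the left end comes out as `l` because of the weight `6`, through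
`6 * (7 / 12 - 5 / 12) = 1`. -/
theorem mem_nodeCopy_two (h : Corner T β γ) {ρ : ℝ}
    (hρ : ∀ z : ℝ × ℝ,
      1 - ρ ≤ (1 - β) * z.1 + β * z.2 → (1 - β) * z.1 + β * z.2 ≤ 1 →
      1 - ρ ≤ (1 - γ) * z.1 + γ * z.2 → (1 - γ) * z.1 + γ * z.2 ≤ 1 → z ∈ T)
    {η : ℝ} (hη : 0 < η) (hηρ : η * (100 * (1 + |β| + |γ|)) ≤ ρ)
    {l n s : ℝ} (hl : 0 ≤ l) (hln : l + n ≤ 1) (hs0 : 0 ≤ s) (hs1 : s ≤ 1)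
    (hc : 1 / 2 ≤ nodeScale β γ η l n) :
    (∃ z ∈ T, nodeScale β γ η l n • z + nodeShift η l n = ptTwo β γ η s) ↔
      (l ≤ s ∧ s ≤ l + 7 / 12 * n) := by
  set c := nodeScale β γ η l n with hcdef
  have hc0 : 0 < c := by linarith
  have hκ : 0 < γ - β := sub_pos.2 h.lt
  have hηκ : 0 < η * (γ - β) := mul_pos hη hκ
  -- the two side functionals along the copy
  have key : ∀ z : ℝ × ℝ, c • z + nodeShift η l n = ptTwo β γ η s →
      c * (1 - ((1 - β) * z.1 + β * z.2)) = 6 * (η * (γ - β) * (l + 7 / 12 * n - s)) ∧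
      c * (1 - ((1 - γ) * z.1 + γ * z.2)) = η * (γ - β) * (s - l) := by
    intro z hzeq
    have h1 := congrArg Prod.fst hzeq
    have h2 := congrArg Prod.snd hzeq
    simp only [nodeScale, nodeShift, ptTwo, Prod.fst_add, Prod.snd_add, Prod.smul_fst,
      Prod.smul_snd, smul_eq_mul] at h1 h2 hcdef
    constructor
    · linear_combination (-(1 - β)) * h1 - β * h2 + hcdef
    · linear_combination (-(1 - γ)) * h1 - γ * h2 + hcdef
  constructor
  · rintro ⟨z, hz, hzeq⟩
    obtain ⟨h1, h2⟩ := key z hzeq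
    have h3 : 0 ≤ c * (1 - ((1 - β) * z.1 + β * z.2)) :=
      mul_nonneg hc0.le (by linarith [h.le_left z hz])
    have h4 : 0 ≤ c * (1 - ((1 - γ) * z.1 + γ * z.2)) :=
      mul_nonneg hc0.le (by linarith [h.le_right z hz])
    rw [h2] at h4
    have h5 : 0 ≤ η * (γ - β) * (l + 7 / 12 * n - s) := by linarith
    have h7 := nonneg_of_mul_nonneg_right h5 hηκ
    have h8 := nonneg_of_mul_nonneg_right h4 hηκ
    constructor <;> linarith
  · rintro ⟨h1, h2⟩
    have hB : 100 * (η * (γ - β)) ≤ ρ := by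
      refine le_trans ?_ hηρ
      have : γ - β ≤ 1 + |β| + |γ| := by linarith [le_abs_self γ, neg_le_abs β]
      nlinarith
    have hz : c • (c⁻¹ • (ptTwo β γ η s - nodeShift η l n)) + nodeShift η l n = ptTwo β γ η s := by
      rw [smul_inv_smul₀ hc0.ne']
      abel
    set z := c⁻¹ • (ptTwo β γ η s - nodeShift η l n)
    obtain ⟨h3, h4⟩ := key z hz
    have h5 : 0 ≤ η * (γ - β) * (l + 7 / 12 * n - s) := mul_nonneg hηκ.le (by linarith)
    have h6 : 0 ≤ η * (γ - β) * (s - l) := mul_nonneg hηκ.le (by linarith)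
    have h5' : η * (γ - β) * (l + 7 / 12 * n - s) ≤ η * (γ - β) * 1 := by
      gcongr; linarith
    have h6' : η * (γ - β) * (s - l) ≤ η * (γ - β) * 1 := by
      gcongr; linarith
    have h7 := nonneg_of_mul_nonneg_right
      (h3 ▸ (by linarith : (0 : ℝ) ≤ 6 * (η * (γ - β) * (l + 7 / 12 * n - s)))) hc0
    have h8 := nonneg_of_mul_nonneg_right (h4 ▸ h6) hc0
    refine ⟨z, hρ z ?_ (by linarith) ?_ (by linarith), hz⟩ <;> nlinarith

/-- The theorem in the coordinates of `Corner`. The index set consists of the nodes of the tree and of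
`m` indices for each nonspecial point. -/
theorem exists_indecomposable (h : Corner T β γ) {ε : ℝ} (hε : 0 < ε) (hε1 : ε < 1) (m : ℕ) :
    ∃ (I : Type) (c : I → ℝ) (d : I → ℝ × ℝ),
      (∀ i, 0 < c i ∧ 1 - ε ≤ c i ∧ c i ≤ 1 + ε) ∧
      (∀ y, ∃ t : Finset I, m ≤ t.card ∧ ∀ i ∈ t, ∃ z ∈ T, c i • z + d i = y) ∧
      ¬ ∃ J : Set I, (∀ y, ∃ i ∈ J, ∃ z ∈ T, c i • z + d i = y) ∧
        (∀ y, ∃ i ∈ Jᶜ, ∃ z ∈ T, c i • z + d i = y) := by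
  obtain ⟨r, hr, H⟩ := h.exists_copy_avoiding hε hε1
  obtain ⟨ρ₁, hρ₁, hT₁⟩ := h.near_zero
  obtain ⟨ρ₂, hρ₂, hT₂⟩ := h.near_one
  have hB : 0 < 100 * (1 + |β| + |γ|) := by positivity
  obtain ⟨η, hη, hη1, hη2, hη3, hη4, hη5⟩ : ∃ η : ℝ, 0 < η ∧
      η * (100 * (1 + |β| + |γ|)) ≤ ρ₁ ∧ η * (100 * (1 + |β| + |γ|)) ≤ ρ₂ ∧
      η * (100 * (1 + |β| + |γ|)) ≤ ε ∧ η * (100 * (1 + |β| + |γ|)) ≤ 1 / 2 ∧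
      η * (100 * (1 + |β| + |γ|)) ≤ r := by
    refine ⟨min ρ₁ (min ρ₂ (min ε (min (1 / 2) r))) / (100 * (1 + |β| + |γ|)), by positivity, ?_⟩
    rw [div_mul_cancel₀ _ hB.ne']
    simp
  set X₁ : Set (ℝ × ℝ) := {y | ∃ f : ℕ → Bool, {k | f k = true}.Infinite ∧ y = ptOne η (cantorPt f)}
    with hX₁
  set X₂ : Set (ℝ × ℝ) :=
    {y | ∃ f : ℕ → Bool, {k | f k = false}.Infinite ∧ y = ptTwo β γ η (cantorPt f)} with hX₂
  have hB1 : ∀ s : ℝ, 0 ≤ s → s ≤ 1 → ‖ptOne η s‖ < r := by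
    intro s hs0 hs1
    rw [Prod.norm_def, max_lt_iff]
    have h1 : 0 ≤ η * s := by positivity
    have h2 : η * s ≤ η * 1 := by gcongr
    have h3 : η * 100 ≤ r := by
      refine le_trans ?_ hη5
      gcongr
      linarith [abs_nonneg β, abs_nonneg γ]
    simp only [ptOne, Real.norm_eq_abs, abs_lt]
    refine ⟨⟨?_, ?_⟩, ⟨?_, ?_⟩⟩ <;> linarith
  have hB2 : ∀ s : ℝ, 0 ≤ s → s ≤ 1 → ‖ptTwo β γ η s - (1, 1)‖ < r := by
    intro s hs0 hs1
    have h1 : 0 ≤ η * s := by positivity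
    have h2 : η * s ≤ η * 1 := by gcongr
    have aux : ∀ x : ℝ, |x| < 100 * (1 + |β| + |γ|) → |η * s * x| < r := by
      intro x hx
      rw [abs_mul, abs_of_nonneg h1]
      have := abs_nonneg x
      nlinarith
    have b1 := neg_abs_le β
    have b2 := le_abs_self β
    have b3 := neg_abs_le γ
    have b4 := le_abs_self γ
    rw [Prod.norm_def, max_lt_iff]
    simp only [ptTwo, Prod.fst_sub, Prod.snd_sub, Real.norm_eq_abs, add_sub_cancel_left]
    constructor <;> apply aux <;> rw [abs_lt] <;> constructor <;> linarith
  have Hav := H X₁ X₂ (by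
    rintro z ⟨f, -, rfl⟩
    exact ⟨by simp only [ptOne]; ring, hB1 _ (cantorPt_nonneg f) (cantorPt_le_one f)⟩) (by
    rintro z ⟨f, -, rfl⟩
    exact ⟨by simp only [ptTwo]; ring, hB2 _ (cantorPt_nonneg f) (cantorPt_le_one f)⟩)
  choose! c₀ d₀ hc₀ hc₁ hc₂ hmem hav using Hav
  have hscale : ∀ p : List Bool, |nodeScale β γ η (cantorLeft p) (cantorLen p) - 1| ≤
      η * (100 * (1 + |β| + |γ|)) := fun p =>
    abs_nodeScale_sub_one_le β γ hη (cantorLeft_bounds p).1 (cantorLen_pos p)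
      (cantorLeft_bounds p).2
  have hhalf : ∀ p : List Bool, 1 / 2 ≤ nodeScale β γ η (cantorLeft p) (cantorLen p) := fun p => by
    have := (abs_le.1 (hscale p)).1
    linarith
  have mem₁ : ∀ (p : List Bool) (f : ℕ → Bool),
      (∃ z ∈ T, nodeScale β γ η (cantorLeft p) (cantorLen p) • z +
        nodeShift η (cantorLeft p) (cantorLen p) = ptOne η (cantorPt f)) ↔
      (Passes f p ∧ f p.length = true) := fun p f =>
    (h.mem_nodeCopy_one hT₁ hη hη1 (cantorLeft_bounds p).1
      (cantorLeft_bounds p).2 (cantorPt_le_one f) (hhalf p)).trans (cantor_right p f)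
  have mem₂ : ∀ (p : List Bool) (f : ℕ → Bool),
      (∃ z ∈ T, nodeScale β γ η (cantorLeft p) (cantorLen p) • z +
        nodeShift η (cantorLeft p) (cantorLen p) = ptTwo β γ η (cantorPt f)) ↔
      (Passes f p ∧ f p.length = false) := fun p f =>
    (h.mem_nodeCopy_two hT₂ hη hη2 (cantorLeft_bounds p).1
      (cantorLeft_bounds p).2 (cantorPt_nonneg f) (cantorPt_le_one f) (hhalf p)).trans
      (cantor_left p f)
  refine ⟨List Bool ⊕ ({y // y ∉ X₁ ∪ X₂} × Fin m),
    Sum.elim (fun p => nodeScale β γ η (cantorLeft p) (cantorLen p)) (fun q => c₀ q.1),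
    Sum.elim (fun p => nodeShift η (cantorLeft p) (cantorLen p)) (fun q => d₀ q.1), ?_, ?_, ?_⟩
  · rintro (p | q)
    · have := abs_le.1 (hscale p)
      have := hhalf p
      simp only [Sum.elim_inl]
      refine ⟨?_, ?_, ?_⟩ <;> linarith
    · exact ⟨hc₀ _ q.1.2, hc₁ _ q.1.2, hc₂ _ q.1.2⟩
  · -- the node copies covering a special point of a branch belong to those of its prefixes that
    -- are followed by a turn in the given direction, of which there are infinitely many
    have hinf : ∀ (f : ℕ → Bool) (b : Bool), {k | f k = b}.Infinite →
        ∃ t : Finset (List Bool), m ≤ t.card ∧ ∀ p ∈ t, Passes f p ∧ f p.length = b := by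
      intro f b hb
      obtain ⟨t, ht, htc⟩ := hb.exists_subset_card_eq m
      refine ⟨t.image fun k => (List.range k).map f, ?_, ?_⟩
      · rw [Finset.card_image_of_injective, htc]
        intro j k hjk
        simpa using congrArg List.length hjk
      · intro p hp
        obtain ⟨k, hk, rfl⟩ := Finset.mem_image.1 hp
        have : f k = b := ht hk
        simpa [Passes] using this
    intro y
    by_cases hy : y ∈ X₁ ∪ X₂
    · rcases hy with ⟨f, hf, rfl⟩ | ⟨f, hf, rfl⟩
      · obtain ⟨t, ht, htp⟩ := hinf f true hf
        refine ⟨t.map Function.Embedding.inl, by simpa using ht, ?_⟩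
        intro i hi
        obtain ⟨p, hp, rfl⟩ := Finset.mem_map.1 hi
        exact (mem₁ p f).2 (htp p hp)
      · obtain ⟨t, ht, htp⟩ := hinf f false hf
        refine ⟨t.map Function.Embedding.inl, by simpa using ht, ?_⟩
        intro i hi
        obtain ⟨p, hp, rfl⟩ := Finset.mem_map.1 hi
        exact (mem₂ p f).2 (htp p hp)
    · refine ⟨Finset.univ.map ⟨fun k : Fin m => Sum.inr (⟨y, hy⟩, k), fun j k hjk => by
        simpa using hjk⟩, by simp, ?_⟩
      intro i hi
      obtain ⟨k, -, rfl⟩ := Finset.mem_map.1 hi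
      exact hmem y hy
  · rintro ⟨J, hJ, hJc⟩
    classical
    -- descend the tree, turning right at the nodes of `J` and left at the others
    let pre : ℕ → List Bool := fun k =>
      Nat.rec [] (fun _ p => p ++ [decide ((Sum.inl p : List Bool ⊕ _) ∈ J)]) k
    let f : ℕ → Bool := fun k => decide ((Sum.inl (pre k) : List Bool ⊕ _) ∈ J)
    have hpre : ∀ k, (List.range k).map f = pre k := by
      intro k
      induction k with
      | zero => rfl
      | succ k ih =>
        rw [List.range_succ, List.map_append, ih]
        rfl
    have hpass : ∀ p, Passes f p → (f p.length = true ↔ Sum.inl p ∈ J) := by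
      intro p hp
      have : pre p.length = p := (hpre _).symm.trans hp.symm
      simp [f, this]
    by_cases hf : {k | f k = true}.Infinite
    · obtain ⟨i, hi, hz⟩ := hJc (ptOne η (cantorPt f))
      rcases i with p | q
      · obtain ⟨h1, h2⟩ := (mem₁ p f).1 hz
        exact hi ((hpass p h1).1 h2)
      · obtain ⟨z, hz, hzeq⟩ := hz
        exact hav q.1 q.1.2 z hz (Or.inl ⟨f, hf, hzeq⟩)
    · have hf' : {k | f k = false}.Infinite := by
        rw [Set.not_infinite] at hf
        have := hf.infinite_compl
        refine this.mono fun k hk => ?_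
        simpa using hk
      obtain ⟨i, hi, hz⟩ := hJ (ptTwo β γ η (cantorPt f))
      rcases i with p | q
      · obtain ⟨h1, h2⟩ := (mem₂ p f).1 hz
        have := (hpass p h1).2 hi
        rw [h2] at this
        exact absurd this (by simp)
      · obtain ⟨z, hz, hzeq⟩ := hz
        exact hav q.1 q.1.2 z hz (Or.inr ⟨f, hf', hzeq⟩)

end Corner

/-! ### Vertices and coordinates of the polygon -/

/-- The angle of the polygon at its vertex `v` is spanned by the vertices `N` and `N'`, and `a`, `b`
are the coordinates of vectors with respect to the basis `N - v`, `N' - v`. -/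
structure VertexCone (P : Finset Plane) (v N N' : Plane) (a b : Plane →ₗ[ℝ] ℝ) : Prop where
  mem : N ∈ P
  mem' : N' ∈ P
  eq : ∀ z, z = a z • (N - v) + b z • (N' - v)
  a_left : a (N - v) = 1
  a_right : a (N' - v) = 0
  b_left : b (N - v) = 0
  b_right : b (N' - v) = 1
  nonneg : ∀ p ∈ P, 0 ≤ a (p - v)
  nonneg' : ∀ p ∈ P, 0 ≤ b (p - v)

theorem VertexCone.symm {P : Finset Plane} {v N N' : Plane} {a b : Plane →ₗ[ℝ] ℝ}
    (h : VertexCone P v N N' a b) : VertexCone P v N' N b a :=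
  ⟨h.mem', h.mem, fun z => by rw [add_comm]; exact h.eq z, h.b_right, h.b_left, h.a_right,
    h.a_left, h.nonneg', h.nonneg⟩

/-- No two vertices lie on the same ray from a third one. -/
theorem StrictlyConvexPosition.not_collinear {P : Finset Plane} (hpos : StrictlyConvexPosition P)
    {v p q : Plane} (hv : v ∈ P) (hp : p ∈ P) (hq : q ∈ P) (hvp : v ≠ p) (hvq : v ≠ q)
    (hpq : p ≠ q) {t : ℝ} (ht : 0 < t) (h : p - v = t • (q - v)) : False := by
  have aux : ∀ {p q : Plane} {t : ℝ}, p ∈ P → q ∈ P → v ≠ p → 0 < t → t < 1 →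
      p - v = t • (q - v) → False := by
    intro p q t hp hq hvp ht ht1 h
    have hmem := (mem_extremePoints.1 (hpos p hp)).2 v (subset_convexHull ℝ _ hv) q
      (subset_convexHull ℝ _ hq) ⟨1 - t, t, by linarith, ht, by ring, by
        rw [eq_add_of_sub_eq h]; module⟩
    exact hvp hmem.1
  rcases lt_trichotomy t 1 with h1 | h1 | h1
  · exact aux hp hq hvp ht h1 h
  · rw [h1, one_smul] at h
    exact hpq (sub_left_injective h)
  · refine aux hq hp hvq (inv_pos.2 ht) (inv_lt_one_of_one_lt₀ h1) ?_
    rw [h, inv_smul_smul₀ ht.ne']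

/-- The cross product with `u` in the plane, as a linear form. -/
def crossLin (u : Plane) : Plane →ₗ[ℝ] ℝ where
  toFun w := u 0 * w 1 - u 1 * w 0
  map_add' x y := by simp; ring
  map_smul' c x := by simp; ring

theorem crossLin_apply (u w : Plane) : crossLin u w = u 0 * w 1 - u 1 * w 0 := rfl

/-- The neighbours of `v` are the vertices of least and of greatest slope as seen from `v`. -/
theorem StrictlyConvexPosition.exists_vertexCone {P : Finset Plane}
    (hpos : StrictlyConvexPosition P) (hcard : 3 ≤ P.card) {v : Plane} (hv : v ∈ P) :
    ∃ N N' a b, VertexCone P v N N' a b := by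
  -- a line through `v` having the other vertices strictly on one side
  obtain ⟨g, hg⟩ : ∃ g : Plane →L[ℝ] ℝ, ∀ p ∈ P.erase v, 0 < g (p - v) := by
    have hnot : v ∉ convexHull ℝ ((P.erase v : Finset Plane) : Set Plane) := by
      have h1 := ((convex_convexHull ℝ
        (P : Set Plane)).mem_extremePoints_iff_mem_sdiff_convexHull_sdiff.1 (hpos v hv)).2
      refine fun h2 => h1 (convexHull_mono ?_ h2)
      intro x hx
      rw [Finset.coe_erase] at hx
      exact ⟨subset_convexHull ℝ _ hx.1, hx.2⟩
    obtain ⟨g, u, hu1, hu2⟩ := geometric_hahn_banach_point_closed (convex_convexHull ℝ _)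
      ((P.erase v).finite_toSet.isCompact_convexHull ℝ).isClosed hnot
    refine ⟨g, fun p hp => ?_⟩
    have := hu2 p (subset_convexHull ℝ _ hp)
    rw [map_sub]
    linarith
  set g₀ := g (EuclideanSpace.single 0 1) with hg₀
  set g₁ := g (EuclideanSpace.single 1 1) with hg₁
  have hgz : ∀ z : Plane, g z = g₀ * z 0 + g₁ * z 1 := by
    intro z
    have : z = z 0 • EuclideanSpace.single (0 : Fin 2) (1 : ℝ) +
        z 1 • EuclideanSpace.single (1 : Fin 2) (1 : ℝ) := by
      ext i
      fin_cases i <;> simp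
    conv_lhs => rw [this]
    rw [map_add, map_smul, map_smul, smul_eq_mul, smul_eq_mul]
    ring
  have hne : (P.erase v).Nonempty := by
    rw [← Finset.card_pos, Finset.card_erase_of_mem hv]
    omega
  -- comparing slopes amounts to taking the sign of the cross product
  let h : Plane → ℝ := fun z => g₀ * z 1 - g₁ * z 0
  have hcross : ∀ u w : Plane, g u * h w - g w * h u = (g₀ ^ 2 + g₁ ^ 2) * crossLin u w := by
    intro u w
    simp only [h, hgz, crossLin_apply]
    ring
  have hgpos : 0 < g₀ ^ 2 + g₁ ^ 2 := by
    obtain ⟨p, hp⟩ := hne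
    have h1 := hg p hp
    rw [hgz] at h1
    by_contra hcon
    have h2 : g₀ = 0 := by nlinarith [sq_nonneg g₀, sq_nonneg g₁]
    have h3 : g₁ = 0 := by nlinarith [sq_nonneg g₀, sq_nonneg g₁]
    rw [h2, h3] at h1
    simp at h1
  have hle : ∀ p ∈ P.erase v, ∀ q ∈ P.erase v,
      h (p - v) / g (p - v) ≤ h (q - v) / g (q - v) → 0 ≤ crossLin (p - v) (q - v) := by
    intro p hp q hq hpq
    rw [div_le_div_iff₀ (hg p hp) (hg q hq)] at hpq
    have h1 := hcross (p - v) (q - v)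
    exact nonneg_of_mul_nonneg_right (by rw [← h1]; linarith) hgpos
  obtain ⟨N, hN, hNmin⟩ := Finset.exists_min_image (P.erase v) (fun p => h (p - v) / g (p - v)) hne
  obtain ⟨N', hN', hNmax⟩ := Finset.exists_max_image (P.erase v)
    (fun p => h (p - v) / g (p - v)) hne
  have hD0 : 0 ≤ crossLin (N - v) (N' - v) := hle N hN N' hN' (hNmin N' hN')
  have hD : 0 < crossLin (N - v) (N' - v) := by
    refine lt_of_le_of_ne hD0 fun hD => ?_
    have hEq : h (N - v) / g (N - v) = h (N' - v) / g (N' - v) := by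
      have h1 := hcross (N - v) (N' - v)
      rw [← hD, mul_zero] at h1
      rw [div_eq_div_iff (hg N hN).ne' (hg N' hN').ne']
      linarith
    obtain ⟨p, hp, q, hq, hpq⟩ := Finset.one_lt_card.1
      (show 1 < (P.erase v).card by rw [Finset.card_erase_of_mem hv]; omega)
    have e1 : h (p - v) / g (p - v) = h (q - v) / g (q - v) := by
      have h1 := hNmin p hp
      have h2 := hNmax p hp
      have h3 := hNmin q hq
      have h4 := hNmax q hq
      linarith
    have hgp := hg p hp
    have hgq := hg q hq
    rw [div_eq_div_iff hgp.ne' hgq.ne'] at e1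
    have hc : crossLin (p - v) (q - v) = 0 := by
      have h1 := hcross (p - v) (q - v)
      have h2 : (g₀ ^ 2 + g₁ ^ 2) * crossLin (p - v) (q - v) = 0 := by linarith
      exact (mul_eq_zero.1 h2).resolve_left hgpos.ne'
    refine hpos.not_collinear hv (Finset.mem_of_mem_erase hp) (Finset.mem_of_mem_erase hq)
      (Finset.ne_of_mem_erase hp).symm (Finset.ne_of_mem_erase hq).symm hpq
      (t := g (p - v) / g (q - v)) (div_pos hgp hgq) ?_
    rw [crossLin_apply] at hc
    rw [← smul_right_injective Plane hgq.ne' |>.eq_iff, smul_smul, mul_div_cancel₀ _ hgq.ne']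
    ext i
    fin_cases i
    · simp only [hgz, PiLp.smul_apply, smul_eq_mul, Fin.zero_eta]
      linear_combination g₁ * hc
    · simp only [hgz, PiLp.smul_apply, smul_eq_mul, Fin.mk_one]
      linear_combination (-g₀) * hc
  set D := crossLin (N - v) (N' - v) with hDdef
  have self0 : ∀ u : Plane, crossLin u u = 0 := fun u => by rw [crossLin_apply]; ring
  have anti : ∀ u w : Plane, crossLin u w = -crossLin w u := fun u w => by
    simp only [crossLin_apply]; ring
  refine ⟨N, N', -D⁻¹ • crossLin (N' - v), D⁻¹ • crossLin (N - v),
    Finset.mem_of_mem_erase hN, Finset.mem_of_mem_erase hN', ?_, ?_, ?_, ?_, ?_, ?_, ?_⟩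
  · intro z
    rw [← smul_right_injective Plane hD.ne' |>.eq_iff, smul_add, smul_smul, smul_smul]
    simp only [LinearMap.smul_apply, smul_eq_mul, neg_mul, mul_neg, mul_inv_cancel_left₀ hD.ne']
    rw [hDdef]
    ext i
    fin_cases i
    · simp [crossLin_apply]; ring
    · simp [crossLin_apply]; ring
  · rw [LinearMap.smul_apply, anti, smul_eq_mul, neg_mul_neg, inv_mul_cancel₀ hD.ne']
  · rw [LinearMap.smul_apply, self0, smul_zero]
  · rw [LinearMap.smul_apply, self0, smul_zero]
  · rw [LinearMap.smul_apply, smul_eq_mul, inv_mul_cancel₀ hD.ne']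
  · intro p hp
    rw [LinearMap.smul_apply, anti, smul_eq_mul, neg_mul_neg]
    by_cases hpv : p = v
    · simp [hpv, crossLin_apply]
    · have hp' := Finset.mem_erase.2 ⟨hpv, hp⟩
      exact mul_nonneg (inv_nonneg.2 hD.le) (hle p hp' N' hN' (hNmax p hp'))
  · intro p hp
    rw [LinearMap.smul_apply, smul_eq_mul]
    by_cases hpv : p = v
    · simp [hpv]
    · have hp' := Finset.mem_erase.2 ⟨hpv, hp⟩
      exact mul_nonneg (inv_nonneg.2 hD.le) (hle N hN p hp' (hNmin p hp'))

theorem nonneg_of_mem_convexHull {P : Finset Plane} {v : Plane} {a : Plane →ₗ[ℝ] ℝ}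
    (h : ∀ p ∈ P, 0 ≤ a (p - v)) {z : Plane} (hz : z ∈ convexHull ℝ (P : Set Plane)) :
    0 ≤ a (z - v) := by
  have hsub : convexHull ℝ (P : Set Plane) ⊆ {z | a v ≤ a z} := by
    refine convexHull_min (fun p hp => ?_) (convex_halfSpace_ge a.isLinear _)
    have := h p hp
    rw [map_sub] at this
    exact sub_nonneg.1 this
  have h1 : a v ≤ a z := hsub hz
  rw [map_sub]
  linarith

/-- The triangle spanned by a vertex and its neighbours lies in the polygon. -/
theorem VertexCone.combo_mem {P : Finset Plane} {v N N' : Plane} {a b : Plane →ₗ[ℝ] ℝ}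
    (h : VertexCone P v N N' a b) (hv : v ∈ P) {z : Plane} (ha : 0 ≤ a z) (hb : 0 ≤ b z)
    (hab : a z + b z ≤ 1) : v + z ∈ convexHull ℝ (P : Set Plane) := by
  have hconv := convex_convexHull ℝ (P : Set Plane)
  have e : v + z = (1 - a z - b z) • v + a z • N + b z • N' := by
    conv_lhs => rw [h.eq z]
    module
  rw [e]
  have := hconv.sum_mem (t := Finset.univ) (w := ![1 - a z - b z, a z, b z]) (z := ![v, N, N'])
    (by intro i _; fin_cases i <;> simp <;> linarith)
    (by simp [Fin.sum_univ_three]; ring)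
    (by
      intro i _
      fin_cases i
      · exact subset_convexHull ℝ _ hv
      · exact subset_convexHull ℝ _ h.mem
      · exact subset_convexHull ℝ _ h.mem')
  simpa [Fin.sum_univ_three] using this

/-- The linear map sending `(1, 0)` to `X • e₁` and `(0, 1)` to `Y • e₂`. -/
def frame (e₁ e₂ : Plane) (X Y : ℝ) : ℝ × ℝ →ₗ[ℝ] Plane where
  toFun w := (w.1 * X) • e₁ + (w.2 * Y) • e₂
  map_add' w w' := by simp only [Prod.fst_add, Prod.snd_add]; module
  map_smul' c w := by
    simp only [Prod.smul_fst, Prod.smul_snd, smul_eq_mul, RingHom.id_apply]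
    module

theorem frame_apply (e₁ e₂ : Plane) (X Y : ℝ) (w : ℝ × ℝ) :
    frame e₁ e₂ X Y w = (w.1 * X) • e₁ + (w.2 * Y) • e₂ := rfl

/-- If `q` is interior to the angle at `v`, then `v` is not on a side line through `q`: otherwise this
line would have both neighbours of `v` on one closed side and separate them, so contain them. -/
theorem VertexCone.pos_of_interior {P : Finset Plane} {v N N' q M M' : Plane}
    {a b a' b' : Plane →ₗ[ℝ] ℝ} (hv : VertexCone P v N N' a b) (hq : VertexCone P q M M' a' b')
    (hvP : v ∈ P) (hX : 0 < a (q - v)) (hY : 0 < b (q - v)) : 0 < a' (v - q) := by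
  refine lt_of_le_of_ne (hq.nonneg v hvP) fun h0 => ?_
  have h1 := hq.nonneg N hv.mem
  have h2 := hq.nonneg N' hv.mem'
  have e1 : a' (N - q) = a' (N - v) := by
    rw [← sub_add_sub_cancel N v q, map_add, ← h0, add_zero]
  have e2 : a' (N' - q) = a' (N' - v) := by
    rw [← sub_add_sub_cancel N' v q, map_add, ← h0, add_zero]
  rw [e1] at h1
  rw [e2] at h2
  have e3 : a (q - v) * a' (N - v) + b (q - v) * a' (N' - v) = 0 := by
    have := congrArg a' (hv.eq (q - v))
    rw [map_add, map_smul, map_smul, smul_eq_mul, smul_eq_mul] at this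
    rw [← this, ← neg_sub, map_neg, ← h0, neg_zero]
  have h3 : a' (N - v) = 0 := by nlinarith [mul_nonneg hX.le h1, mul_nonneg hY.le h2]
  have h4 : a' (N' - v) = 0 := by nlinarith [mul_nonneg hX.le h1, mul_nonneg hY.le h2]
  have := congrArg a' (hv.eq (M - q))
  rw [map_add, map_smul, map_smul, h3, h4, hq.a_left] at this
  simp at this

/-- The coefficient `β` with which the line `a' (z - q) = 0` through `q` takes the form
`(1 - β) x + β y = 1` in the coordinates with origin `v` and `q = (1, 1)`. Here `N' - v` is the
direction of the second axis, `b` the corresponding coordinate form. -/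
def sideSlope (v q N' : Plane) (b a' : Plane →ₗ[ℝ] ℝ) : ℝ :=
  -(b (q - v) * a' (N' - v)) / a' (v - q)

theorem sideSlope_eq {P : Finset Plane} {v N N' q : Plane} {a b a' : Plane →ₗ[ℝ] ℝ}
    (hv : VertexCone P v N N' a b) (h0 : a' (v - q) ≠ 0) (w : ℝ × ℝ) :
    (1 - sideSlope v q N' b a') * w.1 + sideSlope v q N' b a' * w.2 =
      1 - a' (v + frame (N - v) (N' - v) (a (q - v)) (b (q - v)) w - q) / a' (v - q) := by
  have e : a (q - v) * a' (N - v) + b (q - v) * a' (N' - v) = -a' (v - q) := by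
    have := congrArg a' (hv.eq (q - v))
    rw [map_add, map_smul, map_smul, smul_eq_mul, smul_eq_mul] at this
    rw [← this, ← neg_sub, map_neg]
  rw [show ∀ z, v + z - q = z + (v - q) from fun z => by abel, map_add, frame_apply, map_add,
    map_smul, map_smul, smul_eq_mul, smul_eq_mul, sideSlope]
  field_simp
  linear_combination w.1 * e

/-- In the coordinates given by the angle at `v` and a vertex `q` interior to it, the polygon has the
form required by `Corner`. -/
theorem corner_of_cones {P : Finset Plane} {v N N' q M M' : Plane}
    {a b a' b' : Plane →ₗ[ℝ] ℝ} (hv : VertexCone P v N N' a b) (hq : VertexCone P q M M' a' b')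
    (hvP : v ∈ P) (hqP : q ∈ P) (hX : 0 < a (q - v)) (hY : 0 < b (q - v))
    (hlt : sideSlope v q N' b a' < sideSlope v q N' b b') :
    Corner {w | v + frame (N - v) (N' - v) (a (q - v)) (b (q - v)) w ∈
      convexHull ℝ (P : Set Plane)} (sideSlope v q N' b a') (sideSlope v q N' b b') := by
  set G := frame (N - v) (N' - v) (a (q - v)) (b (q - v)) with hG
  have ha0 : 0 < a' (v - q) := hv.pos_of_interior hq hvP hX hY
  have hb0 : 0 < b' (v - q) := hv.pos_of_interior hq.symm hvP hX hY
  have aG : ∀ w, a (G w) = w.1 * a (q - v) := fun w => by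
    rw [hG, frame_apply, map_add, map_smul, map_smul, hv.a_left, hv.a_right]; simp
  have bG : ∀ w, b (G w) = w.2 * b (q - v) := fun w => by
    rw [hG, frame_apply, map_add, map_smul, map_smul, hv.b_left, hv.b_right]; simp
  have k3 := fun w => sideSlope_eq hv ha0.ne' w
  have k4 := fun w => sideSlope_eq (a' := b') hv hb0.ne' w
  rw [← hG] at k3 k4
  refine ⟨?_, ?_, hlt, ?_, ?_, ?_, ?_, ?_, ?_⟩
  · exact ((convex_convexHull ℝ (P : Set Plane)).translate_preimage_right v).linear_preimage G
  · have himg : {w | v + G w ∈ convexHull ℝ (P : Set Plane)} =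
        (fun z => (a (z - v) / a (q - v), b (z - v) / b (q - v))) ''
          convexHull ℝ (P : Set Plane) := by
      ext w
      constructor
      · intro hw
        refine ⟨_, hw, ?_⟩
        simp only [add_sub_cancel_left, aG, bG]
        rw [mul_div_cancel_right₀ _ hX.ne', mul_div_cancel_right₀ _ hY.ne']
      · rintro ⟨z, hz, rfl⟩
        show v + G _ ∈ convexHull ℝ (P : Set Plane)
        rw [hG, frame_apply]
        simp only [div_mul_cancel₀ _ hX.ne', div_mul_cancel₀ _ hY.ne']
        rw [← hv.eq (z - v), add_sub_cancel]
        exact hz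
    rw [himg]
    refine (P.finite_toSet.isCompact_convexHull ℝ).image ?_
    have hca := a.continuous_of_finiteDimensional
    have hcb := b.continuous_of_finiteDimensional
    fun_prop
  · intro w hw
    have := nonneg_of_mem_convexHull hv.nonneg hw
    rw [add_sub_cancel_left, aG] at this
    exact nonneg_of_mul_nonneg_left this hX
  · intro w hw
    have := nonneg_of_mem_convexHull hv.nonneg' hw
    rw [add_sub_cancel_left, bG] at this
    exact nonneg_of_mul_nonneg_left this hY
  · intro w hw
    rw [k3]
    have := div_nonneg (nonneg_of_mem_convexHull hq.nonneg hw) ha0.le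
    linarith
  · intro w hw
    rw [k4]
    have := div_nonneg (nonneg_of_mem_convexHull hq.nonneg' hw) hb0.le
    linarith
  · refine ⟨1 / (a (q - v) + b (q - v)), by positivity, fun w h1 h2 h3 h4 => ?_⟩
    have hs : 0 < a (q - v) + b (q - v) := by positivity
    rw [le_div_iff₀ hs] at h2 h4
    refine hv.combo_mem hvP ?_ ?_ ?_
    · rw [aG]; positivity
    · rw [bG]; positivity
    · rw [aG, bG]
      by_contra hcon
      push Not at hcon
      nlinarith
  · have hs : 0 < a' (v - q) + b' (v - q) := by positivity
    refine ⟨1 / (a' (v - q) + b' (v - q)), by positivity, fun w h1 h2 h3 h4 => ?_⟩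
    rw [k3] at h1 h2
    rw [k4] at h3 h4
    have h1' : a' (v + G w - q) / a' (v - q) ≤ 1 / (a' (v - q) + b' (v - q)) := by linarith
    have h3' : b' (v + G w - q) / b' (v - q) ≤ 1 / (a' (v - q) + b' (v - q)) := by linarith
    have h2' : 0 ≤ a' (v + G w - q) / a' (v - q) := by linarith
    have h4' : 0 ≤ b' (v + G w - q) / b' (v - q) := by linarith
    rw [div_le_iff₀ ha0] at h1'
    rw [div_le_iff₀ hb0] at h3'
    rw [le_div_iff₀ ha0, zero_mul] at h2'
    rw [le_div_iff₀ hb0, zero_mul] at h4'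
    have hsum : 1 / (a' (v - q) + b' (v - q)) * a' (v - q) +
        1 / (a' (v - q) + b' (v - q)) * b' (v - q) = 1 := by field_simp
    have := hq.combo_mem hqP h2' h4' (by linarith)
    rwa [add_sub_cancel] at this

theorem sideSlope_ne {P : Finset Plane} {v N N' q M M' : Plane}
    {a b a' b' : Plane →ₗ[ℝ] ℝ} (hv : VertexCone P v N N' a b) (hq : VertexCone P q M M' a' b')
    (hvP : v ∈ P) (hX : 0 < a (q - v)) (hY : 0 < b (q - v)) :
    sideSlope v q N' b a' ≠ sideSlope v q N' b b' := by
  intro heq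
  have ha0 : 0 < a' (v - q) := hv.pos_of_interior hq hvP hX hY
  have hb0 : 0 < b' (v - q) := hv.pos_of_interior hq.symm hvP hX hY
  let w : ℝ × ℝ := (a (M - v) / a (q - v), b (M - v) / b (q - v))
  have hw : v + frame (N - v) (N' - v) (a (q - v)) (b (q - v)) w = M := by
    rw [frame_apply]
    simp only [w, div_mul_cancel₀ _ hX.ne', div_mul_cancel₀ _ hY.ne']
    rw [← hv.eq (M - v), add_sub_cancel]
  have h1 := sideSlope_eq hv ha0.ne' w
  have h2 := sideSlope_eq (a' := b') hv hb0.ne' w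
  rw [hw] at h1 h2
  rw [heq, h2, hq.a_left, hq.b_left, zero_div] at h1
  have : 0 < 1 / a' (v - q) := by positivity
  linarith

theorem exists_frame_corner {P : Finset Plane} (hcard : 4 ≤ P.card)
    (hpos : StrictlyConvexPosition P) :
    ∃ (v : Plane) (G : ℝ × ℝ →ₗ[ℝ] Plane) (β γ : ℝ), Function.Bijective G ∧
      Corner {w | v + G w ∈ convexHull ℝ (P : Set Plane)} β γ := by
  obtain ⟨v, hvP⟩ : P.Nonempty := Finset.card_pos.1 (by omega)
  obtain ⟨N, N', a, b, hv⟩ := hpos.exists_vertexCone (by omega) hvP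
  obtain ⟨q, hqP, hq⟩ : ∃ q ∈ P, q ∉ ({v, N, N'} : Finset Plane) := by
    by_contra hcon
    push Not at hcon
    have h1 := Finset.card_le_card (show P ⊆ {v, N, N'} from hcon)
    have h2 := Finset.card_le_three (a := v) (b := N) (c := N')
    omega
  simp only [Finset.mem_insert, Finset.mem_singleton, not_or] at hq
  obtain ⟨hqv, hqN, hqN'⟩ := hq
  -- a vertex other than the neighbours of `v` lies in the interior of the angle at `v`
  have key : ∀ {N N' : Plane} {a b : Plane →ₗ[ℝ] ℝ}, VertexCone P v N N' a b → q ≠ N' →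
      0 < a (q - v) := by
    intro N N' a b hv hqN'
    refine lt_of_le_of_ne (hv.nonneg q hqP) fun h0 => ?_
    have h1 := hv.eq (q - v)
    rw [← h0, zero_smul, zero_add] at h1
    have h2 : b (q - v) ≠ 0 := by
      intro h2
      rw [h2, zero_smul] at h1
      exact hqv (sub_eq_zero.1 h1)
    have h3 : v ≠ N' := by
      intro h3
      have := hv.b_right
      rw [← h3, sub_self, map_zero] at this
      exact zero_ne_one this
    exact hpos.not_collinear hvP hqP hv.mem' (Ne.symm hqv) h3 hqN'
      (lt_of_le_of_ne (hv.nonneg' q hqP) h2.symm) h1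
  have hX : 0 < a (q - v) := key hv hqN'
  have hY : 0 < b (q - v) := key hv.symm hqN
  obtain ⟨M, M', a', b', hq⟩ := hpos.exists_vertexCone (by omega) hqP
  have hbij : Function.Bijective (frame (N - v) (N' - v) (a (q - v)) (b (q - v))) := by
    constructor
    · intro w w' hww
      have h1 := congrArg a hww
      have h2 := congrArg b hww
      simp only [frame_apply, map_add, map_smul, hv.a_left, hv.a_right, hv.b_left, hv.b_right,
        smul_eq_mul, mul_one, mul_zero, add_zero, zero_add] at h1 h2
      exact Prod.ext (mul_right_cancel₀ hX.ne' h1) (mul_right_cancel₀ hY.ne' h2)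
    · intro z
      refine ⟨(a z / a (q - v), b z / b (q - v)), ?_⟩
      simp only [frame_apply, div_mul_cancel₀ _ hX.ne', div_mul_cancel₀ _ hY.ne']
      exact (hv.eq z).symm
  rcases lt_or_gt_of_ne (sideSlope_ne hv hq hvP hX hY) with h | h
  · exact ⟨v, _, _, _, hbij, corner_of_cones hv hq hvP hqP hX hY h⟩
  · exact ⟨v, _, _, _, hbij, corner_of_cones hv hq.symm hvP hqP hX hY h⟩

theorem statement2 (P : Finset Plane) (hcard : 4 ≤ P.card)
    (hpos : StrictlyConvexPosition P)
    (S : Set Plane) (hS : S = convexHull ℝ (P : Set Plane))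
    (ε : ℝ) (hε : 0 < ε) (m : ℕ) (hm : 1 ≤ m) :
    ∃ (I : Type) (c : I → ℝ) (p : I → Plane),
      (∀ i, 0 < c i) ∧
      (∀ i, 1 - ε ≤ c i ∧ c i ≤ 1 + ε) ∧
      MFoldCover m (fun i => homCopy (c i) (p i) S) Set.univ ∧
      ¬ DecomposableIntoTwoCoverings (fun i => homCopy (c i) (p i) S) := by
  subst hS
  obtain ⟨v, G, β, γ, ⟨hinj, hsurj⟩, hT⟩ := exists_frame_corner hcard hpos
  obtain ⟨I, c, d, hc, hcov, hind⟩ := hT.exists_indecomposable (ε := min ε (1 / 2))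
    (by positivity) (by linarith [min_le_right ε (1 / 2)]) m
  have hle := min_le_left ε (1 / 2)
  -- the copy `c T + d` in coordinates is the copy `c S + p` of the polygon
  have hmem : ∀ i w, v + G w ∈ homCopy (c i) (v - c i • v + G (d i))
      (convexHull ℝ (P : Set Plane)) ↔
      ∃ z ∈ {w | v + G w ∈ convexHull ℝ (P : Set Plane)}, c i • z + d i = w := by
    intro i w
    constructor
    · rintro ⟨x, hx, hxw⟩
      obtain ⟨z, hz⟩ := hsurj (x - v)
      refine ⟨z, ?_, hinj ?_⟩
      · show v + G z ∈ convexHull ℝ (P : Set Plane)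
        rwa [hz, add_sub_cancel]
      · rw [map_add, map_smul, hz]
        have hxw' : c i • x + (v - c i • v + G (d i)) = v + G w := hxw
        rw [eq_sub_of_add_eq' hxw'.symm]
        module
    · rintro ⟨z, hz, rfl⟩
      refine ⟨v + G z, hz, ?_⟩
      simp only [map_add, map_smul]
      module
  have hpt : ∀ x : Plane, ∃ w, v + G w = x := fun x => by
    obtain ⟨w, hw⟩ := hsurj (x - v)
    exact ⟨w, by rw [hw, add_sub_cancel]⟩
  refine ⟨I, c, fun i => v - c i • v + G (d i), fun i => (hc i).1,
    fun i => ⟨by linarith [(hc i).2.1], by linarith [(hc i).2.2]⟩, ?_, ?_⟩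
  · intro x _
    obtain ⟨w, rfl⟩ := hpt x
    obtain ⟨t, ht, htm⟩ := hcov w
    exact ⟨t, ht, fun i hi => (hmem i w).2 (htm i hi)⟩
  · rintro ⟨J, hJ, hJc⟩
    refine hind ⟨J, fun w => ?_, fun w => ?_⟩
    · obtain ⟨i, hi, hx⟩ := hJ (v + G w)
      exact ⟨i, hi, (hmem i w).1 hx⟩
    · obtain ⟨i, hi, hx⟩ := hJc (v + G w)
      exact ⟨i, hi, (hmem i w).1 hx⟩
end
end

section
/- Let S be the convex hull of a finite set of n ≥ 4 points in ℝ² in strictly convex position. Then there exists a unit vector u ∈ ℝ² such that the maximum of the linear functional x ↦ ⟨u, x⟩ over S is attained at exactly one vertex v_a of S, the minimum is attained at exactly one vertex v_b of S, and v_a and v_b are not adjacent (they are not the two endpoints of a common side of S). -/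
/-!
Let `p`, `q` be two vertices at maximal distance. In the direction `q - p` the strict extrema are
attained at `q` and `p`. If there are vertices strictly on both sides of the line `pq`, then the
midpoint of `pq` is interior to the polygon (`not_adjacent_of_sides`), and this direction works.

Otherwise `pq` is a side. Let `c` be a vertex farthest from the line `pq`. Tilting the normal of
`pq` slightly in either direction makes `q` and `c`, or `p` and `c`, the strict extrema
(`hasDiagonalDirection_of_tilt`). If two vertices are farthest, `q` and the farthest vertex on the
side of `p` span a diagonal of a trapezoid. If `c` is the only farthest vertex, a fourth vertex
cannot lie in the triangle `p q c`, since it is an extreme point (`eq_of_mem_triangle`); hence it is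
separated from that triangle by the line `qc` or `pc`, and the corresponding pair is a diagonal.
-/

/-!
STATEMENT 5: Let S be the convex hull of a finite set of n ≥ 4 points in ℝ²
in strictly convex position. Then there exists a unit vector u such that the
maximum of x ↦ ⟨u, x⟩ over S is attained at exactly one vertex v_a, the
minimum at exactly one vertex v_b, and v_a, v_b are not adjacent.
-/

noncomputable section

open scoped RealInnerProductSpace

/-- Two vertices of the convex polygon `convexHull ℝ P` are adjacent if they
are distinct and the segment joining them lies on the boundary of the polygon,
i.e. they are the endpoints of a common side. -/
def AdjacentVertices (P : Finset Plane) (x y : Plane) : Prop :=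
  x ≠ y ∧ segment ℝ x y ⊆ frontier (convexHull ℝ (P : Set Plane))

/-! ### Coordinates in the plane -/

/-- Twice the signed area of the triangle `a b z`. -/
def det3 (a b z : Plane) : ℝ :=
  (b 0 - a 0) * (z 1 - a 1) - (b 1 - a 1) * (z 0 - a 0)

/-- The value `⟪w, z⟫` written out in coordinates. -/
def lin (w z : Plane) : ℝ := w 0 * z 0 + w 1 * z 1

lemma inner_eq_lin (w z : Plane) : ⟪w, z⟫ = lin w z := by
  simp [lin, PiLp.inner_apply, Fin.sum_univ_two]
  ring

lemma plane_ext {a b : Plane} (h0 : a 0 = b 0) (h1 : a 1 = b 1) : a = b := by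
  ext i
  fin_cases i
  · exact h0
  · exact h1

/-! ### Strict extrema and diagonals of the hull -/

/-- A vertex which strictly maximizes a linear functional among the vertices does so on the whole
convex hull. -/
lemma strict_max_hull {P : Finset Plane} {w a : Plane}
    (h : ∀ x ∈ P, x ≠ a → ⟪w, x⟫ < ⟪w, a⟫) :
    ∀ x ∈ convexHull ℝ (P : Set Plane), x ≠ a → ⟪w, x⟫ < ⟪w, a⟫ := by
  have hconv : Convex ℝ {x : Plane | x ≠ a → ⟪w, x⟫ < ⟪w, a⟫} := by
    rw [convex_iff_forall_pos]
    intro x hx y hy s t hs ht hst hne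
    simp only [Set.mem_ofPred_eq] at hx hy
    rw [inner_add_right, inner_smul_right, inner_smul_right]
    have ha : s * ⟪w, a⟫ + t * ⟪w, a⟫ = ⟪w, a⟫ := by rw [← add_mul, hst, one_mul]
    by_cases hxa : x = a
    · by_cases hya : y = a
      · exact absurd (by rw [hxa, hya, ← add_smul, hst, one_smul]) hne
      · have := mul_lt_mul_of_pos_left (hy hya) ht
        rw [hxa]; linarith
    · have h1 := mul_lt_mul_of_pos_left (hx hxa) hs
      by_cases hya : y = a
      · rw [hya]; linarith
      · have := mul_lt_mul_of_pos_left (hy hya) ht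
        linarith
  exact fun x hx => convexHull_min (fun y hy => h y hy) hconv hx

/-- If two points of `P` lie strictly on opposite sides of the line `ab`, then the midpoint of `ab`
is interior to the hull, so `a` and `b` are not adjacent. -/
lemma not_adjacent_of_sides {P : Finset Plane} {a b c d : Plane}
    (ha : a ∈ P) (hb : b ∈ P) (hc : c ∈ P) (hd : d ∈ P)
    (hs : det3 a b c * det3 a b d < 0) : ¬ AdjacentVertices P a b := by
  wlog hpos : 0 < det3 a b c generalizing c d with H
  · have hc0 : det3 a b c ≠ 0 := by rintro h; rw [h] at hs; simp at hs
    have : det3 a b c < 0 := lt_of_le_of_ne (not_lt.1 hpos) hc0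
    exact H hd hc (by rwa [mul_comm]) (by nlinarith)
  have hneg : det3 a b d < 0 := by by_contra h; nlinarith
  rintro ⟨-, hsub⟩
  set S := convexHull ℝ (P : Set Plane) with hS
  have hSc : Convex ℝ S := convex_convexHull ℝ _
  have haS : a ∈ S := subset_convexHull ℝ _ ha
  have hbS : b ∈ S := subset_convexHull ℝ _ hb
  have hcS : c ∈ S := subset_convexHull ℝ _ hc
  have hdS : d ∈ S := subset_convexHull ℝ _ hd
  have hm := hsub (midpoint_mem_segment (𝕜 := ℝ) a b)
  refine hm.2 ?_
  -- The quotients are the barycentric coordinates of `z` in the triangle `a b e`. Those at `a`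
  -- and `b` are near `1 / 2` around the midpoint, and the one at `e` is nonnegative when `z` is on
  -- the side of `e`; so the triangles with `e = c` and `e = d` together cover a neighbourhood.
  have tri : ∀ e ∈ S, det3 a b e ≠ 0 → ∀ z : Plane, 0 ≤ det3 a b z / det3 a b e →
      0 < det3 b e z / det3 a b e → 0 < det3 e a z / det3 a b e → z ∈ S := by
    intro e he hne z h1 h2 h3
    have hz : z = (det3 b e z / det3 a b e) • a + (det3 e a z / det3 a b e) • b
        + (det3 a b z / det3 a b e) • e := by
      apply plane_ext <;> simp only [PiLp.add_apply, PiLp.smul_apply, smul_eq_mul] <;>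
        field_simp <;> simp only [det3] <;> ring
    rw [hz]
    have hsum : det3 b e z / det3 a b e + det3 e a z / det3 a b e
        + det3 a b z / det3 a b e = 1 := by
      field_simp; simp only [det3]; ring
    have := hSc.sum_mem (t := Finset.univ) (w := ![det3 b e z / det3 a b e,
      det3 e a z / det3 a b e, det3 a b z / det3 a b e]) (z := ![a, b, e])
      (by intro i _; fin_cases i <;> simp [h1, h2.le, h3.le])
      (by simpa [Fin.sum_univ_three] using hsum)
      (by intro i _; fin_cases i <;> simp [haS, hbS, he])
    simpa [Fin.sum_univ_three] using this
  have ev : ∀ e : Plane, det3 a b e ≠ 0 → ∀ᶠ z in nhds (midpoint ℝ a b),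
      0 < det3 b e z / det3 a b e ∧ 0 < det3 e a z / det3 a b e := by
    intro e hne
    have mid : ∀ i, (midpoint ℝ a b) i = (a i + b i) / 2 := by
      intro i
      rw [midpoint_eq_smul_add]
      simp; ring
    have h1 : det3 b e (midpoint ℝ a b) / det3 a b e = 1 / 2 := by
      field_simp; simp only [det3, mid]; ring
    have h2 : det3 e a (midpoint ℝ a b) / det3 a b e = 1 / 2 := by
      field_simp; simp only [det3, mid]; ring
    refine Filter.Eventually.and ?_ ?_
    · refine ContinuousAt.eventually_lt continuousAt_const (Continuous.continuousAt ?_)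
        (by rw [h1]; norm_num)
      simp only [det3]; fun_prop
    · refine ContinuousAt.eventually_lt continuousAt_const (Continuous.continuousAt ?_)
        (by rw [h2]; norm_num)
      simp only [det3]; fun_prop
  rw [mem_interior_iff_mem_nhds]
  filter_upwards [ev c hpos.ne', ev d hneg.ne] with z hzc hzd
  rcases le_total 0 (det3 a b z) with h | h
  · exact tri c hcS hpos.ne' z (div_nonneg h hpos.le) hzc.1 hzc.2
  · exact tri d hdS hneg.ne z (div_nonneg_of_nonpos h hneg.le) hzd.1 hzd.2

/-- The conclusion of the theorem for the polygon `convexHull ℝ P`. -/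
def HasDiagonalDirection (P : Finset Plane) : Prop :=
  ∃ u : Plane, ‖u‖ = 1 ∧
    ∃ va ∈ P, ∃ vb ∈ P,
      (∀ x ∈ convexHull ℝ (P : Set Plane), x ≠ va → ⟪u, x⟫ < ⟪u, va⟫) ∧
      (∀ x ∈ convexHull ℝ (P : Set Plane), x ≠ vb → ⟪u, vb⟫ < ⟪u, x⟫) ∧
      ¬ AdjacentVertices P va vb

lemma hasDiagonalDirection_of_sides {P : Finset Plane} {w a b c d : Plane}
    (ha : a ∈ P) (hb : b ∈ P) (hc : c ∈ P) (hd : d ∈ P)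
    (hmax : ∀ x ∈ P, x ≠ a → lin w x < lin w a)
    (hmin : ∀ x ∈ P, x ≠ b → lin w b < lin w x)
    (hs : det3 a b c * det3 a b d < 0) : HasDiagonalDirection P := by
  have hab : b ≠ a := by
    rintro rfl
    simp [det3] at hs
  have hw : w ≠ 0 := by
    rintro rfl
    simpa [lin] using hmax b hb hab
  have hpos : 0 < ‖w‖⁻¹ := inv_pos.2 (norm_pos_iff.2 hw)
  have hmin' : ∀ x ∈ P, x ≠ b → ⟪-w, x⟫ < ⟪-w, b⟫ := by
    intro x hx hxb
    rw [inner_neg_left, inner_neg_left, inner_eq_lin, inner_eq_lin]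
    exact neg_lt_neg (hmin x hx hxb)
  refine ⟨‖w‖⁻¹ • w, norm_smul_inv_norm (𝕜 := ℝ) hw, a, ha, b, hb, ?_, ?_,
    not_adjacent_of_sides ha hb hc hd hs⟩
  · intro x hx hxa
    rw [real_inner_smul_left, real_inner_smul_left]
    refine mul_lt_mul_of_pos_left (strict_max_hull ?_ x hx hxa) hpos
    intro y hy hya
    rw [inner_eq_lin, inner_eq_lin]
    exact hmax y hy hya
  · intro x hx hxb
    rw [real_inner_smul_left, real_inner_smul_left]
    refine mul_lt_mul_of_pos_left ?_ hpos
    have := strict_max_hull hmin' x hx hxb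
    rw [inner_neg_left, inner_neg_left] at this
    exact neg_lt_neg_iff.1 this

/-! ### Tilting the normal of a side -/

lemma eventually_pos_add_mul {A B : ℝ} (h : 0 < A ∨ A = 0 ∧ 0 < B) :
    ∀ᶠ ε in nhdsWithin (0 : ℝ) (Set.Ioi 0), 0 < A + ε * B := by
  rcases h with h | ⟨rfl, h⟩
  · refine Filter.Eventually.filter_mono nhdsWithin_le_nhds ?_
    refine ContinuousAt.eventually_lt continuousAt_const (Continuous.continuousAt ?_) (by simpa)
    fun_prop
  · filter_upwards [self_mem_nhdsWithin] with ε hε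
    have : 0 < ε := hε
    simpa using mul_pos this h

/-- Let `pq` be a side, let `c` be a vertex farthest from it (and, in case of a tie, the one
farthest back in the direction from `p` to `q`). Tilting the normal of `pq` slightly makes `q` and
`c` the strictly extreme vertices, and `qc` is a diagonal as soon as some vertex `d` is on the
other side of it from `p`. Here `w₂` is the inner normal and `w₁` the direction of the side. -/
lemma hasDiagonalDirection_of_tilt {P : Finset Plane} {w₁ w₂ p q c d : Plane}
    (hp : p ∈ P) (hq : q ∈ P) (hc : c ∈ P) (hd : d ∈ P)
    (hY : lin w₂ p = lin w₂ q) (hX : lin w₁ p < lin w₁ q)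
    (hside : ∀ z ∈ P, z ≠ p → z ≠ q → lin w₂ p < lin w₂ z)
    (hcmax : ∀ z ∈ P, z ≠ c →
      lin w₂ z < lin w₂ c ∨ lin w₂ z = lin w₂ c ∧ lin w₁ c < lin w₁ z)
    (hs : det3 q c p * det3 q c d < 0) : HasDiagonalDirection P := by
  have e1 : ∀ᶠ ε in nhdsWithin (0 : ℝ) (Set.Ioi 0), ∀ z ∈ P, z ≠ q →
      0 < (lin w₂ z - lin w₂ q) + ε * (lin w₁ q - lin w₁ z) := by
    rw [Filter.eventually_all_finset]
    intro z hz
    by_cases hzq : z = q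
    · simp [hzq]
    simp only [ne_eq, hzq, not_false_eq_true, forall_const]
    apply eventually_pos_add_mul
    by_cases hzp : z = p
    · right; subst hzp; constructor <;> linarith
    · left; linarith [hside z hz hzp hzq]
  have e2 : ∀ᶠ ε in nhdsWithin (0 : ℝ) (Set.Ioi 0), ∀ z ∈ P, z ≠ c →
      0 < (lin w₂ c - lin w₂ z) + ε * (lin w₁ z - lin w₁ c) := by
    rw [Filter.eventually_all_finset]
    intro z hz
    by_cases hzc : z = c
    · simp [hzc]
    simp only [ne_eq, hzc, not_false_eq_true, forall_const]
    apply eventually_pos_add_mul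
    rcases hcmax z hz hzc with h | ⟨h, h'⟩
    · left; linarith
    · right; constructor <;> linarith
  obtain ⟨ε, h1, h2⟩ := (e1.and e2).exists
  have hlin : ∀ z, lin (ε • w₁ - w₂) z = ε * lin w₁ z - lin w₂ z := by
    intro z
    simp only [lin, PiLp.sub_apply, PiLp.smul_apply, smul_eq_mul]
    ring
  refine hasDiagonalDirection_of_sides (w := ε • w₁ - w₂) hq hc hp hd ?_ ?_ hs
  · intro x hx hxq
    rw [hlin, hlin]
    linarith [h1 x hx hxq]
  · intro x hx hxc
    rw [hlin, hlin]
    linarith [h2 x hx hxc]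

/-! ### Vertices in triangles -/

lemma mem_of_mem_convexHull_subset {P : Finset Plane} (hpos : StrictlyConvexPosition P)
    {A : Set Plane} (hA : A ⊆ P) {z : Plane} (hz : z ∈ P) (hzA : z ∈ convexHull ℝ A) : z ∈ A :=
  extremePoints_convexHull_subset
    (inter_extremePoints_subset_extremePoints_of_subset (convexHull_mono hA) ⟨hzA, hpos z hz⟩)

/-- A vertex inside the triangle spanned by three vertices is one of them. -/
lemma eq_of_mem_triangle {P : Finset Plane} (hpos : StrictlyConvexPosition P)
    {p q c z : Plane} (hp : p ∈ P) (hq : q ∈ P) (hc : c ∈ P) (hz : z ∈ P)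
    (hne : det3 p q c ≠ 0) (h1 : 0 ≤ det3 p q c * det3 p q z)
    (h2 : 0 ≤ det3 q c p * det3 q c z) (h3 : 0 ≤ det3 p c q * det3 p c z) :
    z = p ∨ z = q ∨ z = c := by
  have hA : ({p, q, c} : Set Plane) ⊆ P := by
    rintro x (rfl | rfl | rfl) <;> assumption
  have hsq : 0 < det3 p q c ^ 2 := by positivity
  have hmem : z ∈ convexHull ℝ ({p, q, c} : Set Plane) := by
    have hz' : z = (det3 q c p * det3 q c z / det3 p q c ^ 2) • p
        + (det3 p c q * det3 p c z / det3 p q c ^ 2) • q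
        + (det3 p q c * det3 p q z / det3 p q c ^ 2) • c := by
      apply plane_ext <;> simp only [PiLp.add_apply, PiLp.smul_apply, smul_eq_mul] <;>
        field_simp <;> simp only [det3] <;> ring
    have hsum : det3 q c p * det3 q c z / det3 p q c ^ 2
        + det3 p c q * det3 p c z / det3 p q c ^ 2
        + det3 p q c * det3 p q z / det3 p q c ^ 2 = 1 := by
      field_simp; simp only [det3]; ring
    rw [hz']
    have := (convex_convexHull ℝ ({p, q, c} : Set Plane)).sum_mem (t := Finset.univ)
      (w := ![det3 q c p * det3 q c z / det3 p q c ^ 2,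
        det3 p c q * det3 p c z / det3 p q c ^ 2,
        det3 p q c * det3 p q z / det3 p q c ^ 2]) (z := ![p, q, c])
      (by intro i _; fin_cases i
          · exact div_nonneg h2 hsq.le
          · exact div_nonneg h3 hsq.le
          · exact div_nonneg h1 hsq.le)
      (by simpa [Fin.sum_univ_three] using hsum)
      (by intro i _; apply subset_convexHull; fin_cases i <;> simp)
    simpa [Fin.sum_univ_three] using this
  simpa using mem_of_mem_convexHull_subset hpos hA hz hmem

/-! ### Polygons with a given side -/

/-- Determinants with respect to the coordinates `lin w₁`, `lin w₂` are proportional to `det3`. -/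
lemma det_lin (w₁ w₂ a b z : Plane) :
    (lin w₁ b - lin w₁ a) * (lin w₂ z - lin w₂ a) - (lin w₂ b - lin w₂ a) * (lin w₁ z - lin w₁ a)
      = (w₁ 0 * w₂ 1 - w₁ 1 * w₂ 0) * det3 a b z := by
  simp only [lin, det3]; ring

/-- The case in which some side `pq` is given; `w₂` is its inner normal and `w₁` its direction. -/
lemma hasDiagonalDirection_of_side {P : Finset Plane} (hcard : 4 ≤ P.card)
    (hpos : StrictlyConvexPosition P) {w₁ w₂ p q : Plane}
    (hp : p ∈ P) (hq : q ∈ P)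
    (hw : w₁ 0 * w₂ 1 - w₁ 1 * w₂ 0 ≠ 0)
    (hY : lin w₂ p = lin w₂ q) (hX : lin w₁ p < lin w₁ q)
    (hside : ∀ z ∈ P, z ≠ p → z ≠ q → lin w₂ p < lin w₂ z) : HasDiagonalDirection P := by
  have hinj : ∀ a b : Plane, lin w₁ a = lin w₁ b → lin w₂ a = lin w₂ b → a = b := by
    intro a b h1 h2
    simp only [lin] at h1 h2
    apply plane_ext
    · refine mul_left_cancel₀ hw ?_
      linear_combination w₂ 1 * h1 - w₁ 1 * h2
    · refine mul_left_cancel₀ hw ?_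
      linear_combination w₁ 0 * h2 - w₂ 0 * h1
  have hsign : ∀ {a b x y : Plane},
      ((lin w₁ b - lin w₁ a) * (lin w₂ x - lin w₂ a)
        - (lin w₂ b - lin w₂ a) * (lin w₁ x - lin w₁ a)) *
      ((lin w₁ b - lin w₁ a) * (lin w₂ y - lin w₂ a)
        - (lin w₂ b - lin w₂ a) * (lin w₁ y - lin w₁ a)) < 0 → det3 a b x * det3 a b y < 0 := by
    intro a b x y h
    rw [det_lin, det_lin] at h
    have : 0 < (w₁ 0 * w₂ 1 - w₁ 1 * w₂ 0) ^ 2 := by positivity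
    by_contra hcon
    nlinarith [mul_nonneg this.le (not_lt.1 hcon)]
  -- Farthest vertices from the side, breaking ties backwards (`c`) and forwards (`c'`).
  obtain ⟨c, hc, hcm⟩ := P.exists_max_image (fun z => toLex (lin w₂ z, -lin w₁ z)) ⟨p, hp⟩
  obtain ⟨c', hc', hcm'⟩ := P.exists_max_image (fun z => toLex (lin w₂ z, lin w₁ z)) ⟨p, hp⟩
  have hcmax : ∀ z ∈ P, z ≠ c →
      lin w₂ z < lin w₂ c ∨ lin w₂ z = lin w₂ c ∧ lin w₁ c < lin w₁ z := by
    intro z hz hzc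
    rcases Prod.Lex.toLex_le_toLex.1 (hcm z hz) with h | ⟨h, h'⟩
    · exact Or.inl h
    · refine Or.inr ⟨h, lt_of_le_of_ne (neg_le_neg_iff.1 h') fun h'' => hzc ?_⟩
      exact hinj _ _ h''.symm h
  have hcmax' : ∀ z ∈ P, z ≠ c' →
      lin w₂ z < lin w₂ c' ∨ lin w₂ z = lin w₂ c' ∧ lin w₁ z < lin w₁ c' := by
    intro z hz hzc
    rcases Prod.Lex.toLex_le_toLex.1 (hcm' z hz) with h | ⟨h, h'⟩
    · exact Or.inl h
    · exact Or.inr ⟨h, lt_of_le_of_ne h' fun h'' => hzc (hinj _ _ h'' h)⟩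
  have hex : ∀ x : Plane, ∃ z ∈ P, z ≠ p ∧ z ≠ q ∧ z ≠ x := by
    intro x
    have : (({p, q, x} : Finset Plane)).card < P.card := lt_of_le_of_lt Finset.card_le_three hcard
    obtain ⟨z, hz, hz'⟩ := Finset.exists_mem_notMem_of_card_lt_card this
    simp only [Finset.mem_insert, Finset.mem_singleton, not_or] at hz'
    exact ⟨z, hz, hz'⟩
  have hch : lin w₂ p < lin w₂ c := by
    obtain ⟨z, hz, hzp, hzq, hzc⟩ := hex c
    have := hside z hz hzp hzq
    rcases hcmax z hz hzc with h | h
    · exact this.trans h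
    · exact this.trans_le h.1.le
  by_cases hcc : c' = c
  · subst hcc
    -- The farthest vertex is unique; a fourth vertex lies beyond one of the two other sides
    -- of the triangle `p q c'`.
    obtain ⟨z, hz, hzp, hzq, hzc⟩ := hex c'
    by_cases h2 : det3 q c' p * det3 q c' z < 0
    · exact hasDiagonalDirection_of_tilt hp hq hc hz hY hX hside hcmax h2
    by_cases h3 : det3 p c' q * det3 p c' z < 0
    · have hneg : ∀ x, lin (-w₁) x = -lin w₁ x := by
        intro x; simp only [lin, PiLp.neg_apply]; ring
      refine hasDiagonalDirection_of_tilt (w₁ := -w₁) (w₂ := w₂) hq hp hc hz hY.symm ?_ ?_ ?_ h3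
      · rw [hneg, hneg]; linarith
      · intro x hx hxq hxp
        rw [← hY]; exact hside x hx hxp hxq
      · intro x hx hxc
        rw [hneg, hneg]
        rcases hcmax' x hx hxc with h | ⟨h, h'⟩
        · exact Or.inl h
        · exact Or.inr ⟨h, neg_lt_neg h'⟩
    exfalso
    have hDc := det_lin w₁ w₂ p q c'
    have hDz := det_lin w₁ w₂ p q z
    rw [← hY, sub_self, zero_mul, sub_zero] at hDc hDz
    have hc0 : 0 < (lin w₁ q - lin w₁ p) * (lin w₂ c' - lin w₂ p) :=
      mul_pos (sub_pos.2 hX) (sub_pos.2 hch)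
    have hz0 : 0 < (lin w₁ q - lin w₁ p) * (lin w₂ z - lin w₂ p) :=
      mul_pos (sub_pos.2 hX) (sub_pos.2 (hside z hz hzp hzq))
    have hne : det3 p q c' ≠ 0 := by
      intro h; rw [h, mul_zero] at hDc; linarith
    have h1 : 0 ≤ det3 p q c' * det3 p q z := by
      have := mul_pos hc0 hz0
      rw [hDc, hDz] at this
      have hsq : 0 < (w₁ 0 * w₂ 1 - w₁ 1 * w₂ 0) ^ 2 := by positivity
      by_contra hcon
      nlinarith [mul_pos hsq (neg_pos.2 (not_le.1 hcon))]
    rcases eq_of_mem_triangle hpos hp hq hc hz hne h1 (not_lt.1 h2) (not_lt.1 h3) with h | h | h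
    · exact hzp h
    · exact hzq h
    · exact hzc h
  · -- A parallel opposite side: `q c` is a diagonal of the trapezoid `p q c' c`.
    have heq : lin w₂ c' = lin w₂ c ∧ lin w₁ c < lin w₁ c' := by
      rcases hcmax c' hc' hcc with h | h
      · rcases hcmax' c hc (Ne.symm hcc) with h' | h'
        · exact absurd h h'.not_gt
        · exact absurd h'.1 h.ne'
      · exact h
    refine hasDiagonalDirection_of_tilt hp hq hc hc' hY hX hside hcmax (hsign ?_)
    rw [heq.1, ← hY]
    have a1 : 0 < (lin w₂ c - lin w₂ p) * (lin w₁ q - lin w₁ p) :=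
      mul_pos (sub_pos.2 hch) (sub_pos.2 hX)
    have a2 : 0 < (lin w₂ c - lin w₂ p) * (lin w₁ c' - lin w₁ c) :=
      mul_pos (sub_pos.2 hch) (sub_pos.2 heq.2)
    nlinarith [mul_pos a1 a2]

/-! ### Vertices at maximal distance -/

theorem statement5 (P : Finset Plane) (hcard : 4 ≤ P.card)
    (hpos : StrictlyConvexPosition P)
    (S : Set Plane) (hS : S = convexHull ℝ (P : Set Plane)) :
    ∃ u : Plane, ‖u‖ = 1 ∧
      ∃ va ∈ P, ∃ vb ∈ P,
        (∀ x ∈ S, x ≠ va → ⟪u, x⟫ < ⟪u, va⟫) ∧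
        (∀ x ∈ S, x ≠ vb → ⟪u, vb⟫ < ⟪u, x⟫) ∧
        ¬ AdjacentVertices P va vb := by
  subst hS
  change HasDiagonalDirection P
  -- A pair of vertices at maximal distance.
  obtain ⟨⟨p, q⟩, hpq, hmax⟩ := (P ×ˢ P).exists_max_image
    (fun x => (x.1 0 - x.2 0) ^ 2 + (x.1 1 - x.2 1) ^ 2)
    (by
      have : P.Nonempty := Finset.card_pos.1 (by omega)
      exact this.product this)
  obtain ⟨hp, hq⟩ := Finset.mem_product.1 hpq
  simp only at hp hq
  have hsq : ∀ x y : Plane, x ≠ y → 0 < (x 0 - y 0) ^ 2 + (x 1 - y 1) ^ 2 := by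
    intro x y hxy
    by_contra hcon
    refine hxy (plane_ext ?_ ?_) <;>
      nlinarith [sq_nonneg (x 0 - y 0), sq_nonneg (x 1 - y 1)]
  have hlow : ∀ z ∈ P, z ≠ p → lin (q - p) p < lin (q - p) z := by
    intro z hz hzp
    have h1 := hmax (z, q) (Finset.mk_mem_product hz hq)
    have h2 := hsq z p hzp
    simp only [lin, PiLp.sub_apply] at h1 ⊢
    nlinarith
  have hhigh : ∀ z ∈ P, z ≠ q → lin (q - p) z < lin (q - p) q := by
    intro z hz hzq
    have h1 := hmax (p, z) (Finset.mk_mem_product hp hz)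
    have h2 := hsq z q hzq
    simp only [lin, PiLp.sub_apply] at h1 ⊢
    nlinarith
  have hne : q ≠ p := by
    rintro rfl
    obtain ⟨z, hz, hzq⟩ := Finset.exists_mem_ne (by omega : 1 < P.card) q
    exact absurd (hlow z hz hzq) (by simp [lin])
  by_cases hopp : ∃ c ∈ P, ∃ d ∈ P, det3 q p c * det3 q p d < 0
  · obtain ⟨c, hc, d, hd, h⟩ := hopp
    exact hasDiagonalDirection_of_sides hq hp hc hd hhigh hlow h
  -- Otherwise `pq` is a side: no other vertex is on its line.
  have hoff : ∀ z ∈ P, z ≠ p → z ≠ q → det3 p q z ≠ 0 := by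
    intro z hz hzp hzq hdet
    have hA : ({p, q} : Set Plane) ⊆ P := by
      rintro x (rfl | rfl) <;> assumption
    have hL := sub_pos.2 (hlow q hq hne)
    have hl := sub_pos.2 (hlow z hz hzp)
    have hh := sub_pos.2 (hhigh z hz hzq)
    have hmem : z ∈ convexHull ℝ ({p, q} : Set Plane) := by
      rw [convexHull_pair]
      refine ⟨(lin (q - p) q - lin (q - p) z) / (lin (q - p) q - lin (q - p) p),
        (lin (q - p) z - lin (q - p) p) / (lin (q - p) q - lin (q - p) p),
        (div_pos hh hL).le, (div_pos hl hL).le, by field_simp; ring, ?_⟩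
      simp only [det3] at hdet
      apply plane_ext <;> simp only [PiLp.add_apply, PiLp.smul_apply, smul_eq_mul] <;>
        field_simp <;> simp only [lin, PiLp.sub_apply]
      · linear_combination (q 1 - p 1) * hdet
      · linear_combination -(q 0 - p 0) * hdet
    rcases mem_of_mem_convexHull_subset hpos hA hz hmem with h | h
    · exact hzp h
    · exact hzq h
  push Not at hopp
  have hrev : ∀ z, det3 q p z = -det3 p q z := by intro z; simp only [det3]; ring
  obtain ⟨c, hc, hcp⟩ : ∃ c ∈ P, c ≠ p ∧ c ≠ q := by
    have : (({p, q} : Finset Plane)).card < P.card :=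
      lt_of_le_of_lt Finset.card_le_two (by omega)
    obtain ⟨z, hz, hz'⟩ := Finset.exists_mem_notMem_of_card_lt_card this
    simp only [Finset.mem_insert, Finset.mem_singleton, not_or] at hz'
    exact ⟨z, hz, hz'⟩
  have hc0 := hoff c hc hcp.1 hcp.2
  -- The normal of `pq`, scaled so that it points towards the other vertices.
  set t := det3 p q c with ht
  have hlin : ∀ z, lin !₂[-(t * (q 1 - p 1)), t * (q 0 - p 0)] z
      - lin !₂[-(t * (q 1 - p 1)), t * (q 0 - p 0)] p = t * det3 p q z := by
    intro z; simp [lin, det3]; ring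
  refine hasDiagonalDirection_of_side hcard hpos (w₁ := q - p)
    (w₂ := !₂[-(t * (q 1 - p 1)), t * (q 0 - p 0)]) hp hq ?_ ?_ (hlow q hq hne) ?_
  · have h := mul_ne_zero hc0 (hsq q p hne).ne'
    intro h0
    apply h
    rw [← h0]
    simp
    ring
  · have h := hlin q
    have : det3 p q q = 0 := by simp only [det3]; ring
    rw [this, mul_zero] at h
    linarith
  · intro z hz hzp hzq
    have h := hopp c hc z hz
    rw [hrev, hrev, neg_mul_neg] at h
    have := lt_of_le_of_ne h (mul_ne_zero hc0 (hoff z hz hzp hzq)).symm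
    linarith [hlin z]
end
end
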